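/- arXiv:2004.06712 — 2 statements merged into one kernel-verified Lean document; each statement's English description precedes it below -/
import Mathlib

section
/- Let (Ω, 𝒜, μ) be a σ-finite measure space with L¹(μ) separable, let T be a positive Dunford–Schwartz operator (extended complex-linearly to complex-valued functions), and let (β_k)_{k≥0} be a bounded Besicovitch sequence. Then for every f ∈ R_μ the weighted averages B_n(f) = (1/n) ∑_{k=0}^{n−1} β_k T^k f converge almost uniformly to some f̂ ∈ R_μ. -/
open MeasureTheory Filter Set ENNReal Topology

variable {Ω : Type*} [MeasurableSpace Ω]

/-- `f` belongs to `L¹(μ) + L^∞(μ)` (real case). -/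
def MemL1pLinf (μ : Measure Ω) (f : Ω →ₘ[μ] ℝ) : Prop :=
  ∃ g h : Ω →ₘ[μ] ℝ, eLpNorm g 1 μ ≠ ∞ ∧ eLpNorm h ⊤ μ ≠ ∞ ∧ f = g + h

/-- A positive Dunford–Schwartz operator (real case). -/
structure IsPosDS (μ : Measure Ω) (T : (Ω →ₘ[μ] ℝ) → (Ω →ₘ[μ] ℝ)) : Prop where
  map_add : ∀ f g, MemL1pLinf μ f → MemL1pLinf μ g → T (f + g) = T f + T g
  map_smul : ∀ (c : ℝ) (f), MemL1pLinf μ f → T (c • f) = c • T f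
  map_pos : ∀ f, MemL1pLinf μ f → 0 ≤ f → 0 ≤ T f
  norm_one : ∀ f, MemL1pLinf μ f → eLpNorm (T f) 1 μ ≤ eLpNorm f 1 μ
  norm_top : ∀ f, MemL1pLinf μ f → eLpNorm (T f) ⊤ μ ≤ eLpNorm f ⊤ μ

/-- The complexification `ω ↦ (g ω : ℂ)` of a real-valued class `g`. -/
noncomputable def ofRealAE (μ : Measure Ω) (g : Ω →ₘ[μ] ℝ) : Ω →ₘ[μ] ℂ :=
  g.comp (fun t : ℝ => (t : ℂ)) Complex.continuous_ofReal

/-- `f` belongs to `L¹(μ) + L^∞(μ)` (complex case). -/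
def MemL1pLinfC (μ : Measure Ω) (f : Ω →ₘ[μ] ℂ) : Prop :=
  ∃ g h : Ω →ₘ[μ] ℂ, eLpNorm g 1 μ ≠ ∞ ∧ eLpNorm h ⊤ μ ≠ ∞ ∧ f = g + h

/-- `R_μ` (complex case): elements of `L¹+L^∞` with finite distribution tails. -/
def MemRmuC (μ : Measure Ω) (f : Ω →ₘ[μ] ℂ) : Prop :=
  MemL1pLinfC μ f ∧ ∀ lam : ℝ, 0 < lam → μ {ω | lam < ‖f ω‖} < ∞

/-- Almost uniform convergence of a net `F` to `f` (complex case). -/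
def AuTendstoC {ι : Type*} (μ : Measure Ω) (l : Filter ι) (F : ι → Ω →ₘ[μ] ℂ)
    (f : Ω →ₘ[μ] ℂ) : Prop :=
  ∀ ε : ℝ, 0 < ε → ∃ E : Set Ω, MeasurableSet E ∧ μ Eᶜ ≤ ENNReal.ofReal ε ∧
    Tendsto (fun i => eLpNorm (E.indicator (⇑(F i - f))) ⊤ μ) l (𝓝 0)

/-- A bounded Besicovitch sequence. -/
def IsBesicovitch (β : ℕ → ℂ) : Prop :=
  (∃ C : ℝ, ∀ k, ‖β k‖ ≤ C) ∧
  ∀ ε : ℝ, 0 < ε → ∃ (s : ℕ) (z : Fin s → ℂ) (lam : Fin s → ℂ),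
    (∀ j, ‖lam j‖ = 1) ∧
    Filter.limsup
      (fun n : ℕ => (n : ℝ)⁻¹ * ∑ k ∈ Finset.range n, ‖β k - ∑ j, z j * lam j ^ k‖)
      atTop < ε

/-- The weighted averages `B_n(f) = (1/n) ∑_{k<n} β_k T^k f`. -/
noncomputable def besicovitchAvg (μ : Measure Ω) (T : (Ω →ₘ[μ] ℂ) → (Ω →ₘ[μ] ℂ))
    (β : ℕ → ℂ) (n : ℕ) (f : Ω →ₘ[μ] ℂ) : Ω →ₘ[μ] ℂ :=
  (n : ℂ)⁻¹ • ∑ k ∈ Finset.range n, β k • T^[k] f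

namespace Bes

theorem decomp {E : Type*} [NormedAddCommGroup E] (μ : Measure Ω) (g : Ω →ₘ[μ] E)
    (w : Ω → ℝ) (a : ℝ)
    (hw : ∫⁻ x, ‖w x‖ₑ ∂μ ≠ ∞) (h : ∀ᵐ x ∂μ, ‖g x‖ ≤ w x + a) :
    ∃ g1 h1 : Ω →ₘ[μ] E, eLpNorm g1 1 μ ≠ ∞ ∧ eLpNorm h1 ⊤ μ ≠ ∞ ∧ g = g1 + h1 := by
  have hs : MeasurableSet {x | 2 * |a| < ‖g x‖} :=
    measurableSet_lt measurable_const g.stronglyMeasurable.norm.measurable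
  set s := {x | 2 * |a| < ‖g x‖} with hsdef
  refine ⟨AEEqFun.mk (s.indicator g) (g.aestronglyMeasurable.indicator hs),
    AEEqFun.mk (sᶜ.indicator g) (g.aestronglyMeasurable.indicator hs.compl), ?_, ?_, ?_⟩
  · rw [eLpNorm_congr_ae (AEEqFun.coeFn_mk _ _), eLpNorm_one_eq_lintegral_enorm]
    refine ne_top_of_le_ne_top (ENNReal.mul_ne_top (ENNReal.natCast_ne_top 2) hw) ?_
    rw [← lintegral_const_mul' _ _ (ENNReal.natCast_ne_top 2)]
    refine lintegral_mono_ae ?_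
    filter_upwards [h] with x hx
    by_cases hxs : x ∈ s
    · rw [Set.indicator_of_mem hxs]
      have h1 : 2 * |a| < ‖g x‖ := hxs
      have h2 : ‖g x‖ ≤ ‖(2:ℝ) * w x‖ := by
        rw [Real.norm_eq_abs]
        refine le_trans ?_ (le_abs_self _)
        linarith [le_abs_self a]
      have h3 := enorm_le_iff_norm_le.2 h2
      rw [enorm_mul] at h3
      refine h3.trans (le_of_eq ?_)
      congr 1
      rw [Real.enorm_eq_ofReal (by norm_num)]; simp
    · simp [hxs]
  · rw [eLpNorm_congr_ae (AEEqFun.coeFn_mk _ _)]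
    have : eLpNorm (sᶜ.indicator g) ⊤ μ ≤ ENNReal.ofReal (2 * |a|) := by
      rw [eLpNorm_exponent_top]
      refine eLpNormEssSup_le_of_ae_bound ?_
      filter_upwards with x
      by_cases hxs : x ∈ s
      · simp [hxs]
      · have : x ∈ sᶜ := hxs
        rw [Set.indicator_of_mem this]
        exact not_lt.1 hxs
    exact ne_top_of_le_ne_top ENNReal.ofReal_ne_top this
  · apply AEEqFun.ext
    filter_upwards [AEEqFun.coeFn_add (AEEqFun.mk (s.indicator g) (g.aestronglyMeasurable.indicator hs))
      (AEEqFun.mk (sᶜ.indicator g) (g.aestronglyMeasurable.indicator hs.compl)),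
      AEEqFun.coeFn_mk (s.indicator g) (g.aestronglyMeasurable.indicator hs),
      AEEqFun.coeFn_mk (sᶜ.indicator g) (g.aestronglyMeasurable.indicator hs.compl)] with x h1 h2 h3
    rw [h1, Pi.add_apply, h2, h3]
    by_cases hxs : x ∈ s <;> simp [hxs]

theorem bound_of_decomp {E : Type*} [NormedAddCommGroup E] (μ : Measure Ω) (g g1 h1 : Ω →ₘ[μ] E)
    (hg1 : eLpNorm g1 1 μ ≠ ∞) (hh1 : eLpNorm h1 ⊤ μ ≠ ∞) (he : g = g1 + h1) :
    ∃ (w : Ω → ℝ) (a : ℝ), 0 ≤ a ∧ (∀ x, 0 ≤ w x) ∧ Measurable w ∧ ∫⁻ x, ‖w x‖ₑ ∂μ ≠ ∞ ∧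
      ∀ᵐ x ∂μ, ‖g x‖ ≤ w x + a := by
  refine ⟨fun x => ‖g1 x‖, (eLpNorm h1 ⊤ μ).toReal, by positivity, fun x => by positivity,
    g1.stronglyMeasurable.norm.measurable, ?_, ?_⟩
  · simpa [eLpNorm_one_eq_lintegral_enorm] using hg1
  · have h2 : ∀ᵐ x ∂μ, ‖h1 x‖ₑ ≤ eLpNorm h1 ⊤ μ := by
      rw [eLpNorm_exponent_top]; exact enorm_ae_le_eLpNormEssSup _ _
    subst he
    filter_upwards [AEEqFun.coeFn_add g1 h1, h2] with x hx hx2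
    rw [hx, Pi.add_apply]
    refine (norm_add_le _ _).trans ?_
    gcongr
    rw [← toReal_enorm]
    exact ENNReal.toReal_mono hh1 hx2

variable {μ : Measure Ω}

theorem mem_of_le {g : Ω →ₘ[μ] ℝ} {w : Ω → ℝ} {a : ℝ}
    (hw : ∫⁻ x, ‖w x‖ₑ ∂μ ≠ ∞) (h : ∀ᵐ x ∂μ, |g x| ≤ w x + a) : MemL1pLinf μ g :=
  decomp μ g w a hw h

theorem mem_bound {g : Ω →ₘ[μ] ℝ} (hg : MemL1pLinf μ g) :
    ∃ (w : Ω → ℝ) (a : ℝ), 0 ≤ a ∧ (∀ x, 0 ≤ w x) ∧ Measurable w ∧ ∫⁻ x, ‖w x‖ₑ ∂μ ≠ ∞ ∧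
      ∀ᵐ x ∂μ, |g x| ≤ w x + a := by
  obtain ⟨g1, h1, a, b, c⟩ := hg
  exact bound_of_decomp μ g g1 h1 a b c

theorem mem_const (c : ℝ) : MemL1pLinf μ (AEEqFun.const Ω c) := by
  refine mem_of_le (w := fun _ => 0) (a := |c|) (by simp) ?_
  filter_upwards [AEEqFun.coeFn_const (μ := μ) (α := Ω) c] with x hx
  simp [hx]

theorem mem_L1 {g : Ω →ₘ[μ] ℝ} (hg : ∫⁻ x, ‖g x‖ₑ ∂μ ≠ ∞) : MemL1pLinf μ g := by
  refine mem_of_le (w := fun x => |g x|) (a := 0) (by simpa using hg) ?_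
  simp

theorem mem_mono {f g : Ω →ₘ[μ] ℝ} (hg : MemL1pLinf μ g) (h : ∀ᵐ x ∂μ, |f x| ≤ |g x|) :
    MemL1pLinf μ f := by
  obtain ⟨w, a, ha, hw0, hwm, hw, hb⟩ := mem_bound hg
  refine mem_of_le (w := w) (a := a) hw ?_
  filter_upwards [h, hb] with x h1 h2 using h1.trans h2

theorem mem_add {f g : Ω →ₘ[μ] ℝ} (hf : MemL1pLinf μ f) (hg : MemL1pLinf μ g) :
    MemL1pLinf μ (f + g) := by
  obtain ⟨w, a, ha, hw0, hwm, hw, hb⟩ := mem_bound hg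
  obtain ⟨w', a', ha', hw0', hwm', hw', hb'⟩ := mem_bound hf
  refine mem_of_le (w := fun x => w x + w' x) (a := a + a') ?_ ?_
  · refine ne_top_of_le_ne_top (ENNReal.add_ne_top.2 ⟨hw, hw'⟩) ?_
    rw [← lintegral_add_left hwm.enorm]
    exact lintegral_mono fun x => enorm_add_le _ _
  · filter_upwards [hb, hb', AEEqFun.coeFn_add f g] with x h1 h2 h3
    rw [h3, Pi.add_apply]
    have := abs_add_le (f x) (g x)
    linarith

theorem mem_smul {g : Ω →ₘ[μ] ℝ} (c : ℝ) (hg : MemL1pLinf μ g) : MemL1pLinf μ (c • g) := by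
  obtain ⟨w, a, ha, hw0, hwm, hw, hb⟩ := mem_bound hg
  refine mem_of_le (w := fun x => |c| * w x) (a := |c| * a) ?_ ?_
  · simp_rw [enorm_mul]
    rw [lintegral_const_mul' _ _ enorm_ne_top]
    exact ENNReal.mul_ne_top enorm_ne_top hw
  · filter_upwards [hb, AEEqFun.coeFn_smul c g] with x h1 h3
    rw [h3, Pi.smul_apply, smul_eq_mul, abs_mul, ← mul_add]
    gcongr

theorem mem_sub {f g : Ω →ₘ[μ] ℝ} (hf : MemL1pLinf μ f) (hg : MemL1pLinf μ g) :
    MemL1pLinf μ (f - g) := by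
  have : f - g = f + (-1 : ℝ) • g := by simp [sub_eq_add_neg]
  rw [this]; exact mem_add hf (mem_smul _ hg)

variable {S : (Ω →ₘ[μ] ℝ) → (Ω →ₘ[μ] ℝ)}

theorem mem_map (hS : IsPosDS μ S) {g : Ω →ₘ[μ] ℝ} (hg : MemL1pLinf μ g) :
    MemL1pLinf μ (S g) := by
  obtain ⟨g1, h1, a, b, c⟩ := id hg
  have hm1 : MemL1pLinf μ g1 := ⟨g1, 0, a, by
    rw [eLpNorm_congr_ae AEEqFun.coeFn_zero]; simp, by simp⟩
  have hm2 : MemL1pLinf μ h1 := ⟨0, h1, by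
    rw [eLpNorm_congr_ae AEEqFun.coeFn_zero]; simp, b, by simp⟩
  refine ⟨S g1, S h1, ne_top_of_le_ne_top a (hS.norm_one _ hm1),
    ne_top_of_le_ne_top b (hS.norm_top _ hm2), ?_⟩
  rw [c, hS.map_add _ _ hm1 hm2]

theorem isPosDS_iter (hS : IsPosDS μ S) (k : ℕ) : IsPosDS μ (S^[k]) := by
  induction k with
  | zero => exact ⟨by simp, by simp, by simp, by simp, by simp⟩
  | succ k ih =>
    constructor
    · intro f g hf hg
      rw [Function.iterate_succ_apply', ih.map_add f g hf hg,
        hS.map_add _ _ (mem_map ih hf) (mem_map ih hg)]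
      simp only [Function.iterate_succ_apply']
    · intro c f hf
      rw [Function.iterate_succ_apply', ih.map_smul c f hf, hS.map_smul _ _ (mem_map ih hf)]
      simp only [Function.iterate_succ_apply']
    · intro f hf h0
      rw [Function.iterate_succ_apply']
      exact hS.map_pos _ (mem_map ih hf) (ih.map_pos _ hf h0)
    · intro f hf
      rw [Function.iterate_succ_apply']
      exact (hS.norm_one _ (mem_map ih hf)).trans (ih.norm_one _ hf)
    · intro f hf
      rw [Function.iterate_succ_apply']
      exact (hS.norm_top _ (mem_map ih hf)).trans (ih.norm_top _ hf)

theorem map_sub (hS : IsPosDS μ S) {f g : Ω →ₘ[μ] ℝ} (hf : MemL1pLinf μ f)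
    (hg : MemL1pLinf μ g) : S (f - g) = S f - S g := by
  have : f - g = f + (-1 : ℝ) • g := by simp [sub_eq_add_neg]
  rw [this, hS.map_add _ _ hf (mem_smul _ hg), hS.map_smul _ _ hg]; simp [sub_eq_add_neg]

theorem map_mono (hS : IsPosDS μ S) {f g : Ω →ₘ[μ] ℝ} (hf : MemL1pLinf μ f)
    (hg : MemL1pLinf μ g) (h : ∀ᵐ x ∂μ, f x ≤ g x) : ∀ᵐ x ∂μ, S f x ≤ S g x := by
  have h0 : (0 : Ω →ₘ[μ] ℝ) ≤ g - f := by
    rw [← AEEqFun.coeFn_le]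
    filter_upwards [h, AEEqFun.coeFn_sub g f, AEEqFun.coeFn_zero (α := Ω) (β := ℝ) (μ := μ)]
      with x h1 h2 h3
    rw [h2, h3]; simpa using h1
  have h1 := hS.map_pos _ (mem_sub hg hf) h0
  rw [map_sub hS hg hf, ← AEEqFun.coeFn_le] at h1
  filter_upwards [h1, AEEqFun.coeFn_sub (S g) (S f), AEEqFun.coeFn_zero (α := Ω) (β := ℝ) (μ := μ)]
      with x h1 h2 h3
  rw [h2, h3] at h1; simpa using h1

theorem map_nonneg (hS : IsPosDS μ S) {f : Ω →ₘ[μ] ℝ} (hf : MemL1pLinf μ f)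
    (h : ∀ᵐ x ∂μ, 0 ≤ f x) : ∀ᵐ x ∂μ, 0 ≤ S f x := by
  have h0 : (0 : Ω →ₘ[μ] ℝ) ≤ f := by
    rw [← AEEqFun.coeFn_le]
    filter_upwards [h, AEEqFun.coeFn_zero (α := Ω) (β := ℝ) (μ := μ)] with x h1 h3
    rw [h3]; simpa using h1
  have h1 := hS.map_pos _ hf h0
  rw [← AEEqFun.coeFn_le] at h1
  filter_upwards [h1, AEEqFun.coeFn_zero (α := Ω) (β := ℝ) (μ := μ)] with x h1 h3
  rw [h3] at h1; simpa using h1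

theorem map_bdd (hS : IsPosDS μ S) {f : Ω →ₘ[μ] ℝ} {c : ℝ}
    (h : ∀ᵐ x ∂μ, |f x| ≤ c) : ∀ᵐ x ∂μ, |S f x| ≤ c := by
  have hf : MemL1pLinf μ f := mem_of_le (w := fun _ => 0) (a := c) (by simp) (by simpa using h)
  have h1 : eLpNorm f ⊤ μ ≤ ENNReal.ofReal c := by
    rw [eLpNorm_exponent_top]; exact eLpNormEssSup_le_of_ae_bound h
  have h2 := (hS.norm_top _ hf).trans h1
  rw [eLpNorm_exponent_top] at h2
  filter_upwards [enorm_ae_le_eLpNormEssSup (S f) μ, h] with x hx hc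
  have h3 := hx.trans h2
  have hc0 : 0 ≤ c := (abs_nonneg _).trans hc
  rwa [← ofReal_norm, ENNReal.ofReal_le_ofReal_iff hc0] at h3

theorem map_const_le (hS : IsPosDS μ S) {c : ℝ} (hc : 0 ≤ c) :
    ∀ᵐ x ∂μ, S (AEEqFun.const Ω c) x ≤ c := by
  have : ∀ᵐ x ∂μ, |(AEEqFun.const Ω c : Ω →ₘ[μ] ℝ) x| ≤ c := by
    filter_upwards [AEEqFun.coeFn_const (μ := μ) (α := Ω) c] with x hx
    simp [hx, abs_of_nonneg hc]
  filter_upwards [map_bdd hS this] with x hx using (le_abs_self _).trans hx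

/-- if `|g| ≤ w + a` then `|S g| ≤ S w + a`. -/
theorem map_abs_le (hS : IsPosDS μ S) {g w : Ω →ₘ[μ] ℝ} {a : ℝ} (ha : 0 ≤ a)
    (hg : MemL1pLinf μ g) (hw : MemL1pLinf μ w)
    (h : ∀ᵐ x ∂μ, |g x| ≤ w x + a) : ∀ᵐ x ∂μ, |S g x| ≤ S w x + a := by
  have hm := mem_add hw (mem_const (μ := μ) a)
  have e := hS.map_add _ _ hw (mem_const (μ := μ) a)
  have hb : ∀ᵐ x ∂μ, S (w + AEEqFun.const Ω a) x ≤ S w x + a := by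
    rw [e]
    filter_upwards [AEEqFun.coeFn_add (S w) (S (AEEqFun.const Ω a)), map_const_le hS ha]
      with x h1 h2
    rw [h1, Pi.add_apply]; linarith
  have hp := map_mono hS hg hm (by
    filter_upwards [h, AEEqFun.coeFn_add w (AEEqFun.const Ω a),
      AEEqFun.coeFn_const (μ := μ) (α := Ω) a] with x h1 h2 h3
    rw [h2, Pi.add_apply, h3]; exact (le_abs_self _).trans h1)
  have hn := map_mono hS (mem_smul (-1) hg) hm (by
    filter_upwards [h, AEEqFun.coeFn_add w (AEEqFun.const Ω a),
      AEEqFun.coeFn_const (μ := μ) (α := Ω) a, AEEqFun.coeFn_smul (-1 : ℝ) g] with x h1 h2 h3 h4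
    rw [h2, Pi.add_apply, h3, h4]
    simpa using (neg_le_abs _).trans h1)
  rw [hS.map_smul _ _ hg] at hn
  filter_upwards [hb, hp, hn, AEEqFun.coeFn_smul (-1 : ℝ) (S g)] with x h1 h2 h3 h4
  rw [h4] at h3
  simp at h3
  exact abs_le'.2 ⟨by linarith, by linarith⟩

end Bes

namespace Bes
variable {μ : Measure Ω} {S : (Ω →ₘ[μ] ℝ) → (Ω →ₘ[μ] ℝ)}

noncomputable def MM (S : (Ω →ₘ[μ] ℝ) → (Ω →ₘ[μ] ℝ)) (w : Ω →ₘ[μ] ℝ) (l : ℝ) : ℕ → (Ω →ₘ[μ] ℝ)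
  | 0 => 0
  | n + 1 => (w - AEEqFun.const Ω l + S (MM S w l n)) ⊔ 0

theorem MM_coe (w : Ω →ₘ[μ] ℝ) (l : ℝ) (n : ℕ) :
    ∀ᵐ x ∂μ, MM S w l (n+1) x = max (w x - l + S (MM S w l n) x) 0 := by
  have e : MM S w l (n+1) = (w - AEEqFun.const Ω l + S (MM S w l n)) ⊔ 0 := rfl
  rw [e]
  filter_upwards [AEEqFun.coeFn_sup (w - AEEqFun.const Ω l + S (MM S w l n)) 0,
    AEEqFun.coeFn_add (w - AEEqFun.const Ω l) (S (MM S w l n)),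
    AEEqFun.coeFn_sub w (AEEqFun.const Ω l),
    AEEqFun.coeFn_const (μ := μ) (α := Ω) l,
    AEEqFun.coeFn_zero (α := Ω) (β := ℝ) (μ := μ)] with x h1 h2 h3 h4 h5
  rw [h1, h2, Pi.add_apply, h3, Pi.sub_apply, h4, h5]; rfl

theorem map_L1 (hS : IsPosDS μ S) {g : Ω →ₘ[μ] ℝ} (hg : ∫⁻ x, ‖g x‖ₑ ∂μ ≠ ∞) :
    ∫⁻ x, ‖S g x‖ₑ ∂μ ≤ ∫⁻ x, ‖g x‖ₑ ∂μ := by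
  have := hS.norm_one g (mem_L1 hg)
  simpa only [eLpNorm_one_eq_lintegral_enorm] using this

theorem MM_prop (hS : IsPosDS μ S) {w : Ω →ₘ[μ] ℝ} {l : ℝ} (hl : 0 ≤ l)
    (hw : ∫⁻ x, ‖w x‖ₑ ∂μ ≠ ∞) (n : ℕ) :
    (∀ᵐ x ∂μ, 0 ≤ MM S w l n x) ∧ ∫⁻ x, ‖MM S w l n x‖ₑ ∂μ ≠ ∞ := by
  induction n with
  | zero =>
    have h0 : ∀ᵐ x ∂μ, MM S w l 0 x = 0 := AEEqFun.coeFn_zero (α := Ω) (β := ℝ) (μ := μ)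
    constructor
    · filter_upwards [h0] with x hx using hx.ge
    · rw [lintegral_congr_ae (g := fun _ => 0)]
      · simp
      · filter_upwards [h0] with x hx
        simp [hx]
  | succ n ih =>
    constructor
    · filter_upwards [MM_coe (S := S) w l n] with x hx
      rw [hx]; exact le_max_right _ _
    · have h1 := map_L1 hS ih.2
      refine ne_top_of_le_ne_top (ENNReal.add_ne_top.2 ⟨hw, ne_top_of_le_ne_top ih.2 h1⟩) ?_
      rw [← lintegral_add_left w.measurable.enorm]
      refine lintegral_mono_ae ?_
      filter_upwards [MM_coe (S := S) w l n] with x hx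
      have : ‖MM S w l (n+1) x‖ ≤ ‖(|w x| + |S (MM S w l n) x|)‖ := by
        rw [hx, Real.norm_of_nonneg (le_max_right _ _), Real.norm_of_nonneg (by positivity)]
        refine max_le ?_ (by positivity)
        linarith [le_abs_self (w x), le_abs_self (S (MM S w l n) x)]
      refine (enorm_le_iff_norm_le.2 this).trans ((enorm_add_le _ _).trans ?_)
      simp

theorem MM_mono (hS : IsPosDS μ S) {w : Ω →ₘ[μ] ℝ} {l : ℝ} (hl : 0 ≤ l)
    (hw : ∫⁻ x, ‖w x‖ₑ ∂μ ≠ ∞) (n : ℕ) : ∀ᵐ x ∂μ, MM S w l n x ≤ MM S w l (n+1) x := by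
  induction n with
  | zero =>
    have h0 : ∀ᵐ x ∂μ, MM S w l 0 x = 0 := AEEqFun.coeFn_zero (α := Ω) (β := ℝ) (μ := μ)
    filter_upwards [h0, (MM_prop hS hl hw 1).1] with x h1 h2
    rw [h1]; exact h2
  | succ n ih =>
    filter_upwards [MM_coe (S := S) w l n, MM_coe (S := S) w l (n+1),
      map_mono hS (mem_L1 (MM_prop hS hl hw n).2) (mem_L1 (MM_prop hS hl hw (n+1)).2) ih]
      with x h1 h2 h3
    rw [h1, h2]
    gcongr

theorem MM_meas (hS : IsPosDS μ S) {w : Ω →ₘ[μ] ℝ} {l : ℝ} (hl : 0 ≤ l)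
    (hw : ∫⁻ x, ‖w x‖ₑ ∂μ ≠ ∞) (n : ℕ) :
    ENNReal.ofReal l * μ {x | 0 < MM S w l (n+1) x} ≤ ∫⁻ x, ‖w x‖ₑ ∂μ := by
  have hms : MeasurableSet {x | 0 < MM S w l (n+1) x} :=
    measurableSet_lt measurable_const (MM S w l (n+1)).measurable
  have hfin := (MM_prop hS hl hw (n+1)).2
  rw [← ENNReal.add_le_add_iff_right hfin]
  calc _ = ∫⁻ x, ({x | 0 < MM S w l (n+1) x}.indicator (fun _ => ENNReal.ofReal l) x
              + ‖MM S w l (n+1) x‖ₑ) ∂μ := by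
        rw [lintegral_add_right _ (MM S w l (n+1)).measurable.enorm, lintegral_indicator_const hms]
    _ ≤ ∫⁻ x, (‖w x‖ₑ + ‖S (MM S w l n) x‖ₑ) ∂μ := by
        refine lintegral_mono_ae ?_
        filter_upwards [MM_coe (S := S) w l n] with x hx
        by_cases h : 0 < MM S w l (n+1) x
        · have hmem : x ∈ {x | 0 < MM S w l (n+1) x} := h
          rw [Set.indicator_of_mem hmem]
          have h2 : l + MM S w l (n+1) x = w x + S (MM S w l n) x := by
            rw [hx] at h ⊢
            rcases le_total (w x - l + S (MM S w l n) x) 0 with h3 | h3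
            · rw [max_eq_right h3] at h; exact absurd h (lt_irrefl _)
            · rw [max_eq_left h3]; ring
          have h3 : ENNReal.ofReal l + ‖MM S w l (n+1) x‖ₑ = ‖w x + S (MM S w l n) x‖ₑ := by
            rw [← h2, Real.enorm_eq_ofReal h.le, Real.enorm_eq_ofReal (by linarith),
              ENNReal.ofReal_add hl h.le]
          rw [h3]; exact enorm_add_le _ _
        · have hmem : x ∉ {x | 0 < MM S w l (n+1) x} := h
          have h0 : MM S w l (n+1) x = 0 := le_antisymm (not_lt.1 h) (by rw [hx]; exact le_max_right _ _)
          rw [Set.indicator_of_notMem hmem, h0]; simp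
    _ = ∫⁻ x, ‖w x‖ₑ ∂μ + ∫⁻ x, ‖S (MM S w l n) x‖ₑ ∂μ := lintegral_add_left w.measurable.enorm _
    _ ≤ _ := by
        gcongr 1
        refine (map_L1 hS (MM_prop hS hl hw n).2).trans (lintegral_mono_ae ?_)
        filter_upwards [MM_mono hS hl hw n, (MM_prop hS hl hw n).1] with x h1 h2
        refine enorm_le_iff_norm_le.2 ?_
        rwa [Real.norm_of_nonneg h2, Real.norm_of_nonneg (h2.trans h1)]

theorem sum_succ' (hS : IsPosDS μ S) {w : Ω →ₘ[μ] ℝ} (hw : MemL1pLinf μ w) (n : ℕ) :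
    MemL1pLinf μ (∑ k ∈ Finset.range n, S^[k] w) ∧
    ∑ k ∈ Finset.range (n+1), S^[k] w = w + S (∑ k ∈ Finset.range n, S^[k] w) := by
  induction n with
  | zero =>
    have h0 : S 0 = 0 := by
      have := hS.map_smul 0 w hw
      simpa using this
    constructor
    · have := mem_smul 0 hw
      simpa using this
    · simp [h0]
  | succ n ih =>
    have hm := mem_map (isPosDS_iter hS n) hw
    constructor
    · rw [Finset.sum_range_succ]; exact mem_add ih.1 hm
    · have e : S (∑ k ∈ Finset.range (n+1), S^[k] w)
          = S (∑ k ∈ Finset.range n, S^[k] w) + S (S^[n] w) := by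
        rw [Finset.sum_range_succ, hS.map_add _ _ ih.1 hm]
      rw [e, Finset.sum_range_succ, ih.2, add_assoc, Function.iterate_succ_apply']

theorem MM_sum (hS : IsPosDS μ S) {w : Ω →ₘ[μ] ℝ} {l : ℝ} (hl : 0 ≤ l)
    (hw : ∫⁻ x, ‖w x‖ₑ ∂μ ≠ ∞) (hw0 : ∀ᵐ x ∂μ, 0 ≤ w x) (n : ℕ) :
    ∀ᵐ x ∂μ, 0 ≤ (∑ k ∈ Finset.range n, S^[k] w : Ω →ₘ[μ] ℝ) x ∧
    (∑ k ∈ Finset.range n, S^[k] w : Ω →ₘ[μ] ℝ) x ≤ MM S w l n x + l * n := by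
  induction n with
  | zero =>
    have h0 : ∀ᵐ x ∂μ, MM S w l 0 x = 0 := AEEqFun.coeFn_zero (α := Ω) (β := ℝ) (μ := μ)
    filter_upwards [h0, AEEqFun.coeFn_zero (α := Ω) (β := ℝ) (μ := μ)] with x h1 h2
    simp [h1, h2]
  | succ n ih =>
    have hmem := sum_succ' hS (mem_L1 hw) n
    have h3 := map_abs_le hS (a := l * n) (by positivity) hmem.1
      (mem_L1 (MM_prop hS hl hw n).2) (by
        filter_upwards [ih] with x hx
        rw [abs_of_nonneg hx.1]; exact hx.2)
    have h4 := map_nonneg hS hmem.1 (by filter_upwards [ih] with x hx using hx.1)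
    rw [hmem.2]
    filter_upwards [h3, h4, MM_coe (S := S) w l n, hw0,
      AEEqFun.coeFn_add w (S (∑ k ∈ Finset.range n, S^[k] w))] with x h5 h6 h7 h8 h9
    rw [h9, Pi.add_apply, h7]
    refine ⟨by positivity, ?_⟩
    rw [abs_of_nonneg h6] at h5
    have := le_max_left (w x - l + S (MM S w l n) x) 0
    push_cast
    linarith

theorem maximal (hS : IsPosDS μ S) {w : Ω →ₘ[μ] ℝ} {l : ℝ} (hl : 0 ≤ l)
    (hw : ∫⁻ x, ‖w x‖ₑ ∂μ ≠ ∞) (hw0 : ∀ᵐ x ∂μ, 0 ≤ w x) :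
    ENNReal.ofReal l * μ {x | ∃ n : ℕ, l * n < ∑ k ∈ Finset.range n, S^[k] w x}
      ≤ ∫⁻ x, ‖w x‖ₑ ∂μ := by
  set D : ℕ → Set Ω := fun N => {x | ∃ n ≤ N, l * n < ∑ k ∈ Finset.range n, S^[k] w x} with hD
  have hmono : Monotone D := by
    intro a b hab x ⟨n, hn, h⟩
    exact ⟨n, hn.trans hab, h⟩
  have hU : {x | ∃ n : ℕ, l * n < ∑ k ∈ Finset.range n, S^[k] w x} = ⋃ N, D N := by
    ext x
    simp only [hD, mem_ofPred_eq, mem_iUnion]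
    exact ⟨fun ⟨n, h⟩ => ⟨n, n, le_rfl, h⟩, fun ⟨N, n, _, h⟩ => ⟨n, h⟩⟩
  rw [hU, hmono.measure_iUnion, ENNReal.mul_iSup]
  refine iSup_le fun N => ?_
  refine le_trans ?_ (MM_meas hS hl hw N)
  gcongr 1
  refine measure_mono_ae ?_
  have hA := ae_all_iff.2 (MM_sum hS hl hw hw0)
  have hM := ae_all_iff.2 (MM_mono hS hl hw)
  have hc : ∀ᵐ x ∂μ, ∀ n : ℕ, (∑ k ∈ Finset.range n, S^[k] w : Ω →ₘ[μ] ℝ) x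
      = ∑ k ∈ Finset.range n, S^[k] w x := by
    refine ae_all_iff.2 fun n => ?_
    filter_upwards [AEEqFun.coeFn_fun_finsetSum (μ := μ) (Finset.range n) (fun k => S^[k] w)] with x hx
    simpa using hx
  filter_upwards [hA, hM, hc] with x h1 h2 h3
  rintro ⟨n, hn, h⟩
  have hmx : Monotone (fun n => MM S w l n x) := monotone_nat_of_le_succ h2
  have h4 := hmx (hn.trans (Nat.le_succ N))
  have h5 := (h1 n).2
  rw [h3] at h5
  show 0 < MM S w l (N+1) x
  have : MM S w l n x ≤ MM S w l (N+1) x := h4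
  linarith

theorem maximal' (hS : IsPosDS μ S) {g w : Ω →ₘ[μ] ℝ} {a l : ℝ} (ha : 0 ≤ a) (hl : 0 < l)
    (hg : MemL1pLinf μ g)
    (hw : ∫⁻ x, ‖w x‖ₑ ∂μ ≠ ∞) (hw0 : ∀ᵐ x ∂μ, 0 ≤ w x) (h : ∀ᵐ x ∂μ, |g x| ≤ w x + a) :
    μ {x | ∃ n : ℕ, (a + l) * n < ∑ k ∈ Finset.range n, |S^[k] g x|}
      ≤ (∫⁻ x, ‖w x‖ₑ ∂μ) / ENNReal.ofReal l := by
  rw [ENNReal.le_div_iff_mul_le (by simp [hl]) (by simp), mul_comm]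
  refine le_trans ?_ (maximal hS hl.le hw hw0)
  gcongr 1
  refine measure_mono_ae ?_
  have h1 : ∀ᵐ x ∂μ, ∀ k : ℕ, |S^[k] g x| ≤ S^[k] w x + a :=
    ae_all_iff.2 fun k => map_abs_le (isPosDS_iter hS k) ha hg (mem_L1 hw) h
  filter_upwards [h1] with x hx
  rintro ⟨n, hn⟩
  refine ⟨n, ?_⟩
  have h2 : ∑ k ∈ Finset.range n, |S^[k] g x| ≤ ∑ k ∈ Finset.range n, (S^[k] w x + a) :=
    Finset.sum_le_sum fun k _ => hx k
  rw [Finset.sum_add_distrib] at h2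
  simp at h2
  linarith

end Bes

namespace Bes

/-- almost uniformly Cauchy. -/
def AUC (μ : Measure Ω) (F : ℕ → Ω → ℂ) : Prop :=
  ∀ δ : ℝ, 0 < δ → ∀ ε : ℝ≥0∞, 0 < ε →
    ∃ N : ℕ, μ {x | ∃ n ≥ N, ∃ m ≥ N, δ < ‖F n x - F m x‖} ≤ ε

variable {μ : Measure Ω}

theorem auc_mono_N {F : ℕ → Ω → ℂ} {δ : ℝ} {N M : ℕ} (h : N ≤ M) :
    μ {x | ∃ n ≥ M, ∃ m ≥ M, δ < ‖F n x - F m x‖} ≤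
    μ {x | ∃ n ≥ N, ∃ m ≥ N, δ < ‖F n x - F m x‖} := by
  refine measure_mono ?_
  rintro x ⟨n, hn, m, hm, hx⟩
  exact ⟨n, h.trans hn, m, h.trans hm, hx⟩

theorem auc_of_approx {F : ℕ → Ω → ℂ}
    (h : ∀ δ : ℝ, 0 < δ → ∀ ε : ℝ≥0∞, 0 < ε → ∃ G : ℕ → Ω → ℂ, AUC μ G ∧
      ∃ N : ℕ, μ {x | ∃ n ≥ N, δ < ‖F n x - G n x‖} ≤ ε) : AUC μ F := by
  intro δ hδ ε hε
  have hε2 : 0 < ε / 2 := ENNReal.half_pos hε.ne'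
  obtain ⟨G, hG, N, hN⟩ := h (δ / 3) (by positivity) (ε / 2) hε2
  obtain ⟨M, hM⟩ := hG (δ / 3) (by positivity) (ε / 2) hε2
  refine ⟨max N M, ?_⟩
  calc _ ≤ μ ({x | ∃ n ≥ N, δ / 3 < ‖F n x - G n x‖} ∪
        {x | ∃ n ≥ M, ∃ m ≥ M, δ / 3 < ‖G n x - G m x‖}) := by
        refine measure_mono ?_
        rintro x ⟨n, hn, m, hm, hx⟩
        by_contra hc
        simp only [mem_union, mem_ofPred_eq, not_or, not_exists, not_and, not_lt] at hc
        have h1 := hc.1 n (le_of_max_le_left hn)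
        have h2 := hc.1 m (le_of_max_le_left hm)
        have h3 := hc.2 n (le_of_max_le_right hn) m (le_of_max_le_right hm)
        have e : F n x - F m x = (F n x - G n x) + (G n x - G m x) - (F m x - G m x) := by ring
        have := norm_sub_le ((F n x - G n x) + (G n x - G m x)) (F m x - G m x)
        have := norm_add_le (F n x - G n x) (G n x - G m x)
        rw [e] at hx
        linarith
    _ ≤ ε / 2 + ε / 2 := (measure_union_le _ _).trans (add_le_add hN hM)
    _ = ε := ENNReal.add_halves ε

theorem auc_congr {F G : ℕ → Ω → ℂ} (hG : AUC μ G) (h : ∀ᶠ n in atTop, ∀ᵐ x ∂μ, F n x = G n x) :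
    AUC μ F := by
  obtain ⟨N, hN⟩ := eventually_atTop.1 h
  refine auc_of_approx fun δ hδ ε hε => ⟨G, hG, N, ?_⟩
  have h1 : ∀ᵐ x ∂μ, ∀ n, n ≥ N → F n x = G n x := by
    refine ae_all_iff.2 fun n => ?_
    by_cases hn : n ≥ N
    · filter_upwards [hN n hn] with x hx _ using hx
    · exact Eventually.of_forall fun x hx => absurd hx hn
  have : μ {x | ∃ n ≥ N, δ < ‖F n x - G n x‖} = 0 := by
    refine measure_mono_null ?_ h1
    rintro x ⟨n, hn, hx⟩ hc
    rw [hc n hn] at hx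
    simp at hx; linarith
  rw [this]; exact zero_le

theorem auc_add {F G : ℕ → Ω → ℂ} (hF : AUC μ F) (hG : AUC μ G) :
    AUC μ (fun n x => F n x + G n x) := by
  intro δ hδ ε hε
  have hε2 : 0 < ε / 2 := ENNReal.half_pos hε.ne'
  obtain ⟨N, hN⟩ := hF (δ / 2) (by positivity) (ε / 2) hε2
  obtain ⟨M, hM⟩ := hG (δ / 2) (by positivity) (ε / 2) hε2
  refine ⟨max N M, ?_⟩
  calc _ ≤ μ ({x | ∃ n ≥ N, ∃ m ≥ N, δ / 2 < ‖F n x - F m x‖} ∪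
        {x | ∃ n ≥ M, ∃ m ≥ M, δ / 2 < ‖G n x - G m x‖}) := by
        refine measure_mono ?_
        rintro x ⟨n, hn, m, hm, hx⟩
        by_contra hc
        simp only [mem_union, mem_ofPred_eq, not_or, not_exists, not_and, not_lt] at hc
        have h1 := hc.1 n (le_of_max_le_left hn) m (le_of_max_le_left hm)
        have h3 := hc.2 n (le_of_max_le_right hn) m (le_of_max_le_right hm)
        have e : F n x + G n x - (F m x + G m x) = (F n x - F m x) + (G n x - G m x) := by ring
        have := norm_add_le (F n x - F m x) (G n x - G m x)
        rw [e] at hx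
        linarith
    _ ≤ ε / 2 + ε / 2 := (measure_union_le _ _).trans (add_le_add hN hM)
    _ = ε := ENNReal.add_halves ε

theorem auc_const (f : Ω → ℂ) : AUC μ (fun _ => f) := by
  intro δ hδ ε hε
  refine ⟨0, ?_⟩
  have : {x : Ω | ∃ n ≥ 0, ∃ m ≥ 0, δ < ‖f x - f x‖} = ∅ := by
    ext x; simp [hδ.le]
  rw [this, measure_empty]; exact zero_le

theorem auc_smul {F : ℕ → Ω → ℂ} (hF : AUC μ F) (c : ℂ) : AUC μ (fun n x => c * F n x) := by
  intro δ hδ ε hε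
  obtain ⟨N, hN⟩ := hF (δ / (‖c‖ + 1)) (by positivity) ε hε
  refine ⟨N, (measure_mono ?_).trans hN⟩
  rintro x ⟨n, hn, m, hm, hx⟩
  refine ⟨n, hn, m, hm, ?_⟩
  rw [← mul_sub, norm_mul] at hx
  rw [div_lt_iff₀ (by positivity)]
  nlinarith [norm_nonneg (F n x - F m x)]

theorem auc_sum {ι : Type*} (s : Finset ι) {F : ι → ℕ → Ω → ℂ} (hF : ∀ i ∈ s, AUC μ (F i)) :
    AUC μ (fun n x => ∑ i ∈ s, F i n x) := by
  classical
  induction s using Finset.induction_on with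
  | empty => simpa using auc_const (μ := μ) (fun _ => 0)
  | insert a s ha ih =>
    simp only [Finset.sum_insert ha]
    exact auc_add (hF a (Finset.mem_insert_self a s))
      (ih fun i hi => hF i (Finset.mem_insert_of_mem hi))

/-- limits of almost uniformly Cauchy sequences -/
theorem auc_limit {F : ℕ → Ω →ₘ[μ] ℂ} (hF : AUC μ (fun n => F n)) :
    ∃ f : Ω →ₘ[μ] ℂ, (∀ᵐ x ∂μ, Tendsto (fun n => F n x) atTop (𝓝 (f x))) ∧
      AuTendstoC μ atTop F f := by
  have hc : ∀ᵐ x ∂μ, CauchySeq (fun n => F n x) := by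
    have h1 : ∀ j : ℕ, ∀ᵐ x ∂μ, ∃ N, ∀ n ≥ N, ∀ m ≥ N, ‖F n x - F m x‖ ≤ 1 / ((j:ℝ) + 1) := by
      intro j
      rw [ae_iff]
      refine le_antisymm (_root_.le_of_forall_pos_le_add fun ε hε => ?_) zero_le
      obtain ⟨N, hN⟩ := hF (1 / ((j:ℝ)+1)) (by positivity) ε hε
      rw [zero_add]
      refine (measure_mono ?_).trans hN
      intro x hx
      simp only [mem_ofPred_eq, not_exists, not_forall, not_le] at hx
      obtain ⟨n, hn, m, hm, h⟩ := hx N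
      exact ⟨n, hn, m, hm, h⟩
    filter_upwards [ae_all_iff.2 h1] with x hx
    refine Metric.cauchySeq_iff.2 fun ε hε => ?_
    obtain ⟨j, hj⟩ := exists_nat_one_div_lt hε
    obtain ⟨N, hN⟩ := hx j
    refine ⟨N, fun m hm n hn => ?_⟩
    rw [dist_eq_norm]
    exact (hN m hm n hn).trans_lt hj
  obtain ⟨f0, hf0m, hf0⟩ := exists_stronglyMeasurable_limit_of_tendsto_ae
    (fun n => (F n).aestronglyMeasurable)
    (by filter_upwards [hc] with x hx using cauchySeq_tendsto_of_complete hx)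
  refine ⟨AEEqFun.mk f0 hf0m.aestronglyMeasurable, ?_⟩
  set f := AEEqFun.mk f0 hf0m.aestronglyMeasurable (μ := μ) with hfdef
  have hlim : ∀ᵐ x ∂μ, Tendsto (fun n => F n x) atTop (𝓝 (f x)) := by
    filter_upwards [hf0, AEEqFun.coeFn_mk f0 hf0m.aestronglyMeasurable (μ := μ)] with x h1 h2
    rw [h2]; exact h1
  refine ⟨hlim, ?_⟩
  intro ε hε
  obtain ⟨ε', hε'0, hε'⟩ := ENNReal.exists_pos_sum_of_countable' (ε := ENNReal.ofReal ε)
    (by simpa using hε) ℕ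
  have hbad : ∀ j : ℕ, ∃ N, μ {x | ∃ n ≥ N, 1 / ((j:ℝ)+1) < ‖F n x - f x‖} ≤ ε' j := by
    intro j
    obtain ⟨N, hN⟩ := hF (1 / ((j:ℝ)+1) / 2) (by positivity) (ε' j) (hε'0 j)
    refine ⟨N, (measure_mono_ae ?_).trans hN⟩
    filter_upwards [hlim] with x hx
    rintro ⟨n, hn, h⟩
    show ∃ n ≥ N, ∃ m ≥ N, 1 / ((j:ℝ)+1) / 2 < ‖F n x - F m x‖
    by_contra hcon
    simp only [not_exists, not_and, not_lt] at hcon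
    have h2 : Tendsto (fun m => ‖F n x - F m x‖) atTop (𝓝 ‖F n x - f x‖) :=
      (tendsto_const_nhds.sub hx).norm
    have h3 := le_of_tendsto h2 (eventually_atTop.2 ⟨N, fun m hm => hcon n hn m hm⟩)
    have : (0:ℝ) < 1 / ((j:ℝ)+1) := by positivity
    linarith
  choose N hN using hbad
  set B : Set Ω := ⋃ j, {x | ∃ n ≥ N j, 1 / ((j:ℝ)+1) < ‖F n x - f x‖} with hB
  refine ⟨(toMeasurable μ B)ᶜ, (measurableSet_toMeasurable μ B).compl, ?_, ?_⟩
  · rw [compl_compl, measure_toMeasurable]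
    refine (measure_iUnion_le _).trans ((ENNReal.tsum_le_tsum hN).trans hε'.le)
  · refine ENNReal.tendsto_nhds_zero.2 fun η hη => ?_
    obtain ⟨j, hj⟩ : ∃ j : ℕ, ENNReal.ofReal (1 / ((j:ℝ)+1)) < η := by
      rcases eq_or_ne η ∞ with rfl | hη'
      · exact ⟨0, ENNReal.ofReal_lt_top⟩
      · obtain ⟨j, hj⟩ := exists_nat_one_div_lt (ENNReal.toReal_pos hη.ne' hη')
        exact ⟨j, (ENNReal.ofReal_lt_iff_lt_toReal (by positivity) hη').2 hj⟩
    filter_upwards [eventually_ge_atTop (N j)] with n hn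
    refine le_trans ?_ hj.le
    rw [eLpNorm_exponent_top]
    refine eLpNormEssSup_le_of_ae_bound ?_
    filter_upwards [AEEqFun.coeFn_sub (F n) f] with x hx
    by_cases hxE : x ∈ (toMeasurable μ B)ᶜ
    · rw [Set.indicator_of_mem hxE, hx, Pi.sub_apply]
      by_contra hcon
      refine hxE (subset_toMeasurable μ B ?_)
      exact mem_iUnion.2 ⟨j, n, hn, not_le.1 hcon⟩
    · rw [Set.indicator_of_notMem hxE, norm_zero]; positivity

end Bes

namespace Bes
variable {μ : Measure Ω} {S : (Ω →ₘ[μ] ℝ) → (Ω →ₘ[μ] ℝ)}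

theorem l2sq {E : Type*} [NormedAddCommGroup E] (h : Ω → E) :
    eLpNorm h 2 μ ^ 2 = ∫⁻ x, ‖h x‖ₑ ^ 2 ∂μ := by
  rw [eLpNorm_eq_lintegral_rpow_enorm_toReal (by norm_num) (by norm_num), ← ENNReal.rpow_natCast,
    ← ENNReal.rpow_mul]
  simp

noncomputable def reAE (h : Ω →ₘ[μ] ℂ) : Ω →ₘ[μ] ℝ := h.comp Complex.re Complex.continuous_re
noncomputable def imAE (h : Ω →ₘ[μ] ℂ) : Ω →ₘ[μ] ℝ := h.comp Complex.im Complex.continuous_im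

theorem reAE_coe (h : Ω →ₘ[μ] ℂ) : ∀ᵐ x ∂μ, reAE h x = (h x).re :=
  AEEqFun.coeFn_comp _ _ _
theorem imAE_coe (h : Ω →ₘ[μ] ℂ) : ∀ᵐ x ∂μ, imAE h x = (h x).im :=
  AEEqFun.coeFn_comp _ _ _
theorem ofRealAE_coe (g : Ω →ₘ[μ] ℝ) : ∀ᵐ x ∂μ, ofRealAE μ g x = (g x : ℂ) :=
  AEEqFun.coeFn_comp _ _ _

/-- complexification of `S`. -/
noncomputable def TC (S : (Ω →ₘ[μ] ℝ) → (Ω →ₘ[μ] ℝ)) (h : Ω →ₘ[μ] ℂ) : Ω →ₘ[μ] ℂ :=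
  ofRealAE μ (S (reAE h)) + Complex.I • ofRealAE μ (S (imAE h))

theorem comb_coe (g h : Ω →ₘ[μ] ℝ) :
    ∀ᵐ x ∂μ, (ofRealAE μ g + Complex.I • ofRealAE μ h) x = (g x : ℂ) + Complex.I * (h x : ℂ) := by
  filter_upwards [AEEqFun.coeFn_add (ofRealAE μ g) (Complex.I • ofRealAE μ h),
    AEEqFun.coeFn_smul Complex.I (ofRealAE μ h), ofRealAE_coe g, ofRealAE_coe h] with x h1 h2 h3 h4
  rw [h1, Pi.add_apply, h2, Pi.smul_apply, h3, h4, smul_eq_mul]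

theorem TC_coe (h : Ω →ₘ[μ] ℂ) :
    ∀ᵐ x ∂μ, TC S h x = (S (reAE h) x : ℂ) + Complex.I * (S (imAE h) x : ℂ) := comb_coe _ _

theorem re_comb (g h : Ω →ₘ[μ] ℝ) : reAE (ofRealAE μ g + Complex.I • ofRealAE μ h) = g := by
  apply AEEqFun.ext
  filter_upwards [reAE_coe (ofRealAE μ g + Complex.I • ofRealAE μ h), comb_coe g h] with x h1 h2
  rw [h1, h2]; simp

theorem im_comb (g h : Ω →ₘ[μ] ℝ) : imAE (ofRealAE μ g + Complex.I • ofRealAE μ h) = h := by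
  apply AEEqFun.ext
  filter_upwards [imAE_coe (ofRealAE μ g + Complex.I • ofRealAE μ h), comb_coe g h] with x h1 h2
  rw [h1, h2]; simp

theorem comb_re_im (f : Ω →ₘ[μ] ℂ) : ofRealAE μ (reAE f) + Complex.I • ofRealAE μ (imAE f) = f := by
  apply AEEqFun.ext
  filter_upwards [comb_coe (reAE f) (imAE f), reAE_coe f, imAE_coe f] with x h1 h2 h3
  rw [h1, h2, h3, mul_comm]; exact Complex.re_add_im _

theorem TC_comp (S' : (Ω →ₘ[μ] ℝ) → (Ω →ₘ[μ] ℝ)) (h : Ω →ₘ[μ] ℂ) :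
    TC S (TC S' h) = TC (S ∘ S') h := by
  unfold TC
  rw [re_comb, im_comb]; rfl

theorem reAE_add (f g : Ω →ₘ[μ] ℂ) : reAE (f + g) = reAE f + reAE g := by
  apply AEEqFun.ext
  filter_upwards [reAE_coe (f + g), reAE_coe f, reAE_coe g, AEEqFun.coeFn_add f g,
    AEEqFun.coeFn_add (reAE f) (reAE g)] with x h1 h2 h3 h4 h5
  rw [h1, h5, h4]; simp [h2, h3]

theorem imAE_add (f g : Ω →ₘ[μ] ℂ) : imAE (f + g) = imAE f + imAE g := by
  apply AEEqFun.ext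
  filter_upwards [imAE_coe (f + g), imAE_coe f, imAE_coe g, AEEqFun.coeFn_add f g,
    AEEqFun.coeFn_add (imAE f) (imAE g)] with x h1 h2 h3 h4 h5
  rw [h1, h5, h4]; simp [h2, h3]

theorem reAE_smul (c : ℂ) (f : Ω →ₘ[μ] ℂ) :
    reAE (c • f) = c.re • reAE f + (-c.im) • imAE f := by
  apply AEEqFun.ext
  filter_upwards [reAE_coe (c • f), reAE_coe f, imAE_coe f, AEEqFun.coeFn_smul c f,
    AEEqFun.coeFn_add (c.re • reAE f) ((-c.im) • imAE f), AEEqFun.coeFn_smul c.re (reAE f),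
    AEEqFun.coeFn_smul (-c.im) (imAE f)] with x h1 h2 h3 h4 h5 h6 h7
  rw [h1, h5, h4, Pi.add_apply, h6, h7]; simp [h2, h3]; ring

theorem imAE_smul (c : ℂ) (f : Ω →ₘ[μ] ℂ) :
    imAE (c • f) = c.im • reAE f + c.re • imAE f := by
  apply AEEqFun.ext
  filter_upwards [imAE_coe (c • f), reAE_coe f, imAE_coe f, AEEqFun.coeFn_smul c f,
    AEEqFun.coeFn_add (c.im • reAE f) (c.re • imAE f), AEEqFun.coeFn_smul c.im (reAE f),
    AEEqFun.coeFn_smul c.re (imAE f)] with x h1 h2 h3 h4 h5 h6 h7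
  rw [h1, h5, h4, Pi.add_apply, h6, h7]; simp [h2, h3]; ring

theorem TC_add (hS : IsPosDS μ S) {f g : Ω →ₘ[μ] ℂ} (hf1 : MemL1pLinf μ (reAE f))
    (hf2 : MemL1pLinf μ (imAE f)) (hg1 : MemL1pLinf μ (reAE g)) (hg2 : MemL1pLinf μ (imAE g)) :
    TC S (f + g) = TC S f + TC S g := by
  apply AEEqFun.ext
  have e1 := TC_coe (S := S) (f + g)
  rw [reAE_add, imAE_add, hS.map_add _ _ hf1 hg1, hS.map_add _ _ hf2 hg2] at e1
  filter_upwards [e1, TC_coe (S := S) f, TC_coe (S := S) g, AEEqFun.coeFn_add (TC S f) (TC S g),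
    AEEqFun.coeFn_add (S (reAE f)) (S (reAE g)), AEEqFun.coeFn_add (S (imAE f)) (S (imAE g))]
    with x h1 h2 h3 h4 h5 h6
  rw [h1, h4, Pi.add_apply, h2, h3, h5, h6]; simp; ring

theorem TC_smul (hS : IsPosDS μ S) (c : ℂ) {f : Ω →ₘ[μ] ℂ} (hf1 : MemL1pLinf μ (reAE f))
    (hf2 : MemL1pLinf μ (imAE f)) :
    TC S (c • f) = c • TC S f := by
  apply AEEqFun.ext
  have e1 := TC_coe (S := S) (c • f)
  rw [reAE_smul, imAE_smul, hS.map_add _ _ (mem_smul _ hf1) (mem_smul _ hf2),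
    hS.map_add _ _ (mem_smul _ hf1) (mem_smul _ hf2), hS.map_smul _ _ hf1, hS.map_smul _ _ hf1,
    hS.map_smul _ _ hf2, hS.map_smul _ _ hf2] at e1
  filter_upwards [e1, TC_coe (S := S) f, AEEqFun.coeFn_smul c (TC S f),
    AEEqFun.coeFn_add (c.re • S (reAE f)) ((-c.im) • S (imAE f)),
    AEEqFun.coeFn_add (c.im • S (reAE f)) (c.re • S (imAE f)),
    AEEqFun.coeFn_smul c.re (S (reAE f)), AEEqFun.coeFn_smul c.im (S (reAE f)),
    AEEqFun.coeFn_smul c.re (S (imAE f)), AEEqFun.coeFn_smul (-c.im) (S (imAE f))]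
    with x h1 h2 h3 h4 h5 h6 h7 h8 h9
  rw [h1, h3, Pi.smul_apply, h2, h4, h5, Pi.add_apply, Pi.add_apply, h6, h7, h8, h9]
  apply Complex.ext <;> simp <;> ring

theorem jensen (hS : IsPosDS μ S) {g q : Ω →ₘ[μ] ℝ} (hg : MemL1pLinf μ g) (hq : MemL1pLinf μ q)
    (h : ∀ᵐ x ∂μ, q x = g x ^ 2) : ∀ᵐ x ∂μ, S g x ^ 2 ≤ S q x := by
  have h1 : ∀ᵐ x ∂μ, ∀ a : ℚ, 2 * (a:ℝ) * S g x ≤ S q x + (a:ℝ) ^ 2 := by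
    refine ae_all_iff.2 fun a => ?_
    have h2 := map_abs_le hS (g := (2 * (a:ℝ)) • g) (w := q) (a := (a:ℝ)^2) (by positivity)
      (mem_smul _ hg) hq (by
        filter_upwards [h, AEEqFun.coeFn_smul (2 * (a:ℝ)) g] with x h1 h2
        rw [h2, h1, Pi.smul_apply, smul_eq_mul]
        exact abs_le.2 ⟨by nlinarith [sq_nonneg (g x + a)], by nlinarith [sq_nonneg (g x - a)]⟩)
    rw [hS.map_smul _ _ hg] at h2
    filter_upwards [h2, AEEqFun.coeFn_smul (2 * (a:ℝ)) (S g)] with x h3 h4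
    rw [h4, Pi.smul_apply, smul_eq_mul] at h3
    exact (le_abs_self _).trans h3
  filter_upwards [h1] with x hx
  have h3 : ∀ a : ℝ, 2 * a * S g x ≤ S q x + a ^ 2 := by
    intro a
    refine Rat.denseRange_cast.induction_on (p := fun a : ℝ => 2 * a * S g x ≤ S q x + a ^ 2) a ?_ hx
    exact isClosed_le (by fun_prop) (by fun_prop)
  have := h3 (S g x)
  nlinarith

theorem sq_mem {g : Ω →ₘ[μ] ℝ} (hg : ∫⁻ x, ‖g x‖ₑ ^ 2 ∂μ ≠ ∞) : MemL1pLinf μ g := by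
  refine mem_of_le (w := fun x => g x ^ 2) (a := 1) (by simpa [enorm_pow] using hg) ?_
  filter_upwards with x
  exact abs_le.2 ⟨by nlinarith [sq_nonneg (g x + 1)], by nlinarith [sq_nonneg (g x - 1)]⟩

theorem pow_L1 {g : Ω →ₘ[μ] ℝ} : ∫⁻ x, ‖(g ^ 2) x‖ₑ ∂μ = ∫⁻ x, ‖g x‖ₑ ^ 2 ∂μ := by
  refine lintegral_congr_ae ?_
  filter_upwards [AEEqFun.coeFn_pow g 2] with x hx
  rw [hx, Pi.pow_apply, enorm_pow]

theorem S_l2 (hS : IsPosDS μ S) {g : Ω →ₘ[μ] ℝ} (hg : ∫⁻ x, ‖g x‖ₑ ^ 2 ∂μ ≠ ∞) :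
    ∫⁻ x, ‖S g x‖ₑ ^ 2 ∂μ ≤ ∫⁻ x, ‖g x‖ₑ ^ 2 ∂μ := by
  have h1 : ∫⁻ x, ‖(g ^ 2) x‖ₑ ∂μ ≠ ∞ := by rwa [pow_L1]
  rw [← pow_L1 (g := g)]
  refine le_trans (lintegral_mono_ae ?_) (map_L1 hS h1)
  filter_upwards [jensen hS (sq_mem hg) (mem_L1 h1) (AEEqFun.coeFn_pow g 2)] with x hx
  rw [← enorm_pow]
  refine enorm_le_iff_norm_le.2 ?_
  rw [Real.norm_of_nonneg (sq_nonneg _)]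
  exact hx.trans (le_abs_self _)

theorem enorm_comb (a b : ℝ) : ‖(a : ℂ) + Complex.I * (b : ℂ)‖ₑ ^ 2 = ‖a‖ₑ ^ 2 + ‖b‖ₑ ^ 2 := by
  rw [← enorm_pow, ← enorm_pow, ← enorm_pow, Real.enorm_eq_ofReal (sq_nonneg a), Real.enorm_eq_ofReal (sq_nonneg b),
    ← ENNReal.ofReal_add (sq_nonneg a) (sq_nonneg b), ← ofReal_norm, norm_pow]
  congr 1
  rw [Complex.sq_norm, Complex.normSq_apply]; simp; ring

theorem split_sq (h : Ω →ₘ[μ] ℂ) :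
    ∫⁻ x, ‖h x‖ₑ ^ 2 ∂μ = ∫⁻ x, ‖reAE h x‖ₑ ^ 2 ∂μ + ∫⁻ x, ‖imAE h x‖ₑ ^ 2 ∂μ := by
  rw [← lintegral_add_left (by exact (reAE h).measurable.enorm.pow_const 2)]
  refine lintegral_congr_ae ?_
  filter_upwards [reAE_coe h, imAE_coe h] with x h1 h2
  rw [← enorm_comb, h1, h2, mul_comm Complex.I, Complex.re_add_im]

theorem TC_l2 (hS : IsPosDS μ S) {h : Ω →ₘ[μ] ℂ} (hh : ∫⁻ x, ‖h x‖ₑ ^ 2 ∂μ ≠ ∞) :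
    ∫⁻ x, ‖TC S h x‖ₑ ^ 2 ∂μ ≤ ∫⁻ x, ‖h x‖ₑ ^ 2 ∂μ := by
  rw [split_sq h] at hh ⊢
  rw [split_sq (TC S h)]
  rw [ENNReal.add_ne_top] at hh
  unfold TC
  rw [re_comb, im_comb]
  exact add_le_add (S_l2 hS hh.1) (S_l2 hS hh.2)

theorem Lp_sq (h : Lp ℂ 2 μ) : ∫⁻ x, ‖(h : Ω →ₘ[μ] ℂ) x‖ₑ ^ 2 ∂μ = ENNReal.ofReal (‖h‖ ^ 2) := by
  rw [← l2sq, Lp.norm_def, ← ENNReal.toReal_pow, ENNReal.ofReal_toReal]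
  exact ENNReal.pow_ne_top (Lp.eLpNorm_ne_top h)

theorem Lp_sq_ne (h : Lp ℂ 2 μ) : ∫⁻ x, ‖(h : Ω →ₘ[μ] ℂ) x‖ₑ ^ 2 ∂μ ≠ ∞ := by
  rw [Lp_sq]; exact ENNReal.ofReal_ne_top

theorem Lp_mem (h : Lp ℂ 2 μ) : MemL1pLinf μ (reAE (h : Ω →ₘ[μ] ℂ)) ∧
    MemL1pLinf μ (imAE (h : Ω →ₘ[μ] ℂ)) := by
  have := Lp_sq_ne h
  rw [split_sq, ENNReal.add_ne_top] at this
  exact ⟨sq_mem this.1, sq_mem this.2⟩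

theorem TC_eLp (hS : IsPosDS μ S) (h : Lp ℂ 2 μ) : eLpNorm (TC S (h : Ω →ₘ[μ] ℂ)) 2 μ ≤
    eLpNorm h 2 μ := by
  rw [← ENNReal.pow_le_pow_left_iff (n := 2) (by norm_num), l2sq, l2sq]
  exact TC_l2 hS (Lp_sq_ne h)

/-- the contraction on L². -/
noncomputable def UU (hS : IsPosDS μ S) (lam : ℂ) : Lp ℂ 2 μ →L[ℂ] Lp ℂ 2 μ :=
  lam • LinearMap.mkContinuous
    { toFun := fun h => ⟨TC S (h : Ω →ₘ[μ] ℂ),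
        Lp.mem_Lp_iff_eLpNorm_lt_top.2 ((TC_eLp hS h).trans_lt (Lp.eLpNorm_lt_top h))⟩
      map_add' := fun f g => by
        apply Subtype.ext
        exact TC_add hS (Lp_mem f).1 (Lp_mem f).2 (Lp_mem g).1 (Lp_mem g).2
      map_smul' := fun c f => by
        apply Subtype.ext
        exact TC_smul hS c (Lp_mem f).1 (Lp_mem f).2 } 1 (fun h => by
          rw [one_mul, Lp.norm_def, Lp.norm_def]
          exact ENNReal.toReal_mono (Lp.eLpNorm_ne_top h) (TC_eLp hS h))

theorem UU_coe (hS : IsPosDS μ S) (lam : ℂ) (h : Lp ℂ 2 μ) :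
    ((UU hS lam h : Lp ℂ 2 μ) : Ω →ₘ[μ] ℂ) = lam • TC S (h : Ω →ₘ[μ] ℂ) := rfl

theorem UU_norm (hS : IsPosDS μ S) {lam : ℂ} (hl : ‖lam‖ = 1) : ‖UU hS lam‖ ≤ 1 := by
  unfold UU
  rw [norm_smul, hl, one_mul]
  exact LinearMap.mkContinuous_norm_le _ zero_le_one _

theorem UU_pow (hS : IsPosDS μ S) (lam : ℂ) (h : Lp ℂ 2 μ) (k : ℕ) :
    (((UU hS lam ^ k) h : Lp ℂ 2 μ) : Ω →ₘ[μ] ℂ) = lam ^ k • TC (S^[k]) (h : Ω →ₘ[μ] ℂ) := by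
  induction k with
  | zero =>
    simp only [pow_zero, Function.iterate_zero, one_smul]
    exact (comb_re_im _).symm
  | succ k ih =>
    have hSk := isPosDS_iter hS k
    have e : (UU hS lam ^ (k+1)) h = UU hS lam ((UU hS lam ^ k) h) := by
      rw [pow_succ']; rfl
    rw [e, UU_coe, ih, TC_smul hS, TC_comp, smul_smul, ← pow_succ', Function.iterate_succ']
    · unfold TC; rw [re_comb]; exact mem_map hSk (Lp_mem h).1
    · unfold TC; rw [im_comb]; exact mem_map hSk (Lp_mem h).2

end Bes

namespace Bes
variable {μ : Measure Ω} {S : (Ω →ₘ[μ] ℝ) → (Ω →ₘ[μ] ℝ)}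

noncomputable def AA (hS : IsPosDS μ S) (lam : ℂ) (n : ℕ) : Lp ℂ 2 μ →L[ℂ] Lp ℂ 2 μ :=
  (n : ℂ)⁻¹ • ∑ k ∈ Finset.range n, UU hS lam ^ k

theorem AA_apply (hS : IsPosDS μ S) (lam : ℂ) (n : ℕ) (h : Lp ℂ 2 μ) :
    AA hS lam n h = (n : ℂ)⁻¹ • ∑ k ∈ Finset.range n, (UU hS lam ^ k) h := by
  simp [AA]

theorem AA_coe (hS : IsPosDS μ S) (lam : ℂ) (n : ℕ) (h : Lp ℂ 2 μ) :
    ∀ᵐ x ∂μ, AA hS lam n h x = (n : ℂ)⁻¹ * ∑ k ∈ Finset.range n, lam ^ k *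
      ((S^[k] (reAE (h : Ω →ₘ[μ] ℂ)) x : ℂ) + Complex.I * (S^[k] (imAE (h : Ω →ₘ[μ] ℂ)) x : ℂ)) := by
  have e : ((AA hS lam n h : Lp ℂ 2 μ) : Ω →ₘ[μ] ℂ) =
      (n : ℂ)⁻¹ • ∑ k ∈ Finset.range n, (lam ^ k • TC (S^[k]) (h : Ω →ₘ[μ] ℂ)) := by
    rw [AA_apply]
    change (n : ℂ)⁻¹ • ((∑ k ∈ Finset.range n, (UU hS lam ^ k) h : Lp ℂ 2 μ) : Ω →ₘ[μ] ℂ) = _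
    congr 1
    rw [AddSubgroup.val_finsetSum]
    exact Finset.sum_congr rfl fun k _ => UU_pow hS lam h k
  rw [e]
  have h1 : ∀ᵐ x ∂μ, ∀ k : ℕ, (lam ^ k • TC (S^[k]) (h : Ω →ₘ[μ] ℂ)) x = lam ^ k *
      ((S^[k] (reAE (h : Ω →ₘ[μ] ℂ)) x : ℂ) + Complex.I * (S^[k] (imAE (h : Ω →ₘ[μ] ℂ)) x : ℂ)) := by
    refine ae_all_iff.2 fun k => ?_
    filter_upwards [AEEqFun.coeFn_smul (lam ^ k) (TC (S^[k]) (h : Ω →ₘ[μ] ℂ)),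
      TC_coe (S := S^[k]) (h : Ω →ₘ[μ] ℂ)] with x h1 h2
    rw [h1, Pi.smul_apply, h2, smul_eq_mul]
  filter_upwards [h1, AEEqFun.coeFn_smul (n : ℂ)⁻¹
      (∑ k ∈ Finset.range n, (lam ^ k • TC (S^[k]) (h : Ω →ₘ[μ] ℂ))),
      AEEqFun.coeFn_fun_finsetSum (μ := μ) (Finset.range n)
        (fun k => lam ^ k • TC (S^[k]) (h : Ω →ₘ[μ] ℂ))] with x h1 h2 h3
  rw [h2, Pi.smul_apply, h3, smul_eq_mul]
  congr 1
  exact Finset.sum_congr rfl fun k _ => h1 k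

theorem max_sq (hS : IsPosDS μ S) {g : Ω →ₘ[μ] ℝ} (hg : ∫⁻ x, ‖g x‖ₑ ^ 2 ∂μ ≠ ∞)
    {a : ℝ} (ha : 0 < a) :
    μ {x | ∃ n : ℕ, (2 * a) * n < ∑ k ∈ Finset.range n, |S^[k] g x|}
      ≤ (∫⁻ x, ‖g x‖ₑ ^ 2 ∂μ) / ENNReal.ofReal (a ^ 2) := by
  have hw : ∀ᵐ x ∂μ, (a⁻¹ • g ^ 2) x = a⁻¹ * g x ^ 2 := by
    filter_upwards [AEEqFun.coeFn_smul a⁻¹ (g ^ 2), AEEqFun.coeFn_pow g 2] with x h1 h2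
    rw [h1, Pi.smul_apply, h2]; rfl
  have hi : ∫⁻ x, ‖(a⁻¹ • g ^ 2) x‖ₑ ∂μ = (∫⁻ x, ‖g x‖ₑ ^ 2 ∂μ) / ENNReal.ofReal a := by
    rw [ENNReal.div_eq_inv_mul, ← lintegral_const_mul' _ _ (by simpa using ha)]
    refine lintegral_congr_ae ?_
    filter_upwards [hw] with x hx
    rw [hx, enorm_mul, enorm_pow, Real.enorm_eq_ofReal (by positivity), ENNReal.ofReal_inv_of_pos ha]
  have h := maximal' hS (g := g) (w := a⁻¹ • g ^ 2) (a := a) (l := a) ha.le ha (sq_mem hg)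
    (by rw [hi]; exact ENNReal.div_ne_top hg (by simpa using ha))
    (by filter_upwards [hw] with x hx; rw [hx]; positivity)
    (by
      filter_upwards [hw] with x hx
      rw [hx]
      have : a * |g x| ≤ g x ^ 2 + a * a := by
        rw [← sq_abs]; nlinarith [sq_nonneg (|g x| - a), abs_nonneg (g x)]
      have h2 : a⁻¹ * g x ^ 2 + a = (g x ^ 2 + a * a) / a := by field_simp
      rw [h2, le_div_iff₀ ha]; linarith)
  rw [hi, ← two_mul] at h
  refine h.trans (le_of_eq ?_)
  rw [pow_two, ENNReal.ofReal_mul ha.le, div_eq_mul_inv, div_eq_mul_inv, div_eq_mul_inv, mul_assoc,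
    ENNReal.mul_inv (by simp [ha]) (by simp)]

theorem AA_weak (hS : IsPosDS μ S) {lam : ℂ} (hl : ‖lam‖ = 1) (r : Lp ℂ 2 μ) {a : ℝ} (ha : 0 < a) :
    μ {x | ∃ n : ℕ, 4 * a < ‖AA hS lam n r x‖} ≤ 2 * (ENNReal.ofReal (‖r‖ ^ 2) / ENNReal.ofReal (a ^ 2)) := by
  set g := reAE (r : Ω →ₘ[μ] ℂ) with hg
  set h := imAE (r : Ω →ₘ[μ] ℂ) with hh
  have hs := split_sq (r : Ω →ₘ[μ] ℂ)
  rw [Lp_sq, ← hg, ← hh] at hs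
  have hg1 : ∫⁻ x, ‖g x‖ₑ ^ 2 ∂μ ≤ ENNReal.ofReal (‖r‖ ^ 2) := by rw [hs]; exact le_self_add
  have hh1 : ∫⁻ x, ‖h x‖ₑ ^ 2 ∂μ ≤ ENNReal.ofReal (‖r‖ ^ 2) := by rw [hs]; exact le_add_self
  have m1 := max_sq hS (ne_top_of_le_ne_top ENNReal.ofReal_ne_top hg1) ha
  have m2 := max_sq hS (ne_top_of_le_ne_top ENNReal.ofReal_ne_top hh1) ha
  calc _ ≤ μ ({x | ∃ n : ℕ, (2 * a) * n < ∑ k ∈ Finset.range n, |S^[k] g x|} ∪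
          {x | ∃ n : ℕ, (2 * a) * n < ∑ k ∈ Finset.range n, |S^[k] h x|}) := by
        refine measure_mono_ae ?_
        filter_upwards [ae_all_iff.2 fun n => AA_coe hS lam n r] with x hx
        rintro ⟨n, hn⟩
        by_contra hc
        have hc : x ∉ ({x | ∃ n : ℕ, (2 * a) * n < ∑ k ∈ Finset.range n, |S^[k] g x|} ∪
          {x | ∃ n : ℕ, (2 * a) * n < ∑ k ∈ Finset.range n, |S^[k] h x|}) := hc
        simp only [mem_union, mem_ofPred_eq, not_or, not_exists, not_lt] at hc
        have h1 := hc.1 n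
        have h2 := hc.2 n
        rw [hx n, norm_mul, norm_inv, Complex.norm_natCast] at hn
        have h3 : ‖∑ k ∈ Finset.range n, lam ^ k * ((S^[k] g x : ℂ) + Complex.I * (S^[k] h x : ℂ))‖
            ≤ ∑ k ∈ Finset.range n, |S^[k] g x| + ∑ k ∈ Finset.range n, |S^[k] h x| := by
          rw [← Finset.sum_add_distrib]
          refine (norm_sum_le _ _).trans (Finset.sum_le_sum fun k _ => ?_)
          rw [norm_mul, norm_pow, hl, one_pow, one_mul]
          refine (norm_add_le _ _).trans ?_
          simp
        rcases Nat.eq_zero_or_pos n with rfl | hn0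
        · simp at hn; linarith
        · have hn1 : (0:ℝ) < n := by exact_mod_cast hn0
          rw [inv_mul_eq_div, lt_div_iff₀ hn1] at hn
          linarith
    _ ≤ _ := (measure_union_le _ _).trans (add_le_add m1 m2)
    _ ≤ _ := by
        rw [two_mul]
        gcongr

theorem tail_small {v : ℕ → Lp ℂ 2 μ} {K : ℝ} (hv : ∀ n, ‖v n‖ ≤ K * (n : ℝ)⁻¹) :
    AUC μ (fun n => v n) := by
  refine auc_of_approx fun δ hδ ε hε => ⟨fun _ _ => 0, auc_const _, ?_⟩
  set t : ℕ → ℝ≥0∞ := fun n => ENNReal.ofReal (K ^ 2 / δ ^ 2 * (((n : ℝ) ^ 2)⁻¹)) with ht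
  have hsum : ∑' n, t n ≠ ∞ := by
    have : Summable (fun n : ℕ => K ^ 2 / δ ^ 2 * (((n : ℝ) ^ 2)⁻¹)) :=
      (Real.summable_nat_pow_inv.2 (by norm_num)).mul_left _
    exact this.tsum_ofReal_ne_top
  have h1 := ENNReal.tendsto_nhds_zero.1 (ENNReal.tendsto_sum_nat_add t hsum) ε hε
  obtain ⟨N, hN⟩ := h1.exists
  refine ⟨N, le_trans ?_ hN⟩
  calc _ ≤ μ (⋃ k, {x | ENNReal.ofReal δ ≤ ‖v (k + N) x‖ₑ}) := by
        refine measure_mono ?_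
        rintro x ⟨n, hn, hx⟩
        refine mem_iUnion.2 ⟨n - N, ?_⟩
        show ENNReal.ofReal δ ≤ ‖v (n - N + N) x‖ₑ
        rw [Nat.sub_add_cancel hn, ← ofReal_norm]
        rw [sub_zero] at hx
        exact ENNReal.ofReal_le_ofReal hx.le
    _ ≤ ∑' k, μ {x | ENNReal.ofReal δ ≤ ‖v (k + N) x‖ₑ} := measure_iUnion_le _
    _ ≤ _ := by
        refine ENNReal.tsum_le_tsum fun k => ?_
        have h2 := meas_ge_le_mul_pow_eLpNorm_enorm μ (p := 2) (by norm_num) (by norm_num)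
          (Lp.aestronglyMeasurable (v (k + N))) (ε := ENNReal.ofReal δ) (by simpa using hδ)
          (by simp)
        refine h2.trans ?_
        have e2 : (2 : ℝ≥0∞).toReal = ((2 : ℕ) : ℝ) := by simp
        rw [e2, ENNReal.rpow_natCast, ENNReal.rpow_natCast, l2sq, Lp_sq (v (k + N)),
          ← ENNReal.ofReal_inv_of_pos hδ, ← ENNReal.ofReal_pow (by positivity),
          ← ENNReal.ofReal_mul (by positivity)]
        refine ENNReal.ofReal_le_ofReal ?_
        have h3 : ‖v (k + N)‖ ^ 2 ≤ (K * ((k + N : ℕ) : ℝ)⁻¹) ^ 2 := by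
          gcongr
          exact hv _
        calc _ ≤ δ⁻¹ ^ 2 * (K * ((k + N : ℕ) : ℝ)⁻¹) ^ 2 := by gcongr
          _ = _ := by rw [mul_pow, inv_pow, inv_pow]; ring

theorem AA_auc (hS : IsPosDS μ S) {lam : ℂ} (hl : ‖lam‖ = 1) (h : Lp ℂ 2 μ) :
    AUC μ (fun n => AA hS lam n h) := by
  set U := UU hS lam with hU
  have hU1 : ‖U‖ ≤ 1 := UU_norm hS hl
  have hme := U.tendsto_birkhoffAverage_orthogonalProjection hU1 h
  set p : Lp ℂ 2 μ := ((U.eqLocus (1 : Lp ℂ 2 μ →L[ℂ] Lp ℂ 2 μ)).orthogonalProjectionOnto h : Lp ℂ 2 μ) with hp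
  have hpfix : U p = p :=
    ((U.eqLocus (1 : Lp ℂ 2 μ →L[ℂ] Lp ℂ 2 μ)).orthogonalProjectionOnto h).2
  have hme' : Tendsto (fun n => AA hS lam n h) atTop (𝓝 p) := by
    refine hme.congr fun n => ?_
    rw [AA_apply, birkhoffAverage, birkhoffSum]
    congr 1
    refine Finset.sum_congr rfl fun k _ => ?_
    show U^[k] h = (U ^ k) h
    induction k with
    | zero => rfl
    | succ k ih => rw [Function.iterate_succ_apply', ih (by simp_all; omega), pow_succ']; rfl
  have hppow : ∀ k, (U ^ k) p = p := by
    intro k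
    induction k with
    | zero => rfl
    | succ k ih => rw [pow_succ, mul_apply_eq_comp, hpfix, ih]
  have hAp : ∀ n : ℕ, 1 ≤ n → AA hS lam n p = p := by
    intro n hn
    rw [AA_apply, ← hU, Finset.sum_congr rfl fun k _ => hppow k, Finset.sum_const, Finset.card_range,
      ← Nat.cast_smul_eq_nsmul ℂ, smul_smul, inv_mul_cancel₀ (by exact_mod_cast (by omega)), one_smul]
  refine auc_of_approx fun δ hδ ε hε => ?_
  -- choose N
  have hlim : Tendsto (fun n => 2 * (ENNReal.ofReal (‖AA hS lam n h - p‖ ^ 2) /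
      ENNReal.ofReal ((δ / 4) ^ 2))) atTop (𝓝 0) := by
    have h1 : Tendsto (fun n => ENNReal.ofReal (‖AA hS lam n h - p‖ ^ 2)) atTop (𝓝 0) := by
      have : Tendsto (fun n => ‖AA hS lam n h - p‖ ^ 2) atTop (𝓝 (‖p - p‖ ^ 2)) :=
        ((hme'.sub_const p).norm).pow 2
      have := ENNReal.tendsto_ofReal this
      simpa using this
    have h2 := ENNReal.Tendsto.const_mul (a := 2 * (ENNReal.ofReal ((δ / 4) ^ 2))⁻¹) h1 (Or.inr
      (ENNReal.mul_ne_top (by norm_num) (by simp; positivity)))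
    rw [mul_zero] at h2
    refine h2.congr fun n => ?_
    rw [ENNReal.div_eq_inv_mul, mul_assoc]
  obtain ⟨N, hN, hN1⟩ := ((ENNReal.tendsto_nhds_zero.1 hlim ε hε).and (eventually_ge_atTop 1)).exists
  set r := AA hS lam N h - p with hr
  -- coboundary
  obtain ⟨u, hu⟩ : ∃ u, h - AA hS lam N h = u - U u := by
    have hN0 : (N : ℂ) ≠ 0 := by exact_mod_cast (by omega : N ≠ 0)
    refine ⟨(N : ℂ)⁻¹ • ∑ k ∈ Finset.range N, (∑ j ∈ Finset.range k, U ^ j) h, ?_⟩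
    have h1 : ∀ k : ℕ, (∑ j ∈ Finset.range k, U ^ j) h - U ((∑ j ∈ Finset.range k, U ^ j) h)
        = h - (U ^ k) h := by
      intro k
      have := congrArg (fun V : Lp ℂ 2 μ →L[ℂ] Lp ℂ 2 μ => V h) (mul_neg_geom_sum U k)
      simpa [sub_mul] using this
    rw [_root_.map_smul, ← smul_sub, _root_.map_sum, ← Finset.sum_sub_distrib,
      Finset.sum_congr rfl fun k _ => h1 k, Finset.sum_sub_distrib, smul_sub, ← AA_apply]
    congr 1
    rw [Finset.sum_const, Finset.card_range, ← Nat.cast_smul_eq_nsmul ℂ, smul_smul,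
      inv_mul_cancel₀ hN0, one_smul]
  have hcob : ∀ n : ℕ, AA hS lam n (u - U u) = (n : ℂ)⁻¹ • (u - (U ^ n) u) := by
    intro n
    have := congrArg (fun V : Lp ℂ 2 μ →L[ℂ] Lp ℂ 2 μ => V u) (geom_sum_mul_neg U n)
    rw [AA, ← hU, smul_apply]
    congr 1
  have hauc2 : AUC μ (fun n => AA hS lam n (u - U u)) := by
    refine tail_small (K := 2 * ‖u‖) fun n => ?_
    rw [hcob, norm_smul, norm_inv, Complex.norm_natCast, mul_comm]
    gcongr
    refine (norm_sub_le _ _).trans ?_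
    have h1 : ‖(U ^ n) u‖ ≤ ‖u‖ := by
      have h2 : ‖U ^ n‖ ≤ 1 := by
        induction n with
        | zero => rw [pow_zero]; exact ContinuousLinearMap.norm_id_le
        | succ n ih =>
          rw [pow_succ]
          exact (norm_mul_le _ _).trans (mul_le_one₀ ih (norm_nonneg _) hU1)
      simpa using (U ^ n).le_of_opNorm_le h2 u
    linarith
  refine ⟨fun n x => p x + AA hS lam n (u - U u) x, auc_add (auc_const _) hauc2, 1, ?_⟩
  refine le_trans (measure_mono_ae ?_) ((AA_weak hS hl r (a := δ / 4) (by positivity)).trans hN)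
  have hdec : ∀ᵐ x ∂μ, ∀ n : ℕ, 1 ≤ n →
      AA hS lam n h x - (p x + AA hS lam n (u - U u) x) = AA hS lam n r x := by
    refine ae_all_iff.2 fun n => ?_
    by_cases hn : 1 ≤ n
    · have e : AA hS lam n h = (p + AA hS lam n (u - U u)) + AA hS lam n r := by
        rw [← hu]
        conv_rhs => rw [← hAp n hn]
        rw [← map_add, ← map_add]
        congr 1
        rw [hr]; abel
      filter_upwards [Lp.coeFn_add (p + AA hS lam n (u - U u)) (AA hS lam n r),
        Lp.coeFn_add p (AA hS lam n (u - U u))] with x h1 h2 _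
      rw [e, h1, Pi.add_apply, h2, Pi.add_apply]; ring
    · exact Eventually.of_forall fun x hx => absurd hx hn
  filter_upwards [hdec] with x hx
  rintro ⟨n, hn, h1⟩
  rw [hx n hn] at h1
  exact ⟨n, by linarith⟩

end Bes

namespace Bes
variable {μ : Measure Ω} {S : (Ω →ₘ[μ] ℝ) → (Ω →ₘ[μ] ℝ)}

noncomputable def WA (S : (Ω →ₘ[μ] ℝ) → (Ω →ₘ[μ] ℝ)) (β : ℕ → ℂ) (g : Ω →ₘ[μ] ℝ) (n : ℕ) (x : Ω) : ℂ :=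
  (n : ℂ)⁻¹ * ∑ k ∈ Finset.range n, β k * (S^[k] g x : ℂ)

theorem map_zero' (hS : IsPosDS μ S) : S 0 = 0 := by
  have := hS.map_smul 0 0 (by
    have := mem_smul 0 (mem_const (μ := μ) 1); simpa using this)
  simpa using this

theorem WA_pow (hS : IsPosDS μ S) {lam : ℂ} (hl : ‖lam‖ = 1) {g : Ω →ₘ[μ] ℝ}
    (hg : ∫⁻ x, ‖g x‖ₑ ^ 2 ∂μ ≠ ∞) : AUC μ (WA S (fun k => lam ^ k) g) := by
  have hre : reAE (ofRealAE μ g) = g := by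
    apply AEEqFun.ext
    filter_upwards [reAE_coe (ofRealAE μ g), ofRealAE_coe g] with x h1 h2
    rw [h1, h2]; simp
  have him : imAE (ofRealAE μ g) = 0 := by
    apply AEEqFun.ext
    filter_upwards [imAE_coe (ofRealAE μ g), ofRealAE_coe g,
      AEEqFun.coeFn_zero (α := Ω) (β := ℝ) (μ := μ)] with x h1 h2 h3
    rw [h1, h2, h3]; simp
  have hmem : ofRealAE μ g ∈ Lp ℂ 2 μ := by
    have h2 : eLpNorm (ofRealAE μ g) 2 μ ^ 2 < ∞ := by
      rw [l2sq]
      refine lt_of_eq_of_lt ?_ hg.lt_top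
      refine lintegral_congr_ae ?_
      filter_upwards [ofRealAE_coe g] with x hx
      rw [hx, ← ofReal_norm, ← ofReal_norm, Complex.norm_real]
    rw [Lp.mem_Lp_iff_eLpNorm_lt_top]
    exact ((ENNReal.pow_lt_top_iff).1 h2).resolve_right (by norm_num)
  refine auc_congr (AA_auc hS hl ⟨ofRealAE μ g, hmem⟩) (Eventually.of_forall fun n => ?_)
  have h0 : ∀ᵐ x ∂μ, ∀ k : ℕ, S^[k] 0 x = 0 := by
    refine ae_all_iff.2 fun k => ?_
    rw [map_zero' (isPosDS_iter hS k)]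
    exact AEEqFun.coeFn_zero
  filter_upwards [AA_coe hS lam n ⟨ofRealAE μ g, hmem⟩, h0] with x h1 h2
  rw [h1]
  simp only [hre, him, h2, WA]
  simp

theorem WA_trig (hS : IsPosDS μ S) {s : ℕ} (z lam : Fin s → ℂ) (hl : ∀ j, ‖lam j‖ = 1)
    {g : Ω →ₘ[μ] ℝ} (hg : ∫⁻ x, ‖g x‖ₑ ^ 2 ∂μ ≠ ∞) :
    AUC μ (WA S (fun k => ∑ j, z j * lam j ^ k) g) := by
  have h := auc_sum (μ := μ) Finset.univ (F := fun j n x => z j * WA S (fun k => lam j ^ k) g n x)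
    fun j _ => auc_smul (WA_pow hS (hl j) hg) (z j)
  refine auc_congr h (Eventually.of_forall fun n => Eventually.of_forall fun x => ?_)
  simp only [WA, Finset.mul_sum, Finset.sum_mul]
  rw [Finset.sum_comm]
  refine Finset.sum_congr rfl fun j _ => Finset.sum_congr rfl fun k _ => by ring

theorem WA_norm_le (β : ℕ → ℂ) (g : Ω →ₘ[μ] ℝ) (n : ℕ) (x : Ω) :
    ‖WA S β g n x‖ ≤ (n : ℝ)⁻¹ * ∑ k ∈ Finset.range n, ‖β k‖ * |S^[k] g x| := by
  rw [WA, norm_mul, norm_inv, Complex.norm_natCast]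
  gcongr
  refine (norm_sum_le _ _).trans (Finset.sum_le_sum fun k _ => ?_)
  rw [norm_mul]; simp

theorem WA_bdd (hS : IsPosDS μ S) {β : ℕ → ℂ} (hβ : IsBesicovitch β)
    {g : Ω →ₘ[μ] ℝ} (hg : ∫⁻ x, ‖g x‖ₑ ^ 2 ∂μ ≠ ∞) {c : ℝ} (hc : 0 ≤ c)
    (hgc : ∀ᵐ x ∂μ, |g x| ≤ c) : AUC μ (WA S β g) := by
  refine auc_of_approx fun δ hδ ε hε => ?_
  obtain ⟨⟨C, hC⟩, hβ2⟩ := hβ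
  obtain ⟨s, z, lam, hl, hlim⟩ := hβ2 (δ / (c + 1)) (by positivity)
  have hbdd : IsBoundedUnder (· ≤ ·) atTop
      (fun n : ℕ => (n : ℝ)⁻¹ * ∑ k ∈ Finset.range n, ‖β k - ∑ j, z j * lam j ^ k‖) := by
    refine isBoundedUnder_of ⟨C + ∑ j, ‖z j‖, fun n => ?_⟩
    have h1 : ∑ k ∈ Finset.range n, ‖β k - ∑ j, z j * lam j ^ k‖ ≤ n * (C + ∑ j, ‖z j‖) := by
      rw [← nsmul_eq_mul, ← Finset.card_range n]
      conv_lhs => rw [Finset.card_range n]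
      refine Finset.sum_le_card_nsmul _ _ _ fun k _ => ?_
      refine (norm_sub_le _ _).trans (add_le_add (hC k) ?_)
      refine (norm_sum_le _ _).trans (Finset.sum_le_sum fun j _ => ?_)
      rw [norm_mul, norm_pow, hl, one_pow, mul_one]
    have h0 : 0 ≤ C + ∑ j, ‖z j‖ :=
      add_nonneg ((norm_nonneg _).trans (hC 0)) (Finset.sum_nonneg fun j _ => norm_nonneg _)
    rcases Nat.eq_zero_or_pos n with rfl | hn
    · simpa using h0
    · have hn' : (0:ℝ) < n := by exact_mod_cast hn
      rw [inv_mul_le_iff₀ hn']; exact h1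
  obtain ⟨N, hN⟩ := eventually_atTop.1 (eventually_lt_of_limsup_lt hlim hbdd)
  refine ⟨_, WA_trig hS z lam hl hg, N, ?_⟩
  have hk : ∀ᵐ x ∂μ, ∀ k : ℕ, |S^[k] g x| ≤ c :=
    ae_all_iff.2 fun k => map_bdd (isPosDS_iter hS k) hgc
  refine le_trans (le_of_eq ?_) zero_le
  refine measure_mono_null ?_ hk
  rintro x ⟨n, hn, hx⟩ hcon
  have hcon : ∀ k : ℕ, |S^[k] g x| ≤ c := hcon
  have e : WA S β g n x - WA S (fun k => ∑ j, z j * lam j ^ k) g n x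
      = WA S (fun k => β k - ∑ j, z j * lam j ^ k) g n x := by
    simp only [WA, ← mul_sub, ← Finset.sum_sub_distrib, sub_mul]
  rw [e] at hx
  have h1 := WA_norm_le (S := S) (fun k => β k - ∑ j, z j * lam j ^ k) g n x
  have h2 : (n : ℝ)⁻¹ * ∑ k ∈ Finset.range n, ‖β k - ∑ j, z j * lam j ^ k‖ * |S^[k] g x|
      ≤ ((n : ℝ)⁻¹ * ∑ k ∈ Finset.range n, ‖β k - ∑ j, z j * lam j ^ k‖) * c := by
    rw [mul_assoc, Finset.sum_mul]
    gcongr with k _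
    exact hcon k
  have h3 := hN n hn
  rw [lt_div_iff₀ (by positivity)] at h3
  have h4 : 0 ≤ (n : ℝ)⁻¹ * ∑ k ∈ Finset.range n, ‖β k - ∑ j, z j * lam j ^ k‖ := by positivity
  linarith

def HR (μ : Measure Ω) (g : Ω →ₘ[μ] ℝ) : Prop :=
  ∀ a : ℝ, 0 < a → ∫⁻ x, {x | a < |g x|}.indicator (fun x => ‖g x‖ₑ) x ∂μ ≠ ∞

theorem meas_cut (g : Ω →ₘ[μ] ℝ) (a : ℝ) : MeasurableSet {x | a < |g x|} :=
  measurableSet_lt measurable_const g.measurable.abs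

noncomputable def cut (g : Ω →ₘ[μ] ℝ) (a : ℝ) : Ω →ₘ[μ] ℝ :=
  AEEqFun.mk ({x | a < |g x|}.indicator (fun x => |g x|))
    (g.measurable.abs.indicator (meas_cut g a)).aestronglyMeasurable

theorem cut_coe (g : Ω →ₘ[μ] ℝ) (a : ℝ) :
    ∀ᵐ x ∂μ, cut g a x = {x | a < |g x|}.indicator (fun x => |g x|) x := AEEqFun.coeFn_mk _ _

theorem cut_nonneg (g : Ω →ₘ[μ] ℝ) (a : ℝ) : ∀ᵐ x ∂μ, 0 ≤ cut g a x := by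
  filter_upwards [cut_coe g a] with x hx
  rw [hx]; exact Set.indicator_nonneg (fun x _ => abs_nonneg _) x

theorem cut_int (g : Ω →ₘ[μ] ℝ) (a : ℝ) :
    ∫⁻ x, ‖cut g a x‖ₑ ∂μ = ∫⁻ x, {x | a < |g x|}.indicator (fun x => ‖g x‖ₑ) x ∂μ := by
  refine lintegral_congr_ae ?_
  filter_upwards [cut_coe g a] with x hx
  rw [hx]
  by_cases h : x ∈ {x | a < |g x|}
  · rw [Set.indicator_of_mem h, Set.indicator_of_mem h]; simp
  · rw [Set.indicator_of_notMem h, Set.indicator_of_notMem h]; simp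

theorem le_cut (g : Ω →ₘ[μ] ℝ) {a : ℝ} (ha : 0 ≤ a) : ∀ᵐ x ∂μ, |g x| ≤ cut g a x + a := by
  filter_upwards [cut_coe g a] with x hx
  rw [hx]
  by_cases h : x ∈ {x | a < |g x|}
  · rw [Set.indicator_of_mem h]; linarith
  · rw [Set.indicator_of_notMem h]
    have : |g x| ≤ a := not_lt.1 h
    linarith

theorem HR_mem {g : Ω →ₘ[μ] ℝ} (hg : HR μ g) : MemL1pLinf μ g :=
  mem_of_le (w := cut g 1) (a := 1) (by rw [cut_int]; exact hg 1 one_pos) (le_cut g zero_le_one)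

theorem cut_tendsto {g : Ω →ₘ[μ] ℝ} (hg : HR μ g) {a : ℝ} (ha : 0 < a) :
    Tendsto (fun N : ℕ => ∫⁻ x, ‖cut g (a + N) x‖ₑ ∂μ) atTop (𝓝 0) := by
  simp_rw [cut_int]
  have h := tendsto_lintegral_of_dominated_convergence
    (F := fun (N : ℕ) x => {x | a + N < |g x|}.indicator (fun x => ‖g x‖ₑ) x) (f := fun _ => 0)
    (μ := μ) ({x | a < |g x|}.indicator (fun x => ‖g x‖ₑ))
    (fun N => g.measurable.enorm.indicator (meas_cut g _))
    (fun N => Eventually.of_forall fun x => ?_) (hg a ha) (Eventually.of_forall fun x => ?_)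
  · simpa using h
  · refine Set.indicator_le_indicator_of_subset ?_ (fun _ => zero_le) x
    intro y hy
    have hy : a + N < |g y| := hy
    show a < |g y|
    have : (0:ℝ) ≤ N := Nat.cast_nonneg N
    linarith
  · refine tendsto_const_nhds.congr' ?_
    obtain ⟨N, hN⟩ := exists_nat_ge |g x|
    filter_upwards [eventually_ge_atTop N] with n hn
    rw [Set.indicator_of_notMem]
    intro hy
    have hy : a + n < |g x| := hy
    have : (N:ℝ) ≤ n := by exact_mod_cast hn
    linarith

theorem WA_R (hS : IsPosDS μ S) {β : ℕ → ℂ} (hβ : IsBesicovitch β)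
    {g : Ω →ₘ[μ] ℝ} (hg : HR μ g) : AUC μ (WA S β g) := by
  refine auc_of_approx fun δ hδ ε hε => ?_
  obtain ⟨C0, hC0⟩ := hβ.1
  obtain ⟨C, hCpos, hC⟩ : ∃ C : ℝ, 0 < C ∧ ∀ k, ‖β k‖ ≤ C :=
    ⟨|C0| + 1, by positivity, fun k => (hC0 k).trans (by linarith [le_abs_self C0])⟩
  set a := δ / (2 * C) with ha_def
  have ha : 0 < a := by positivity
  have hη : 0 < ε * ENNReal.ofReal a := ENNReal.mul_pos hε.ne' (by simpa using ha)
  obtain ⟨N, hN⟩ := (ENNReal.tendsto_nhds_zero.1 (cut_tendsto hg ha) _ hη).exists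
  have hN0 : (0:ℝ) ≤ N := Nat.cast_nonneg N
  set s : Set Ω := {x | a < |g x|} ∩ {x | a + N < |g x|}ᶜ with hs
  have hsm : MeasurableSet s := (meas_cut g a).inter (meas_cut g _).compl
  set gN : Ω →ₘ[μ] ℝ := AEEqFun.mk (s.indicator g) (g.measurable.indicator hsm).aestronglyMeasurable
    with hgN
  have hgNc : ∀ᵐ x ∂μ, gN x = s.indicator g x := AEEqFun.coeFn_mk _ _
  have hb : ∀ᵐ x ∂μ, |gN x| ≤ a + N := by
    filter_upwards [hgNc] with x hx
    rw [hx]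
    by_cases h : x ∈ s
    · rw [Set.indicator_of_mem h]; exact not_lt.1 h.2
    · rw [Set.indicator_of_notMem h, abs_zero]; positivity
  have hL2 : ∫⁻ x, ‖gN x‖ₑ ^ 2 ∂μ ≠ ∞ := by
    refine ne_top_of_le_ne_top (ENNReal.mul_ne_top (ENNReal.ofReal_ne_top (r := a + N)) (hg a ha)) ?_
    rw [← lintegral_const_mul' _ _ ENNReal.ofReal_ne_top]
    refine lintegral_mono_ae ?_
    filter_upwards [hgNc, hb] with x hx hx2
    rw [pow_two]
    refine mul_le_mul' ?_ ?_
    · rw [← ofReal_norm]; exact ENNReal.ofReal_le_ofReal hx2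
    · rw [hx]
      by_cases h : x ∈ s
      · rw [Set.indicator_of_mem h, Set.indicator_of_mem h.1]
      · rw [Set.indicator_of_notMem h]; simp
  refine ⟨_, WA_bdd hS hβ hL2 (by positivity : 0 ≤ a + N) hb, 0, ?_⟩
  have hgm := HR_mem hg
  have hgNm := sq_mem hL2
  have hcutfin : ∫⁻ x, ‖cut g (a + N) x‖ₑ ∂μ ≠ ∞ := by
    rw [cut_int]; exact hg _ (by positivity)
  have hmax := maximal' hS (g := g - gN) (w := cut g (a + N)) ha.le ha (mem_sub hgm hgNm) hcutfin
    (cut_nonneg g _) (by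
      filter_upwards [cut_coe g (a + N), hgNc, AEEqFun.coeFn_sub g gN] with x h1 h2 h3
      rw [h1, h3, Pi.sub_apply, h2]
      by_cases h : x ∈ s
      · rw [Set.indicator_of_mem h, sub_self, abs_zero]
        exact add_nonneg (Set.indicator_nonneg (fun x _ => abs_nonneg _) x) ha.le
      · rw [Set.indicator_of_notMem h, sub_zero]
        by_cases h' : x ∈ {x | a + N < |g x|}
        · rw [Set.indicator_of_mem h']; linarith
        · rw [Set.indicator_of_notMem h', zero_add]
          by_contra hcc
          exact h ⟨not_le.1 hcc, h'⟩)
  have hfin : (∫⁻ x, ‖cut g (a + N) x‖ₑ ∂μ) / ENNReal.ofReal a ≤ ε :=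
    ENNReal.div_le_of_le_mul hN
  refine le_trans (measure_mono_ae ?_) (hmax.trans hfin)
  have hsub : ∀ᵐ x ∂μ, ∀ k : ℕ, S^[k] (g - gN) x = S^[k] g x - S^[k] gN x := by
    refine ae_all_iff.2 fun k => ?_
    rw [map_sub (isPosDS_iter hS k) hgm hgNm]
    exact AEEqFun.coeFn_sub _ _
  filter_upwards [hsub] with x hx
  rintro ⟨n, -, h⟩
  refine ⟨n, ?_⟩
  have e : WA S β g n x - WA S β gN n x = WA S β (g - gN) n x := by
    simp only [WA, ← mul_sub, ← Finset.sum_sub_distrib, hx]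
    push_cast; rfl
  rw [e] at h
  have h1 := h.trans_le (WA_norm_le (S := S) β (g - gN) n x)
  have h2 : ∑ k ∈ Finset.range n, ‖β k‖ * |S^[k] (g - gN) x|
      ≤ C * ∑ k ∈ Finset.range n, |S^[k] (g - gN) x| := by
    rw [Finset.mul_sum]
    gcongr with k _
    exact hC k
  rcases Nat.eq_zero_or_pos n with rfl | hn
  · simp at h1; linarith
  · have hn' : (0:ℝ) < n := by exact_mod_cast hn
    rw [inv_mul_eq_div, lt_div_iff₀ hn'] at h1
    have h3 : δ * n < C * ∑ k ∈ Finset.range n, |S^[k] (g - gN) x| := h1.trans_le h2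
    have h4 : δ = C * (a + a) := by rw [ha_def]; field_simp; norm_num
    rw [h4, mul_assoc] at h3
    exact lt_of_mul_lt_mul_left h3 hCpos.le

theorem WA_dom (hS : IsPosDS μ S) {β : ℕ → ℂ} {C : ℝ} (hCpos : 0 < C) (hC : ∀ k, ‖β k‖ ≤ C)
    {g : Ω →ₘ[μ] ℝ} (hg : HR μ g) {a : ℝ} (ha : 0 < a) :
    ∃ v : ℕ → Ω → ℝ≥0∞, (∀ n, Measurable (v n)) ∧ (∃ K : ℝ≥0∞, K ≠ ∞ ∧ ∀ n, ∫⁻ x, v n x ∂μ ≤ K) ∧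
      ∀ᵐ x ∂μ, ∀ n, ‖WA S β g n x‖ₑ ≤ v n x + ENNReal.ofReal a := by
  set b := a / C with hb_def
  have hb : 0 < b := by positivity
  have hw : ∫⁻ x, ‖cut g b x‖ₑ ∂μ ≠ ∞ := by rw [cut_int]; exact hg _ hb
  refine ⟨fun n x => ∑ k ∈ Finset.range n, ENNReal.ofReal (C * (n:ℝ)⁻¹) * ‖S^[k] (cut g b) x‖ₑ,
    fun n => Finset.measurable_sum _ fun k _ => (S^[k] (cut g b)).measurable.enorm.const_mul _,
    ⟨ENNReal.ofReal C * ∫⁻ x, ‖cut g b x‖ₑ ∂μ, ENNReal.mul_ne_top ENNReal.ofReal_ne_top hw, fun n => ?_⟩, ?_⟩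
  · rw [lintegral_finsetSum _ fun k _ => (S^[k] (cut g b)).measurable.enorm.const_mul _]
    have h1 : ∀ k ∈ Finset.range n,
        ∫⁻ x, ENNReal.ofReal (C * (n:ℝ)⁻¹) * ‖S^[k] (cut g b) x‖ₑ ∂μ
          ≤ ENNReal.ofReal (C * (n:ℝ)⁻¹) * ∫⁻ x, ‖cut g b x‖ₑ ∂μ := by
      intro k _
      rw [lintegral_const_mul' _ _ ENNReal.ofReal_ne_top]
      gcongr 1
      exact map_L1 (isPosDS_iter hS k) hw
    refine (Finset.sum_le_sum h1).trans ?_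
    rw [Finset.sum_const, Finset.card_range, nsmul_eq_mul, ← mul_assoc]
    gcongr
    rw [← ENNReal.ofReal_natCast, ← ENNReal.ofReal_mul (by positivity)]
    refine ENNReal.ofReal_le_ofReal ?_
    rcases Nat.eq_zero_or_pos n with rfl | hn
    · simpa using hCpos.le
    · have hn' : (0:ℝ) < n := by exact_mod_cast hn
      apply le_of_eq; field_simp
  · have hk : ∀ᵐ x ∂μ, ∀ k : ℕ, |S^[k] g x| ≤ S^[k] (cut g b) x + b :=
      ae_all_iff.2 fun k => map_abs_le (isPosDS_iter hS k) hb.le (HR_mem hg) (mem_L1 hw) (le_cut g hb.le)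
    filter_upwards [hk] with x hx n
    have h1 : ‖WA S β g n x‖ ≤ ∑ k ∈ Finset.range n, (C * (n:ℝ)⁻¹) * |S^[k] (cut g b) x| + a := by
      refine (WA_norm_le (S := S) β g n x).trans ?_
      have h2 : ∑ k ∈ Finset.range n, ‖β k‖ * |S^[k] g x|
          ≤ ∑ k ∈ Finset.range n, (C * |S^[k] (cut g b) x| + a) := by
        refine Finset.sum_le_sum fun k _ => ?_
        have h3 : a = C * b := by rw [hb_def]; field_simp
        rw [h3, ← mul_add]
        refine mul_le_mul (hC k) ((hx k).trans ?_) (abs_nonneg _) hCpos.le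
        gcongr
        exact le_abs_self _
      rw [Finset.sum_add_distrib, Finset.sum_const, Finset.card_range, nsmul_eq_mul] at h2
      calc _ ≤ (n:ℝ)⁻¹ * (∑ k ∈ Finset.range n, C * |S^[k] (cut g b) x| + n * a) := by gcongr
        _ ≤ _ := by
          rw [mul_add, Finset.mul_sum]
          refine add_le_add (le_of_eq (Finset.sum_congr rfl fun k _ => by ring)) ?_
          rcases Nat.eq_zero_or_pos n with rfl | hn
          · simpa using ha.le
          · have hn' : (0:ℝ) < n := by exact_mod_cast hn
            apply le_of_eq; field_simp
    rw [← ofReal_norm]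
    refine (ENNReal.ofReal_le_ofReal h1).trans ?_
    rw [ENNReal.ofReal_add (Finset.sum_nonneg fun k _ => by positivity) ha.le,
      ENNReal.ofReal_sum_of_nonneg fun k _ => by positivity]
    gcongr with k _
    rw [ENNReal.ofReal_mul (by positivity)]
    gcongr
    exact (Real.enorm_eq_ofReal_abs _).ge

end Bes

namespace Bes
variable {μ : Measure Ω} {S : (Ω →ₘ[μ] ℝ) → (Ω →ₘ[μ] ℝ)}

theorem HR_of {f : Ω →ₘ[μ] ℂ} (hf : MemRmuC μ f) {g : Ω →ₘ[μ] ℝ}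
    (hg : ∀ᵐ x ∂μ, |g x| ≤ ‖f x‖) : HR μ g := by
  intro a ha
  obtain ⟨⟨g1, h1, e1, e2, e3⟩, hfin⟩ := hf
  obtain ⟨w, b, hb, hw0, hwm, hw, hle⟩ := bound_of_decomp μ f g1 h1 e1 e2 e3
  have hms : MeasurableSet {x | a < ‖f x‖} :=
    measurableSet_lt measurable_const f.stronglyMeasurable.norm.measurable
  have key : ∫⁻ x, {x | a < |g x|}.indicator (fun x => ‖g x‖ₑ) x ∂μ ≤
      ∫⁻ x, (‖w x‖ₑ + {x | a < ‖f x‖}.indicator (fun _ => ENNReal.ofReal b) x) ∂μ := by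
    refine lintegral_mono_ae ?_
    filter_upwards [hg, hle] with x h1 h2
    by_cases h : a < |g x|
    · have h' : a < ‖f x‖ := h.trans_le h1
      rw [indicator_of_mem (by exact h), indicator_of_mem (by exact h'),
        Real.enorm_eq_ofReal (hw0 x), ← ENNReal.ofReal_add (hw0 x) hb, Real.enorm_eq_ofReal_abs]
      exact ENNReal.ofReal_le_ofReal (h1.trans h2)
    · rw [indicator_of_notMem (by exact h)]; exact zero_le
  refine ne_top_of_le_ne_top ?_ key
  rw [lintegral_add_left hwm.enorm, lintegral_indicator_const hms]
  exact ENNReal.add_ne_top.2 ⟨hw, ENNReal.mul_ne_top ENNReal.ofReal_ne_top (hfin a ha).ne⟩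

theorem T_iter (hS : IsPosDS μ S) {T : (Ω →ₘ[μ] ℂ) → (Ω →ₘ[μ] ℂ)}
    (hTS : ∀ g h : Ω →ₘ[μ] ℝ, MemL1pLinf μ g → MemL1pLinf μ h →
      T (ofRealAE μ g + Complex.I • ofRealAE μ h)
        = ofRealAE μ (S g) + Complex.I • ofRealAE μ (S h))
    {f : Ω →ₘ[μ] ℂ} (h1 : MemL1pLinf μ (reAE f)) (h2 : MemL1pLinf μ (imAE f)) (k : ℕ) :
    T^[k] f = TC (S^[k]) f := by
  induction k with
  | zero => exact (comb_re_im f).symm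
  | succ k ih =>
    rw [Function.iterate_succ_apply', ih]
    unfold TC
    rw [hTS _ _ (mem_map (isPosDS_iter hS k) h1) (mem_map (isPosDS_iter hS k) h2),
      Function.iterate_succ_apply', Function.iterate_succ_apply']

theorem avg_coe (hS : IsPosDS μ S) {T : (Ω →ₘ[μ] ℂ) → (Ω →ₘ[μ] ℂ)}
    (hTS : ∀ g h : Ω →ₘ[μ] ℝ, MemL1pLinf μ g → MemL1pLinf μ h →
      T (ofRealAE μ g + Complex.I • ofRealAE μ h)
        = ofRealAE μ (S g) + Complex.I • ofRealAE μ (S h))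
    {f : Ω →ₘ[μ] ℂ} (h1 : MemL1pLinf μ (reAE f)) (h2 : MemL1pLinf μ (imAE f)) (β : ℕ → ℂ) (n : ℕ) :
    ∀ᵐ x ∂μ, besicovitchAvg μ T β n f x =
      WA S β (reAE f) n x + Complex.I * WA S β (imAE f) n x := by
  have hk : ∀ᵐ x ∂μ, ∀ k, (β k • T^[k] f) x = β k *
      ((S^[k] (reAE f) x : ℂ) + Complex.I * (S^[k] (imAE f) x : ℂ)) := by
    refine ae_all_iff.2 fun k => ?_
    filter_upwards [AEEqFun.coeFn_smul (β k) (T^[k] f), TC_coe (S := S^[k]) f] with x e1 e2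
    rw [e1, Pi.smul_apply, T_iter hS hTS h1 h2, e2, smul_eq_mul]
  filter_upwards [hk, AEEqFun.coeFn_smul (n : ℂ)⁻¹ (∑ k ∈ Finset.range n, β k • T^[k] f),
    AEEqFun.coeFn_fun_finsetSum (μ := μ) (Finset.range n) (fun k => β k • T^[k] f)] with x e1 e2 e3
  unfold besicovitchAvg
  rw [e2, Pi.smul_apply, e3, smul_eq_mul]
  simp only [e1, WA, mul_add, Finset.sum_add_distrib, Finset.mul_sum]
  congr 1
  exact Finset.sum_congr rfl fun k _ => by ring

theorem lim_dom {u v : ℕ → Ω → ℂ} {f : Ω →ₘ[μ] ℂ} {F : ℕ → Ω →ₘ[μ] ℂ}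
    (hF : ∀ n, ∀ᵐ x ∂μ, F n x = u n x + Complex.I * v n x)
    (hlim : ∀ᵐ x ∂μ, Tendsto (fun n => F n x) atTop (𝓝 (f x)))
    {a : ℝ} (ha : 0 < a)
    (hu : ∃ v : ℕ → Ω → ℝ≥0∞, (∀ n, Measurable (v n)) ∧
      (∃ K : ℝ≥0∞, K ≠ ∞ ∧ ∀ n, ∫⁻ x, v n x ∂μ ≤ K) ∧
      ∀ᵐ x ∂μ, ∀ n, ‖u n x‖ₑ ≤ v n x + ENNReal.ofReal a)
    (hv : ∃ w : ℕ → Ω → ℝ≥0∞, (∀ n, Measurable (w n)) ∧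
      (∃ K : ℝ≥0∞, K ≠ ∞ ∧ ∀ n, ∫⁻ x, w n x ∂μ ≤ K) ∧
      ∀ᵐ x ∂μ, ∀ n, ‖v n x‖ₑ ≤ w n x + ENNReal.ofReal a) :
    ∃ V : Ω → ℝ≥0∞, Measurable V ∧ ∫⁻ x, V x ∂μ ≠ ∞ ∧
      ∀ᵐ x ∂μ, ‖f x‖ₑ ≤ V x + ENNReal.ofReal (2 * a) := by
  obtain ⟨p, hpm, ⟨K, hK, hpK⟩, hp⟩ := hu
  obtain ⟨q, hqm, ⟨L, hL, hqL⟩, hq⟩ := hv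
  refine ⟨fun x => liminf (fun n => p n x + q n x) atTop,
    Measurable.liminf fun n => (hpm n).add (hqm n), ?_, ?_⟩
  · refine ne_top_of_le_ne_top (ENNReal.add_ne_top.2 ⟨hK, hL⟩)
      ((lintegral_liminf_le fun n => (hpm n).add (hqm n)).trans ?_)
    refine liminf_le_of_le (by isBoundedDefault) fun b hb => ?_
    obtain ⟨n, hn⟩ := hb.exists
    refine hn.trans ?_
    simp only [Pi.add_apply]
    rw [lintegral_add_left (hpm n)]
    exact add_le_add (hpK n) (hqL n)
  · filter_upwards [ae_all_iff.2 hF, hlim, hp, hq] with x h1 h2 h3 h4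
    have h5 : ∀ n, ‖F n x‖ₑ ≤ (p n x + q n x) + ENNReal.ofReal (2 * a) := by
      intro n
      rw [h1 n]
      refine (enorm_add_le _ _).trans ?_
      rw [enorm_mul, show ‖Complex.I‖ₑ = 1 by rw [← ofReal_norm]; simp, one_mul, two_mul,
        ENNReal.ofReal_add ha.le ha.le]
      refine (add_le_add (h3 n) (h4 n)).trans (le_of_eq ?_)
      ring
    rw [← tsub_le_iff_right]
    have h6 : Tendsto (fun n => ‖F n x‖ₑ - ENNReal.ofReal (2 * a)) atTop
        (𝓝 (‖f x‖ₑ - ENNReal.ofReal (2 * a))) :=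
      ENNReal.Tendsto.sub h2.enorm tendsto_const_nhds (Or.inr ENNReal.ofReal_ne_top)
    rw [← h6.liminf_eq]
    refine liminf_le_liminf (Eventually.of_forall fun n => ?_)
    exact tsub_le_iff_right.2 (h5 n)

end Bes

/-- **Commutative case of Theorem 4.7**: let `μ` be σ-finite with `L¹(μ)` separable,
let `T` be (the complex-linear extension of) a positive Dunford–Schwartz operator and
`(β_k)` a bounded Besicovitch sequence.  Then for every `f ∈ R_μ` the weighted averages
`B_n(f) = (1/n) ∑_{k<n} β_k T^k f` converge almost uniformly to some `f̂ ∈ R_μ`. -/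
theorem besicovitch_weighted_au (μ : Measure Ω) [SigmaFinite μ]
    [TopologicalSpace.SeparableSpace (Lp ℂ 1 μ)]
    (T : (Ω →ₘ[μ] ℂ) → (Ω →ₘ[μ] ℂ))
    (S : (Ω →ₘ[μ] ℝ) → (Ω →ₘ[μ] ℝ)) (hS : IsPosDS μ S)
    (hTS : ∀ g h : Ω →ₘ[μ] ℝ, MemL1pLinf μ g → MemL1pLinf μ h →
      T (ofRealAE μ g + Complex.I • ofRealAE μ h)
        = ofRealAE μ (S g) + Complex.I • ofRealAE μ (S h))
    (β : ℕ → ℂ) (hβ : IsBesicovitch β)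
    (f : Ω →ₘ[μ] ℂ) (hf : MemRmuC μ f) :
    ∃ fhat : Ω →ₘ[μ] ℂ, MemRmuC μ fhat ∧
      AuTendstoC μ atTop (fun n => besicovitchAvg μ T β n f) fhat := by
  have hr : Bes.HR μ (Bes.reAE f) := Bes.HR_of hf (by
    filter_upwards [Bes.reAE_coe f] with x hx
    rw [hx]; exact Complex.abs_re_le_norm _)
  have hi : Bes.HR μ (Bes.imAE f) := Bes.HR_of hf (by
    filter_upwards [Bes.imAE_coe f] with x hx
    rw [hx]; exact Complex.abs_im_le_norm _)
  have hF := Bes.avg_coe hS hTS (Bes.HR_mem hr) (Bes.HR_mem hi) β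
  have hauc : Bes.AUC μ (fun n => besicovitchAvg μ T β n f) :=
    Bes.auc_congr (Bes.auc_add (Bes.WA_R hS hβ hr) (Bes.auc_smul (Bes.WA_R hS hβ hi) Complex.I))
      (Eventually.of_forall hF)
  obtain ⟨fhat, hlim, hau⟩ := Bes.auc_limit hauc
  refine ⟨fhat, ?_, hau⟩
  obtain ⟨C0, hC0⟩ := hβ.1
  obtain ⟨C, hCpos, hC⟩ : ∃ C : ℝ, 0 < C ∧ ∀ k, ‖β k‖ ≤ C :=
    ⟨|C0| + 1, by positivity, fun k => (hC0 k).trans (by linarith [le_abs_self C0])⟩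
  have key : ∀ a : ℝ, 0 < a → ∃ V : Ω → ℝ≥0∞, Measurable V ∧ ∫⁻ x, V x ∂μ ≠ ∞ ∧
      ∀ᵐ x ∂μ, ‖fhat x‖ₑ ≤ V x + ENNReal.ofReal (2 * a) := fun a ha =>
    Bes.lim_dom hF hlim ha (Bes.WA_dom hS hCpos hC hr ha) (Bes.WA_dom hS hCpos hC hi ha)
  constructor
  · obtain ⟨V, hVm, hV, hle⟩ := key 1 one_pos
    have hfin := ae_lt_top hVm hV
    refine Bes.decomp μ fhat (fun x => (V x).toReal) 2 (ne_top_of_le_ne_top hV ?_) ?_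
    · refine lintegral_mono fun x => ?_
      rw [Real.enorm_eq_ofReal ENNReal.toReal_nonneg]
      exact ENNReal.ofReal_toReal_le
    · filter_upwards [hle, hfin] with x h1 h2
      have h3 : ‖fhat x‖ₑ ≤ ENNReal.ofReal ((V x).toReal + 2) := by
        rw [ENNReal.ofReal_add ENNReal.toReal_nonneg zero_le_two, ENNReal.ofReal_toReal h2.ne]
        simpa using h1
      rw [← ofReal_norm] at h3
      exact (ENNReal.ofReal_le_ofReal_iff (by positivity)).1 h3
  · intro lam hlam
    obtain ⟨V, hVm, hV, hle⟩ := key (lam / 4) (by positivity)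
    have h0 : ENNReal.ofReal (lam / 2) ≠ 0 := by simpa using hlam
    refine lt_of_le_of_lt ?_ (lt_of_le_of_lt
      (meas_ge_le_lintegral_div hVm.aemeasurable h0 ENNReal.ofReal_ne_top)
      (ENNReal.div_lt_top hV h0))
    refine measure_mono_ae ?_
    filter_upwards [hle] with x h1 h2
    have h2' : lam < ‖fhat x‖ := h2
    change ENNReal.ofReal (lam / 2) ≤ V x
    have h3 : ENNReal.ofReal (lam / 2) + ENNReal.ofReal (lam / 2) ≤
        V x + ENNReal.ofReal (lam / 2) := by
      rw [← ENNReal.ofReal_add (by positivity) (by positivity), add_halves]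
      calc ENNReal.ofReal lam ≤ ENNReal.ofReal ‖fhat x‖ := ENNReal.ofReal_le_ofReal h2'.le
        _ = ‖fhat x‖ₑ := ofReal_norm _
        _ ≤ _ := h1
        _ = _ := by congr 2; ring
    exact (ENNReal.add_le_add_iff_right ENNReal.ofReal_ne_top).1 h3
end

section
/- Let (Ω, 𝒜, μ) be a σ-finite measure space, d ∈ ℕ, and T₁,…,T_d positive Dunford–Schwartz operators. Given 1 < p ≤ 2, for every f ∈ L^p(μ) the multiparameter averages A_n(f) converge almost uniformly as n → ∞ (unrestrictedly, i.e. along the net of all n = (n₁,…,n_d) ∈ ℕ^d with every coordinate tending to ∞). -/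
open MeasureTheory Filter Set ENNReal Topology

variable {Ω : Type*} [MeasurableSpace Ω]

/-- The Cesàro averages `A_n(f) = (1/n) ∑_{k<n} T^k f`. -/
noncomputable def cesaro (μ : Measure Ω) (T : (Ω →ₘ[μ] ℝ) → (Ω →ₘ[μ] ℝ)) (n : ℕ)
    (f : Ω →ₘ[μ] ℝ) : Ω →ₘ[μ] ℝ :=
  (n : ℝ)⁻¹ • ∑ k ∈ Finset.range n, T^[k] f

/-- Almost uniform convergence of a net `F` to `f`. -/
def AuTendsto {ι : Type*} (μ : Measure Ω) (l : Filter ι) (F : ι → Ω →ₘ[μ] ℝ)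
    (f : Ω →ₘ[μ] ℝ) : Prop :=
  ∀ ε : ℝ, 0 < ε → ∃ E : Set Ω, MeasurableSet E ∧ μ Eᶜ ≤ ENNReal.ofReal ε ∧
    Tendsto (fun i => eLpNorm (E.indicator (⇑(F i - f))) ⊤ μ) l (𝓝 0)

/-- `R_μ`: elements of `L¹+L^∞` whose distribution tails are finite. -/
def MemRmu (μ : Measure Ω) (f : Ω →ₘ[μ] ℝ) : Prop :=
  MemL1pLinf μ f ∧ ∀ lam : ℝ, 0 < lam → μ {ω | lam < |f ω|} < ∞

/-- `T₁^{k₁} ∘ ⋯ ∘ T_d^{k_d}` for a family `T` of operators. -/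
def iterComp {E : Type*} {d : ℕ} (T : Fin d → E → E) (k : Fin d → ℕ) : E → E :=
  (List.ofFn fun i => (T i)^[k i]).foldr (· ∘ ·) id

/-- The multiparameter averages
`A_n(f) = (n₁⋯n_d)⁻¹ ∑_{i₁<n₁} ⋯ ∑_{i_d<n_d} T₁^{i₁}⋯T_d^{i_d} f`. -/
noncomputable def multiAvg (μ : Measure Ω) {d : ℕ}
    (T : Fin d → (Ω →ₘ[μ] ℝ) → (Ω →ₘ[μ] ℝ)) (n : Fin d → ℕ)
    (f : Ω →ₘ[μ] ℝ) : Ω →ₘ[μ] ℝ :=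
  (∏ i, (n i : ℝ))⁻¹ •
    ∑ k ∈ Fintype.piFinset (fun i => Finset.range (n i)), iterComp T k f


namespace MPE

/-- the space `L¹+L^∞` as a submodule -/
def LL (μ : Measure Ω) : Submodule ℝ (Ω →ₘ[μ] ℝ) where
  carrier := {f | MemL1pLinf μ f}
  zero_mem' := ⟨0, 0, by
    rw [eLpNorm_congr_ae AEEqFun.coeFn_zero]; simp, by
    rw [eLpNorm_congr_ae AEEqFun.coeFn_zero]; simp, by simp⟩
  add_mem' := by
    rintro a b ⟨g, h, hg, hh, rfl⟩ ⟨g', h', hg', hh', rfl⟩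
    refine ⟨g + g', h + h', ?_, ?_, by abel⟩
    · rw [eLpNorm_congr_ae (AEEqFun.coeFn_add _ _)]
      exact ((eLpNorm_add_le g.aestronglyMeasurable g'.aestronglyMeasurable le_rfl).trans_lt
        (ENNReal.add_lt_top.2 ⟨hg.lt_top, hg'.lt_top⟩)).ne
    · rw [eLpNorm_congr_ae (AEEqFun.coeFn_add _ _)]
      exact ((eLpNorm_add_le h.aestronglyMeasurable h'.aestronglyMeasurable le_top).trans_lt
        (ENNReal.add_lt_top.2 ⟨hh.lt_top, hh'.lt_top⟩)).ne
  smul_mem' := by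
    rintro c a ⟨g, h, hg, hh, rfl⟩
    refine ⟨c • g, c • h, ?_, ?_, by simp⟩
    · rw [eLpNorm_congr_ae (AEEqFun.coeFn_smul _ _), eLpNorm_const_smul]
      exact ENNReal.mul_ne_top (by simp) hg
    · rw [eLpNorm_congr_ae (AEEqFun.coeFn_smul _ _), eLpNorm_const_smul]
      exact ENNReal.mul_ne_top (by simp) hh

variable {μ : Measure Ω}

lemma coe_add (f g : LL μ) : ∀ᵐ x ∂μ, (f + g).1 x = f.1 x + g.1 x :=
  AEEqFun.coeFn_add f.1 g.1
lemma coe_sub (f g : LL μ) : ∀ᵐ x ∂μ, (f - g).1 x = f.1 x - g.1 x :=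
  AEEqFun.coeFn_sub f.1 g.1
lemma coe_neg (f : LL μ) : ∀ᵐ x ∂μ, (-f).1 x = -f.1 x :=
  AEEqFun.coeFn_neg f.1
lemma coe_smul (c : ℝ) (f : LL μ) : ∀ᵐ x ∂μ, (c • f).1 x = c * f.1 x :=
  AEEqFun.coeFn_smul c f.1
lemma coe_zero : ∀ᵐ x ∂μ, (0 : LL μ).1 x = 0 :=
  AEEqFun.coeFn_zero
lemma meas (f : LL μ) : Measurable (f.1 : Ω → ℝ) := f.1.measurable
lemma aesm (f : LL μ) : AEStronglyMeasurable (f.1 : Ω → ℝ) μ := f.1.aestronglyMeasurable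

lemma LL_ext {f g : LL μ} (h : ∀ᵐ x ∂μ, f.1 x = g.1 x) : f = g :=
  Subtype.ext (AEEqFun.ext h)

lemma exLL (u v : Ω → ℝ) (hu : MemLp u 1 μ) (hv : MemLp v ⊤ μ) :
    ∃ f : LL μ, ∀ᵐ x ∂μ, f.1 x = u x + v x := by
  have e1 := AEEqFun.coeFn_mk u hu.1
  have e2 := AEEqFun.coeFn_mk v hv.1
  refine ⟨⟨AEEqFun.mk u hu.1 + AEEqFun.mk v hv.1, _, _, ?_, ?_, rfl⟩, ?_⟩
  · rw [eLpNorm_congr_ae e1]; exact hu.2.ne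
  · rw [eLpNorm_congr_ae e2]; exact hv.2.ne
  · filter_upwards [e1, e2, AEEqFun.coeFn_add (AEEqFun.mk u hu.1) (AEEqFun.mk v hv.1)] with x h1 h2 h3
    rw [h3, Pi.add_apply, h1, h2]

lemma exLp {p : ℝ≥0∞} (hp : 1 ≤ p) (u : Ω → ℝ) (hu : MemLp u p μ) :
    ∃ f : LL μ, ∀ᵐ x ∂μ, f.1 x = u x := by
  by_cases hpt : p = ⊤
  · subst hpt
    obtain ⟨f, hf⟩ := exLL (μ := μ) 0 u (MemLp.zero) hu
    exact ⟨f, by simpa using hf⟩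
  obtain ⟨v, hv, huv⟩ := hu.1
  have hv' : MemLp v p μ := (memLp_congr_ae huv).1 hu
  have hm : MeasurableSet {x | 1 < |v x|} :=
    measurableSet_lt measurable_const hv.measurable.abs
  have h1 : MemLp ({x | 1 < |v x|}.indicator v) 1 μ := by
    refine ⟨hv.aestronglyMeasurable.indicator hm, ?_⟩
    rw [eLpNorm_one_eq_lintegral_enorm]
    have := hv'.2
    rw [eLpNorm_lt_top_iff_lintegral_rpow_enorm_lt_top (by positivity) hpt] at this
    refine lt_of_le_of_lt (lintegral_mono fun x => ?_) this
    by_cases hx : 1 < |v x|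
    · rw [indicator_of_mem (by exact hx)]
      have h1 : (1 : ℝ≥0∞) ≤ ‖v x‖ₑ := by
        rw [Real.enorm_eq_ofReal_abs, ENNReal.one_le_ofReal]; exact hx.le
      have hp1 : 1 ≤ p.toReal := by
        rw [← ENNReal.toReal_one]; exact ENNReal.toReal_mono hpt hp
      simpa using ENNReal.rpow_le_rpow_of_exponent_le h1 hp1
    · rw [indicator_of_notMem (by exact hx)]; simp
  have h2 : MemLp ({x | 1 < |v x|}ᶜ.indicator v) ⊤ μ := by
    refine memLp_top_of_bound (hv.aestronglyMeasurable.indicator hm.compl) 1 (ae_of_all _ fun x => ?_)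
    by_cases hx : 1 < |v x|
    · rw [indicator_of_notMem (by simpa using hx)]; simp
    · rw [indicator_of_mem (by exact hx)]; simpa using hx
  obtain ⟨f, hf⟩ := exLL _ _ h1 h2
  refine ⟨f, ?_⟩
  filter_upwards [hf, huv] with x h3 h4
  rw [h3, h4]
  exact congrFun (Set.indicator_self_add_compl {x | 1 < |v x|} v) x

/-- positive DS operator on `LL` -/
structure DS (T : Module.End ℝ (LL μ)) : Prop where
  pos : ∀ f : LL μ, (∀ᵐ x ∂μ, 0 ≤ f.1 x) → ∀ᵐ x ∂μ, 0 ≤ (T f).1 x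
  norm_one : ∀ f : LL μ, eLpNorm (T f).1 1 μ ≤ eLpNorm f.1 1 μ
  norm_top : ∀ f : LL μ, eLpNorm (T f).1 ⊤ μ ≤ eLpNorm f.1 ⊤ μ

lemma memLL_map {T : (Ω →ₘ[μ] ℝ) → (Ω →ₘ[μ] ℝ)} (hT : IsPosDS μ T) {f : Ω →ₘ[μ] ℝ}
    (hf : MemL1pLinf μ f) : MemL1pLinf μ (T f) := by
  have h0 : eLpNorm (0 : Ω →ₘ[μ] ℝ) 1 μ ≠ ∞ := by
    rw [eLpNorm_congr_ae AEEqFun.coeFn_zero]; simp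
  have h0' : eLpNorm (0 : Ω →ₘ[μ] ℝ) ⊤ μ ≠ ∞ := by
    rw [eLpNorm_congr_ae AEEqFun.coeFn_zero]; simp
  obtain ⟨g, h, hg, hh, rfl⟩ := hf
  have mg : MemL1pLinf μ g := ⟨g, 0, hg, h0', by simp⟩
  have mh : MemL1pLinf μ h := ⟨0, h, h0, hh, by simp⟩
  exact ⟨T g, T h, ((hT.norm_one g mg).trans_lt hg.lt_top).ne,
    ((hT.norm_top h mh).trans_lt hh.lt_top).ne, hT.map_add g h mg mh⟩

lemma exists_DS {T : (Ω →ₘ[μ] ℝ) → (Ω →ₘ[μ] ℝ)} (hT : IsPosDS μ T) :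
    ∃ S : Module.End ℝ (LL μ), DS S ∧ ∀ f : LL μ, (S f).1 = T f.1 := by
  refine ⟨{ toFun := fun f => ⟨T f.1, memLL_map hT f.2⟩
            map_add' := fun f g => Subtype.ext (hT.map_add f.1 g.1 f.2 g.2)
            map_smul' := fun c f => Subtype.ext (hT.map_smul c f.1 f.2) }, ⟨?_, ?_, ?_⟩, fun f => rfl⟩
  · intro f hf
    have : (0 : Ω →ₘ[μ] ℝ) ≤ f.1 := by
      rw [← AEEqFun.coeFn_le]
      filter_upwards [hf, AEEqFun.coeFn_zero (α := Ω) (μ := μ) (β := ℝ)] with x h1 h2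
      rw [h2]; exact h1
    have := hT.map_pos f.1 f.2 this
    rw [← AEEqFun.coeFn_le] at this
    filter_upwards [this, AEEqFun.coeFn_zero (α := Ω) (μ := μ) (β := ℝ)] with x h1 h2
    rw [h2] at h1; exact h1
  · exact fun f => hT.norm_one f.1 f.2
  · exact fun f => hT.norm_top f.1 f.2

/-- positive operators -/
def PosOp (A : Module.End ℝ (LL μ)) : Prop :=
  ∀ f : LL μ, (∀ᵐ x ∂μ, 0 ≤ f.1 x) → ∀ᵐ x ∂μ, 0 ≤ (A f).1 x

lemma PosOp.mono {A : Module.End ℝ (LL μ)} (hA : PosOp A) {f g : LL μ}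
    (h : ∀ᵐ x ∂μ, f.1 x ≤ g.1 x) : ∀ᵐ x ∂μ, (A f).1 x ≤ (A g).1 x := by
  have h1 := hA (g - f) (by
    filter_upwards [h, coe_sub g f] with x h1 h2
    rw [h2]; linarith)
  rw [map_sub] at h1
  filter_upwards [h1, coe_sub (A g) (A f)] with x h1 h2
  rw [h2] at h1; linarith

lemma PosOp.abs_le {A : Module.End ℝ (LL μ)} (hA : PosOp A) {f g : LL μ}
    (h : ∀ᵐ x ∂μ, |f.1 x| ≤ g.1 x) : ∀ᵐ x ∂μ, |(A f).1 x| ≤ (A g).1 x := by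
  have h1 := hA.mono (f := f) (g := g) (by
    filter_upwards [h] with x hx using (le_abs_self _).trans hx)
  have h2 := hA.mono (f := -f) (g := g) (by
    filter_upwards [h, coe_neg f] with x hx h3
    rw [h3]; exact (neg_le_abs _).trans hx)
  rw [map_neg] at h2
  filter_upwards [h1, h2, coe_neg (A f)] with x h1 h2 h3
  rw [h3] at h2
  exact abs_le'.2 ⟨h1, h2⟩

lemma PosOp.one : PosOp (1 : Module.End ℝ (LL μ)) := fun _ hf => hf

lemma PosOp.mul {A B : Module.End ℝ (LL μ)} (hA : PosOp A) (hB : PosOp B) : PosOp (A * B) :=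
  fun f hf => hA _ (hB f hf)

lemma PosOp.pow {A : Module.End ℝ (LL μ)} (hA : PosOp A) (n : ℕ) : PosOp (A ^ n) := by
  induction n with
  | zero => exact PosOp.one
  | succ n ih => rw [pow_succ]; exact ih.mul hA

lemma PosOp.sum {A : ℕ → Module.End ℝ (LL μ)} (hA : ∀ k, PosOp (A k)) (n : ℕ) :
    PosOp (∑ k ∈ Finset.range n, A k) := by
  induction n with
  | zero =>
    intro f _
    filter_upwards [coe_zero (μ := μ)] with x hx
    simpa using hx.ge
  | succ n ih =>
    intro f hf
    rw [Finset.sum_range_succ]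
    filter_upwards [ih f hf, hA n f hf, coe_add ((∑ k ∈ Finset.range n, A k) f) (A n f)]
      with x h1 h2 h3
    rw [LinearMap.add_apply, h3]; positivity

lemma PosOp.smul {A : Module.End ℝ (LL μ)} (hA : PosOp A) {c : ℝ} (hc : 0 ≤ c) : PosOp (c • A) := by
  intro f hf
  filter_upwards [hA f hf, coe_smul c (A f)] with x h1 h2
  rw [LinearMap.smul_apply, h2]; positivity

/-- Cesaro averages -/
noncomputable def Avg (T : Module.End ℝ (LL μ)) (n : ℕ) : Module.End ℝ (LL μ) :=
  (n : ℝ)⁻¹ • ∑ k ∈ Finset.range n, T ^ k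

lemma DS.posAvg {T : Module.End ℝ (LL μ)} (hT : DS T) (n : ℕ) : PosOp (Avg T n) :=
  (PosOp.sum (fun k => PosOp.pow hT.pos k) n).smul (by positivity)

end MPE

namespace MPE
variable {μ : Measure Ω}

lemma ex_pos {g : LL μ} (hg : Integrable g.1 μ) :
    ∃ h : LL μ, Integrable h.1 μ ∧ ∀ᵐ x ∂μ, h.1 x = max (g.1 x) 0 := by
  have h1 : MemLp (fun x => max (g.1 x) 0) 1 μ := memLp_one_iff_integrable.2 hg.pos_part
  obtain ⟨h, hh⟩ := exLp le_rfl _ h1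
  refine ⟨h, ?_, hh⟩
  exact (integrable_congr hh).2 hg.pos_part

lemma DS.integrable {T : Module.End ℝ (LL μ)} (hT : DS T) {f : LL μ} (hf : Integrable f.1 μ) :
    Integrable (T f).1 μ := by
  rw [← memLp_one_iff_integrable] at hf ⊢
  exact ⟨aesm _, (hT.norm_one f).trans_lt hf.2⟩

lemma DS.integral_le {T : Module.End ℝ (LL μ)} (hT : DS T) {f : LL μ} (hf : Integrable f.1 μ)
    (h0 : ∀ᵐ x ∂μ, 0 ≤ f.1 x) : ∫ x, (T f).1 x ∂μ ≤ ∫ x, f.1 x ∂μ := by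
  have h1 := hT.norm_one f
  have e : ∀ g : LL μ, (∀ᵐ x ∂μ, 0 ≤ g.1 x) → ∫ x, g.1 x ∂μ = (eLpNorm g.1 1 μ).toReal := by
    intro g hg
    rw [integral_eq_lintegral_of_nonneg_ae hg (aesm g), eLpNorm_one_eq_lintegral_enorm]
    congr 1
    refine lintegral_congr_ae ?_
    filter_upwards [hg] with x hx
    rw [Real.enorm_eq_ofReal hx]
  rw [e _ h0, e _ (hT.pos f h0)]
  exact ENNReal.toReal_mono (memLp_one_iff_integrable.2 hf).2.ne h1

/-- partial sums -/
noncomputable def Sm (T : Module.End ℝ (LL μ)) (n : ℕ) : Module.End ℝ (LL μ) :=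
  ∑ k ∈ Finset.range n, T ^ k

lemma Sm_succ (T : Module.End ℝ (LL μ)) (n : ℕ) (u : LL μ) : Sm T (n+1) u = u + T (Sm T n u) := by
  have : Sm T (n+1) = 1 + T * Sm T n := by
    simp only [Sm]
    rw [Finset.sum_range_succ', Finset.mul_sum, add_comm]
    simp [pow_succ']
  rw [this]; rfl

lemma hopf_aux {T : Module.End ℝ (LL μ)} (hT : DS T) {u : LL μ} (hu : Integrable u.1 μ) (n : ℕ) :
    ∃ M M' : LL μ, Integrable M.1 μ ∧ Integrable M'.1 μ ∧ (∀ᵐ x ∂μ, 0 ≤ M.1 x) ∧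
      (∀ᵐ x ∂μ, M.1 x ≤ M'.1 x) ∧ (∀ᵐ x ∂μ, M'.1 x = max (u.1 x + (T M).1 x) 0) ∧
      ∀ k ≤ n, ∀ᵐ x ∂μ, (Sm T k u).1 x ≤ M'.1 x := by
  induction n with
  | zero =>
    obtain ⟨h, hi, hh⟩ := ex_pos hu
    have z0 := coe_zero (μ := μ)
    refine ⟨0, h, (integrable_congr z0).2 (integrable_zero _ _ _), hi, ?_, ?_, ?_, ?_⟩
    · filter_upwards [z0] with x hx using hx.ge
    · filter_upwards [z0, hh] with x hx h2
      rw [hx, h2]; exact le_max_right _ _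
    · filter_upwards [z0, hh] with x hx h2
      rw [map_zero, h2, hx, add_zero]
    · intro k hk
      obtain rfl : k = 0 := by omega
      filter_upwards [z0, hh] with x hx h2
      simp only [Sm, Finset.range_zero, Finset.sum_empty, LinearMap.zero_apply]
      rw [hx, h2]; exact le_max_right _ _
  | succ n ih =>
    obtain ⟨M, M', hM, hM', hM0, hMM, hMe, hS⟩ := ih
    have hi : Integrable (u + T M').1 μ :=
      (integrable_congr (coe_add _ _)).2 (hu.add (hT.integrable hM'))
    obtain ⟨h, hi, hh⟩ := ex_pos hi
    have hh' : ∀ᵐ x ∂μ, h.1 x = max (u.1 x + (T M').1 x) 0 := by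
      filter_upwards [hh, coe_add u (T M')] with x h1 h2
      rw [h1, h2]
    have hle : ∀ᵐ x ∂μ, M'.1 x ≤ h.1 x := by
      filter_upwards [hh', hMe, PosOp.mono hT.pos hMM] with x h1 h2 h3
      rw [h1, h2]; gcongr
    refine ⟨M', h, hM', hi, ?_, hle, hh', ?_⟩
    · filter_upwards [hM0, hMM] with x h1 h2 using h1.trans h2
    · intro k hk
      rcases k with _ | k
      · filter_upwards [hS 0 (by omega), hle] with x h1 h2 using h1.trans h2
      · rw [Sm_succ]
        filter_upwards [PosOp.mono hT.pos (hS k (by omega)), hh', coe_add u (T (Sm T k u))]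
          with x h1 h2 h3
        rw [h2, h3]
        exact le_max_of_le_left (by gcongr)

lemma hopf {T : Module.End ℝ (LL μ)} (hT : DS T) {u : LL μ} (hu : Integrable u.1 μ) (n : ℕ) :
    ∃ E : Set Ω, MeasurableSet E ∧ (∀ k ≤ n, ∀ᵐ x ∂μ, 0 < (Sm T k u).1 x → x ∈ E) ∧
      0 ≤ ∫ x in E, u.1 x ∂μ := by
  obtain ⟨M, M', hM, hM', hM0, hMM, hMe, hS⟩ := hopf_aux hT hu n
  have hE : MeasurableSet {x | 0 < M'.1 x} := measurableSet_lt measurable_const (meas M')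
  have iT := hT.integrable hM
  refine ⟨{x | 0 < M'.1 x}, hE, ?_, ?_⟩
  · intro k hk
    filter_upwards [hS k hk] with x h1 h2 using h2.trans_le h1
  · have h1 : ∫ x in {x | 0 < M'.1 x}, u.1 x ∂μ =
        ∫ x in {x | 0 < M'.1 x}, (M'.1 x - (T M).1 x) ∂μ := by
      refine setIntegral_congr_ae hE ?_
      filter_upwards [hMe] with x h1 hx
      have hx : 0 < M'.1 x := hx
      rcases max_cases (u.1 x + (T M).1 x) 0 with h | h <;> linarith
    rw [h1, integral_sub hM'.integrableOn iT.integrableOn]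
    have h2 : ∫ x in {x | 0 < M'.1 x}, M'.1 x ∂μ = ∫ x, M'.1 x ∂μ := by
      refine setIntegral_eq_integral_of_ae_compl_eq_zero ?_
      filter_upwards [hM0, hMM] with x h1 h2 hx
      have hx : ¬ 0 < M'.1 x := hx
      linarith
    have h3 : ∫ x in {x | 0 < M'.1 x}, (T M).1 x ∂μ ≤ ∫ x, (T M).1 x ∂μ :=
      setIntegral_le_integral iT (hT.pos M hM0)
    have h4 := hT.integral_le hM hM0
    have h5 : ∫ x, M.1 x ∂μ ≤ ∫ x, M'.1 x ∂μ := integral_mono_ae hM hM' hMM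
    linarith

lemma ex_const (μ : Measure Ω) (c : ℝ) : ∃ f : LL μ, ∀ᵐ x ∂μ, f.1 x = c :=
  exLp le_top _ (memLp_top_const c)

lemma DS.map_one_le {T : Module.End ℝ (LL μ)} (hT : DS T) {e : LL μ} (he : ∀ᵐ x ∂μ, e.1 x = 1) :
    ∀ᵐ x ∂μ, (T e).1 x ≤ e.1 x := by
  have h1 := hT.norm_top e
  have h2 : eLpNorm e.1 ⊤ μ ≤ ENNReal.ofReal 1 := by
    rw [eLpNorm_exponent_top]
    refine eLpNormEssSup_le_of_ae_bound ?_
    filter_upwards [he] with x hx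
    rw [hx]; simp
  have h3 : ∀ᵐ x ∂μ, ‖(T e).1 x‖ₑ ≤ ENNReal.ofReal 1 := by
    filter_upwards [ae_le_eLpNormEssSup (f := (T e).1) (μ := μ)] with x hx
    exact hx.trans (h1.trans h2)
  filter_upwards [h3, he] with x h3 h4
  rw [h4]
  rw [Real.enorm_eq_ofReal_abs, ENNReal.ofReal_le_ofReal_iff (by norm_num)] at h3
  exact (le_abs_self _).trans h3

lemma DS.pow_one_le {T : Module.End ℝ (LL μ)} (hT : DS T) {e : LL μ} (he : ∀ᵐ x ∂μ, e.1 x = 1)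
    (n : ℕ) : ∀ᵐ x ∂μ, ((T ^ n) e).1 x ≤ 1 := by
  induction n with
  | zero => filter_upwards [he] with x hx using hx.le
  | succ n ih =>
    rw [pow_succ]
    filter_upwards [PosOp.mono (PosOp.pow hT.pos n) (hT.map_one_le he), ih] with x h1 h2
    exact h1.trans h2

lemma DS.Sm_one_le {T : Module.End ℝ (LL μ)} (hT : DS T) {e : LL μ} (he : ∀ᵐ x ∂μ, e.1 x = 1)
    (n : ℕ) : ∀ᵐ x ∂μ, (Sm T n e).1 x ≤ n := by
  induction n with
  | zero =>
    filter_upwards [coe_zero (μ := μ)] with x hx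
    simp only [Sm, Finset.range_zero, Finset.sum_empty, LinearMap.zero_apply]
    rw [hx]; simp
  | succ n ih =>
    have : Sm T (n+1) e = Sm T n e + (T ^ n) e := by simp [Sm, Finset.sum_range_succ]
    rw [this]
    filter_upwards [coe_add (Sm T n e) ((T ^ n) e), ih, hT.pow_one_le he n] with x h1 h2 h3
    rw [h1]; push_cast; linarith

lemma DS.posSm {T : Module.End ℝ (LL μ)} (hT : DS T) (n : ℕ) : PosOp (Sm T n) :=
  PosOp.sum (fun k => PosOp.pow hT.pos k) n

lemma weak_aux {T : Module.End ℝ (LL μ)} (hT : DS T) {f : LL μ}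
    {l : ℝ} (hl : 0 < l) (n : ℕ) {F : Set Ω} (hF : MeasurableSet F) (hFm : μ F < ∞)
    (hFs : ∀ x ∈ F, ∃ k ≤ n, l < (Avg T k f).1 x)
    (hfin : ∫⁻ x, ENNReal.ofReal (f.1 x - l / 2) ∂μ ≠ ∞) :
    μ F ≤ ENNReal.ofReal (2 / l) * ∫⁻ x, ENNReal.ofReal (f.1 x - l / 2) ∂μ := by
  have hnn : 0 ≤ᵐ[μ] fun x => max (f.1 x - l / 2) 0 := ae_of_all _ fun x => le_max_right _ _
  have hvi : Integrable (fun x => max (f.1 x - l / 2) 0) μ := by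
    refine ⟨(((meas f).sub_const _).max measurable_const).aestronglyMeasurable, ?_⟩
    rw [hasFiniteIntegral_iff_ofReal hnn]
    simpa using hfin.lt_top
  obtain ⟨v, hv⟩ := exLp le_rfl _ (memLp_one_iff_integrable.2 hvi)
  have hvi' : Integrable v.1 μ := (integrable_congr hv).2 hvi
  obtain ⟨e, he⟩ := ex_const μ 1
  have h1F : Integrable (F.indicator (fun _ => (1 : ℝ))) μ :=
    (integrable_indicator_iff hF).2 (integrableOn_const hFm.ne)
  obtain ⟨i, hi⟩ := exLp le_rfl _ (memLp_one_iff_integrable.2 h1F)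
  have hii : Integrable i.1 μ := (integrable_congr hi).2 h1F
  set u : LL μ := v - (l/2) • i with hu
  have hu' : ∀ᵐ x ∂μ, u.1 x = v.1 x - l / 2 * i.1 x := by
    filter_upwards [coe_sub v ((l/2) • i), coe_smul (l/2) i] with x h1 h2
    rw [h1, h2]
  have hui : Integrable u.1 μ := (integrable_congr hu').2 (hvi'.sub (hii.const_mul _))
  obtain ⟨E, hE, hSE, hint⟩ := hopf hT hui n
  have key : ∀ k ≤ n, ∀ᵐ x ∂μ, l < (Avg T k f).1 x → x ∈ E := by
    intro k hk
    have m1 : ∀ᵐ x ∂μ, (f - (l/2) • e - (l/2) • e).1 x ≤ u.1 x := by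
      filter_upwards [hu', coe_sub (f - (l/2) • e) ((l/2) • e), coe_sub f ((l/2) • e),
        coe_smul (l/2) e, he, hv, hi] with x h1 h2 h3 h4 h5 h6 h7
      rw [h1, h2, h3, h4, h5, h6, h7]
      have : F.indicator (fun _ => (1 : ℝ)) x ≤ 1 := Set.indicator_le_self' (fun _ _ => zero_le_one) x
      have := le_max_left (f.1 x - l / 2) 0
      nlinarith
    have m2 := (hT.posSm k).mono m1
    rw [map_sub, map_sub, map_smul] at m2
    have eA : Avg T k f = (k : ℝ)⁻¹ • Sm T k f := rfl
    filter_upwards [m2, hSE k hk, coe_sub (Sm T k f - (l/2) • Sm T k e) ((l/2) • Sm T k e),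
      coe_sub (Sm T k f) ((l/2) • Sm T k e), coe_smul (l/2) (Sm T k e), hT.Sm_one_le he k,
      coe_smul (k : ℝ)⁻¹ (Sm T k f)] with x h1 h2 h3 h4 h5 h6 h7 hx
    apply h2
    rw [h3, h4, h5] at h1
    rw [eA, h7] at hx
    have hk0 : (0 : ℝ) < k := by
      rcases Nat.eq_zero_or_pos k with h | h
      · subst h; simp at hx; linarith
      · exact_mod_cast h
    rw [inv_mul_eq_div, lt_div_iff₀ hk0] at hx
    nlinarith
  have hFE : ∀ᵐ x ∂μ, x ∈ F → x ∈ E := by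
    have := (ae_all_iff (μ := μ)).2 fun k => (ae_all_iff (μ := μ)).2 fun hk => key k hk
    filter_upwards [this] with x hx hxF
    obtain ⟨k, hk, h⟩ := hFs x hxF
    exact hx k hk h
  have h1 : ∫ x in E, u.1 x ∂μ = ∫ x in E, v.1 x ∂μ - l / 2 * μ.real F := by
    rw [setIntegral_congr_ae (g := fun x => v.1 x - l / 2 * i.1 x) hE (by
      filter_upwards [hu'] with x hx _ using hx),
      integral_sub hvi'.integrableOn (hii.const_mul _).integrableOn, integral_const_mul]
    congr 2
    have : ∫ x in E, i.1 x ∂μ = ∫ x, i.1 x ∂μ := by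
      refine setIntegral_eq_integral_of_ae_compl_eq_zero ?_
      filter_upwards [hi, hFE] with x h1 h2 hx
      rw [h1, Set.indicator_of_notMem (fun h => hx (h2 h))]
    rw [this, integral_congr_ae hi, integral_indicator hF]
    simp
  have h2 : ∫ x in E, v.1 x ∂μ ≤ ∫ x, v.1 x ∂μ :=
    setIntegral_le_integral hvi' (by
      filter_upwards [hv] with x hx
      rw [hx]; exact le_max_right _ _)
  have h3 : ∫ x, v.1 x ∂μ = (∫⁻ x, ENNReal.ofReal (f.1 x - l / 2) ∂μ).toReal := by
    rw [integral_congr_ae hv, integral_eq_lintegral_of_nonneg_ae hnn hvi.1]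
    simp
  have h4 : μ.real F ≤ 2 / l * (∫⁻ x, ENNReal.ofReal (f.1 x - l / 2) ∂μ).toReal := by
    rw [div_mul_eq_mul_div, le_div_iff₀ hl]
    rw [h1] at hint
    linarith
  rw [← ENNReal.ofReal_toReal hFm.ne, ← ENNReal.ofReal_toReal hfin,
    ← ENNReal.ofReal_mul (by positivity)]
  exact ENNReal.ofReal_le_ofReal h4

lemma weak_type [SigmaFinite μ] {T : Module.End ℝ (LL μ)} (hT : DS T) {f : LL μ}
    {l : ℝ} (hl : 0 < l) (n : ℕ) :
    μ {x | ∃ k ≤ n, l < (Avg T k f).1 x} ≤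
      ENNReal.ofReal (2 / l) * ∫⁻ x, ENNReal.ofReal (f.1 x - l / 2) ∂μ := by
  by_cases hfin : ∫⁻ x, ENNReal.ofReal (f.1 x - l / 2) ∂μ = ∞
  · rw [hfin, ENNReal.mul_top (by simpa using hl)]; exact le_top
  rw [← Measure.iSup_restrict_spanningSets]
  have hm : MeasurableSet {x | ∃ k ≤ n, l < (Avg T k f).1 x} := by
    have : {x | ∃ k ≤ n, l < (Avg T k f).1 x} = ⋃ k, ⋃ (_ : k ≤ n), {x | l < (Avg T k f).1 x} := by
      ext x; simp
    rw [this]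
    exact MeasurableSet.iUnion fun k => MeasurableSet.iUnion fun _ =>
      measurableSet_lt measurable_const (meas _)
  refine iSup_le fun j => ?_
  rw [Measure.restrict_apply hm]
  exact weak_aux hT hl n (hm.inter (measurableSet_spanningSets μ j))
    ((measure_mono inter_subset_right).trans_lt (measure_spanningSets_lt_top μ j))
    (fun x hx => hx.1) hfin

end MPE

namespace MPE
variable {μ : Measure Ω}

lemma inner_bound {p : ℝ} (hp : 1 < p) {a : ℝ} (ha : 0 ≤ a) :
    ∫⁻ t in Set.Ioi (0:ℝ), ENNReal.ofReal (2 / t) * ENNReal.ofReal (a - t / 2)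
        * ENNReal.ofReal (t ^ (p - 1)) ≤
      ENNReal.ofReal (2 ^ p / (p - 1)) * ENNReal.ofReal (a ^ p) := by
  have hle : ∀ t ∈ Set.Ioi (0:ℝ), ENNReal.ofReal (2 / t) * ENNReal.ofReal (a - t / 2)
        * ENNReal.ofReal (t ^ (p - 1)) ≤
        (Set.Ioc 0 (2 * a)).indicator (fun t => ENNReal.ofReal (2 * a * t ^ (p - 2))) t := by
    intro t ht
    have ht : 0 < t := ht
    by_cases h : t ≤ 2 * a
    · rw [Set.indicator_of_mem (by exact ⟨ht, h⟩), ← ENNReal.ofReal_mul (by positivity),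
        ← ENNReal.ofReal_mul (by have : 0 ≤ a - t/2 := by linarith
                                 positivity)]
      refine ENNReal.ofReal_le_ofReal ?_
      have e : t ^ (p - 1) = t ^ (p - 2) * t := by
        rw [← Real.rpow_add_one ht.ne']; congr 1; ring
      rw [e]
      have h3 : 0 ≤ t ^ (p - 2) := by positivity
      have : 2 / t * (a - t / 2) * (t ^ (p - 2) * t) = 2 * (a - t / 2) * t ^ (p - 2) := by
        field_simp
      rw [this]
      gcongr
      linarith
    · have : ENNReal.ofReal (a - t / 2) = 0 := ENNReal.ofReal_of_nonpos (by linarith)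
      rw [this]; simp
  calc _ ≤ ∫⁻ t in Set.Ioi (0:ℝ),
        (Set.Ioc 0 (2 * a)).indicator (fun t => ENNReal.ofReal (2 * a * t ^ (p - 2))) t :=
        setLIntegral_mono' measurableSet_Ioi hle
    _ ≤ ∫⁻ t, (Set.Ioc 0 (2 * a)).indicator (fun t => ENNReal.ofReal (2 * a * t ^ (p - 2))) t :=
        setLIntegral_le_lintegral _ _
    _ = ∫⁻ t in Set.Ioc 0 (2 * a), ENNReal.ofReal (2 * a * t ^ (p - 2)) :=
        lintegral_indicator measurableSet_Ioc _
    _ = ENNReal.ofReal (∫ t in Set.Ioc 0 (2 * a), 2 * a * t ^ (p - 2)) := by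
        rw [ofReal_integral_eq_lintegral_ofReal]
        · have := (intervalIntegral.intervalIntegrable_rpow' (a := 0) (b := 2 * a)
            (r := p - 2) (by linarith)).const_mul (2 * a)
          rw [intervalIntegrable_iff_integrableOn_Ioc_of_le (by linarith)] at this
          exact this
        · refine (ae_restrict_iff' measurableSet_Ioc).2 (ae_of_all _ fun t ht => ?_)
          have := ht.1
          simp only [Pi.zero_apply]
          positivity
    _ = ENNReal.ofReal (2 * a * ((2 * a) ^ (p - 1) / (p - 1))) := by
        rw [← intervalIntegral.integral_of_le (by linarith), intervalIntegral.integral_const_mul,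
          integral_rpow (Or.inl (by linarith))]
        rw [show p - 2 + 1 = p - 1 by ring, Real.zero_rpow (by linarith), sub_zero]
    _ = _ := by
        rw [← ENNReal.ofReal_mul (by have : 0 < p - 1 := by linarith
                                     positivity)]
        congr 1
        rcases ha.eq_or_lt with rfl | ha
        · rw [Real.zero_rpow (by linarith)]; simp
        · have : (2 * a) ^ (p - 1) * (2 * a) = 2 ^ p * a ^ p := by
            rw [← Real.rpow_add_one (by positivity), ← Real.mul_rpow (by positivity) ha.le]
            congr 1; ring
          rw [mul_div_assoc', mul_comm (2 * a), this]; ring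

lemma strong_aux [SigmaFinite μ] {p : ℝ} (hp : 1 < p) {f : Ω → ℝ} (hf : Measurable f)
    (hf0 : ∀ᵐ x ∂μ, 0 ≤ f x) {g : Ω → ℝ} (hg : Measurable g) (hg0 : ∀ᵐ x ∂μ, 0 ≤ g x)
    (h : ∀ l : ℝ, 0 < l → μ {x | l < g x} ≤
      ENNReal.ofReal (2 / l) * ∫⁻ x, ENNReal.ofReal (f x - l / 2) ∂μ) :
    ∫⁻ x, ENNReal.ofReal (g x ^ p) ∂μ ≤
      ENNReal.ofReal p * ENNReal.ofReal (2 ^ p / (p - 1)) * ∫⁻ x, ENNReal.ofReal (f x ^ p) ∂μ := by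
  rw [lintegral_rpow_eq_lintegral_meas_lt_mul μ hg0 hg.aemeasurable (by linarith), mul_assoc]
  gcongr
  calc ∫⁻ t in Set.Ioi (0:ℝ), μ {a | t < g a} * ENNReal.ofReal (t ^ (p - 1))
      ≤ ∫⁻ t in Set.Ioi (0:ℝ), ∫⁻ x, ENNReal.ofReal (2 / t) * ENNReal.ofReal (f x - t / 2)
        * ENNReal.ofReal (t ^ (p - 1)) ∂μ := by
        refine setLIntegral_mono' measurableSet_Ioi fun t ht => ?_
        rw [lintegral_mul_const _ (by fun_prop), lintegral_const_mul _ (by fun_prop)]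
        gcongr
        exact h t ht
    _ = ∫⁻ x, (∫⁻ t in Set.Ioi (0:ℝ), ENNReal.ofReal (2 / t) * ENNReal.ofReal (f x - t / 2)
        * ENNReal.ofReal (t ^ (p - 1))) ∂μ := by
        refine lintegral_lintegral_swap ?_
        refine Measurable.aemeasurable ?_
        unfold Function.uncurry
        fun_prop
    _ ≤ ∫⁻ x, ENNReal.ofReal (2 ^ p / (p - 1)) * ENNReal.ofReal (f x ^ p) ∂μ := by
        refine lintegral_mono_ae ?_
        filter_upwards [hf0] with x hx
        exact inner_bound hp hx
    _ = _ := lintegral_const_mul _ (by fun_prop)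

lemma ex_of_lintegral {p : ℝ≥0∞} (hp1 : 1 ≤ p) (hpt : p ≠ ⊤) {G : Ω → ℝ≥0∞} (hG : Measurable G)
    (hfin : ∫⁻ x, G x ^ p.toReal ∂μ ≠ ∞) :
    ∃ H : LL μ, (∀ᵐ x ∂μ, 0 ≤ H.1 x) ∧ (∀ᵐ x ∂μ, G x = ENNReal.ofReal (H.1 x)) ∧
      eLpNorm H.1 p μ = (∫⁻ x, G x ^ p.toReal ∂μ) ^ (1 / p.toReal) := by
  have hp0 : 0 < p.toReal := ENNReal.toReal_pos (by positivity) hpt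
  have hGf : ∀ᵐ x ∂μ, G x < ∞ := by
    filter_upwards [ae_lt_top (hG.pow_const _) hfin] with x hx
    by_contra h
    rw [not_lt, top_le_iff] at h
    simp [h, hp0] at hx
  have e : eLpNorm (fun x => (G x).toReal) p μ = (∫⁻ x, G x ^ p.toReal ∂μ) ^ (1 / p.toReal) := by
    rw [eLpNorm_eq_lintegral_rpow_enorm_toReal (by positivity) hpt]
    congr 1
    refine lintegral_congr_ae ?_
    filter_upwards [hGf] with x hx
    rw [Real.enorm_eq_ofReal toReal_nonneg, ENNReal.ofReal_toReal hx.ne]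
  have hm : MemLp (fun x => (G x).toReal) p μ := by
    refine ⟨hG.ennreal_toReal.aestronglyMeasurable, ?_⟩
    rw [e]
    exact ENNReal.rpow_lt_top_of_nonneg (by positivity) hfin
  obtain ⟨H, hH⟩ := exLp hp1 _ hm
  refine ⟨H, ?_, ?_, ?_⟩
  · filter_upwards [hH] with x hx
    rw [hx]; exact toReal_nonneg
  · filter_upwards [hH, hGf] with x hx h2
    rw [hx, ENNReal.ofReal_toReal h2.ne]
  · rw [eLpNorm_congr_ae hH, e]

lemma max_one [SigmaFinite μ] {p : ℝ≥0∞} (hp1 : 1 < p) (hpt : p ≠ ⊤) :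
    ∃ C : ℝ≥0∞, C ≠ ∞ ∧ ∀ T : Module.End ℝ (LL μ), DS T → ∀ f : LL μ, (∀ᵐ x ∂μ, 0 ≤ f.1 x) →
      eLpNorm f.1 p μ < ∞ → ∃ G : LL μ, eLpNorm G.1 p μ ≤ C * eLpNorm f.1 p μ ∧
        ∀ n, ∀ᵐ x ∂μ, (Avg T n f).1 x ≤ G.1 x := by
  have hp : 1 < p.toReal := by
    rw [← ENNReal.toReal_one]; exact (ENNReal.toReal_lt_toReal (by simp) hpt).2 hp1
  have hp0 : 0 < p.toReal := by linarith
  set q := p.toReal with hq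
  set K : ℝ≥0∞ := ENNReal.ofReal q * ENNReal.ofReal (2 ^ q / (q - 1)) with hK
  have hKt : K ≠ ∞ := ENNReal.mul_ne_top (by simp) (by simp)
  refine ⟨K ^ (1 / q), ENNReal.rpow_ne_top_of_nonneg (by positivity) hKt, ?_⟩
  intro T hT f hf0 hfp
  let g : ℕ → Ω → ℝ := fun n x => (Finset.range (n+1)).sup' (by simp) fun k => (Avg T k f).1 x
  have hgm : ∀ n, Measurable (g n) := fun n =>
    Finset.measurable_range_sup'' (n := n) (f := fun k x => (Avg T k f).1 x) (fun k _ => meas _)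
  have hA0 : ∀ᵐ x ∂μ, ∀ k, 0 ≤ (Avg T k f).1 x := ae_all_iff.2 fun k => hT.posAvg k f hf0
  have hg0 : ∀ n, ∀ᵐ x ∂μ, 0 ≤ g n x := by
    intro n
    filter_upwards [hA0] with x hx
    exact (hx 0).trans (Finset.le_sup' (fun k => (Avg T k f).1 x) (by simp))
  have hmono : ∀ x, Monotone fun n => g n x := by
    intro x m n hmn
    exact Finset.sup'_mono _ (by
      intro k; simp only [Finset.mem_range]; omega) _
  have hgle : ∀ n k x, k ≤ n → (Avg T k f).1 x ≤ g n x := fun n k x hk =>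
    Finset.le_sup' (fun k => (Avg T k f).1 x) (by simp; omega)
  have hst : ∀ n, ∫⁻ x, ENNReal.ofReal (g n x ^ q) ∂μ ≤ K * ∫⁻ x, ENNReal.ofReal (f.1 x ^ q) ∂μ := by
    intro n
    refine strong_aux hp (meas f) hf0 (hgm n) (hg0 n) fun l hl => ?_
    refine le_trans (measure_mono ?_) (weak_type hT hl n)
    intro x hx
    obtain ⟨k, hk, h⟩ := (Finset.lt_sup'_iff _).1 (show l < g n x from hx)
    exact ⟨k, by simp at hk; omega, h⟩
  have hff : (∫⁻ x, ENNReal.ofReal (f.1 x ^ q) ∂μ) = ∫⁻ x, ‖f.1 x‖ₑ ^ q ∂μ := by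
    refine lintegral_congr_ae ?_
    filter_upwards [hf0] with x hx
    rw [Real.enorm_eq_ofReal hx, ENNReal.ofReal_rpow_of_nonneg hx hp0.le]
  have hfn : eLpNorm f.1 p μ = (∫⁻ x, ‖f.1 x‖ₑ ^ q ∂μ) ^ (1 / q) :=
    eLpNorm_eq_lintegral_rpow_enorm_toReal (by positivity) hpt
  have hffin : ∫⁻ x, ‖f.1 x‖ₑ ^ q ∂μ < ∞ :=
    (eLpNorm_lt_top_iff_lintegral_rpow_enorm_lt_top (by positivity) hpt).1 hfp
  let G : Ω → ℝ≥0∞ := fun x => ⨆ n, ENNReal.ofReal (g n x)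
  have hG : Measurable G := Measurable.iSup fun n => (hgm n).ennreal_ofReal
  have hGi : ∫⁻ x, G x ^ q ∂μ ≤ K * ∫⁻ x, ‖f.1 x‖ₑ ^ q ∂μ := by
    have : ∀ x, G x ^ q = ⨆ n, (ENNReal.ofReal (g n x)) ^ q := by
      intro x
      exact (ENNReal.orderIsoRpow q hp0).map_iSup _
    simp_rw [this]
    rw [lintegral_iSup (fun n => (hgm n).ennreal_ofReal.pow_const _) (by
      intro m n hmn x
      have := hmono x hmn
      simp only at this ⊢
      gcongr)]
    refine iSup_le fun n => ?_
    rw [← hff]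
    refine le_trans (le_of_eq (lintegral_congr_ae ?_)) (hst n)
    filter_upwards [hg0 n] with x hx
    rw [ENNReal.ofReal_rpow_of_nonneg hx hp0.le]
  obtain ⟨H, hH0, hH1, hH2⟩ := ex_of_lintegral hp1.le hpt hG
    (hGi.trans_lt (ENNReal.mul_lt_top hKt.lt_top hffin)).ne
  refine ⟨H, ?_, ?_⟩
  · rw [hH2, hfn, ← ENNReal.mul_rpow_of_nonneg _ _ (by positivity)]
    gcongr
  · intro n
    filter_upwards [hH0, hH1] with x h1 h2
    refine (hgle n n x le_rfl).trans ?_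
    have : ENNReal.ofReal (g n x) ≤ ENNReal.ofReal (H.1 x) := by
      rw [← h2]; exact le_iSup (fun n => ENNReal.ofReal (g n x)) n
    exact (ENNReal.ofReal_le_ofReal_iff h1).1 this

/-- product of averages -/
noncomputable def MAvg : ∀ {d : ℕ}, (Fin d → Module.End ℝ (LL μ)) → (Fin d → ℕ) →
    Module.End ℝ (LL μ)
  | 0, _, _ => 1
  | _ + 1, T, n => Avg (T 0) (n 0) * MAvg (Fin.tail T) (Fin.tail n)

lemma posMAvg {d : ℕ} (T : Fin d → Module.End ℝ (LL μ)) (hT : ∀ i, DS (T i)) (n : Fin d → ℕ) :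
    PosOp (MAvg T n) := by
  induction d with
  | zero => exact PosOp.one
  | succ d ih => exact ((hT 0).posAvg _).mul (ih _ (fun i => hT _) _)

lemma max_multi [SigmaFinite μ] {p : ℝ≥0∞} (hp1 : 1 < p) (hpt : p ≠ ⊤) (d : ℕ) :
    ∃ C : ℝ≥0∞, C ≠ ∞ ∧ ∀ T : Fin d → Module.End ℝ (LL μ), (∀ i, DS (T i)) →
      ∀ f : LL μ, (∀ᵐ x ∂μ, 0 ≤ f.1 x) →
      eLpNorm f.1 p μ < ∞ → ∃ G : LL μ, eLpNorm G.1 p μ ≤ C * eLpNorm f.1 p μ ∧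
        ∀ n, ∀ᵐ x ∂μ, (MAvg T n f).1 x ≤ G.1 x := by
  induction d with
  | zero =>
    refine ⟨1, by simp, fun T _ f _ _ => ⟨f, by simp, fun n => ae_of_all _ fun x => le_rfl⟩⟩
  | succ d ih =>
    obtain ⟨C, hC, h⟩ := ih
    obtain ⟨C1, hC1, h1⟩ := max_one (μ := μ) hp1 hpt
    refine ⟨C1 * C, ENNReal.mul_ne_top hC1 hC, fun T hT f hf hfp => ?_⟩
    obtain ⟨G, hG, hG'⟩ := h (Fin.tail T) (fun i => hT _) f hf hfp
    have hG0 : ∀ᵐ x ∂μ, 0 ≤ G.1 x := by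
      filter_upwards [hG' 0, posMAvg (Fin.tail T) (fun i => hT _) 0 f hf] with x h1 h2
      exact h2.trans h1
    obtain ⟨G1, hG1, hG1'⟩ := h1 (T 0) (hT 0) G hG0
      (hG.trans_lt (ENNReal.mul_lt_top hC.lt_top hfp))
    refine ⟨G1, hG1.trans ?_, fun n => ?_⟩
    · rw [mul_assoc]; gcongr
    · filter_upwards [hG1' (n 0), ((hT 0).posAvg (n 0)).mono (hG' (Fin.tail n))] with x h1 h2
      exact h2.trans h1

end MPE

namespace MPE
variable {μ : Measure Ω}

lemma DS.sq_le {T : Module.End ℝ (LL μ)} (hT : DS T) {f s : LL μ}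
    (hs : ∀ᵐ x ∂μ, s.1 x = (f.1 x) ^ 2) : ∀ᵐ x ∂μ, ((T f).1 x) ^ 2 ≤ (T s).1 x := by
  obtain ⟨e, he⟩ := ex_const μ 1
  have h1 : ∀ c : ℚ, ∀ᵐ x ∂μ, 2 * (c : ℝ) * (T f).1 x - (c : ℝ) ^ 2 ≤ (T s).1 x := by
    intro c
    have h2 : ∀ᵐ x ∂μ, ((2 * (c : ℝ)) • f - ((c : ℝ) ^ 2) • e).1 x ≤ s.1 x := by
      filter_upwards [hs, he, coe_sub ((2 * (c : ℝ)) • f) (((c : ℝ) ^ 2) • e),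
        coe_smul (2 * (c : ℝ)) f, coe_smul ((c : ℝ) ^ 2) e] with x h1 h2 h3 h4 h5
      rw [h3, h4, h5, h1, h2]
      nlinarith [sq_nonneg (f.1 x - c)]
    have h3 := PosOp.mono hT.pos h2
    rw [map_sub, map_smul, map_smul] at h3
    filter_upwards [h3, hT.map_one_le he, he, coe_sub ((2 * (c : ℝ)) • T f) (((c : ℝ) ^ 2) • T e),
        coe_smul (2 * (c : ℝ)) (T f), coe_smul ((c : ℝ) ^ 2) (T e)] with x h1 h2 h6 h3 h4 h5
    rw [h3, h4, h5] at h1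
    rw [h6] at h2
    nlinarith [sq_nonneg (c : ℝ)]
  filter_upwards [ae_all_iff.2 h1] with x hx
  have h2 : ∀ c : ℝ, 2 * c * (T f).1 x - c ^ 2 ≤ (T s).1 x := by
    intro c
    refine Rat.denseRange_cast.induction_on (p := fun c : ℝ => 2 * c * (T f).1 x - c ^ 2 ≤ (T s).1 x)
      c ?_ hx
    exact isClosed_le (by fun_prop) (by fun_prop)
  have := h2 ((T f).1 x)
  nlinarith

lemma L2sq (f : Ω → ℝ) : eLpNorm f 2 μ = (∫⁻ x, ‖f x‖ₑ ^ (2:ℝ) ∂μ) ^ (1 / (2:ℝ)) := by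
  rw [eLpNorm_eq_lintegral_rpow_enorm_toReal (by simp) (by simp)]
  simp

lemma DS.norm_two {T : Module.End ℝ (LL μ)} (hT : DS T) (f : LL μ) :
    eLpNorm (T f).1 2 μ ≤ eLpNorm f.1 2 μ := by
  by_cases hf : eLpNorm f.1 2 μ = ∞
  · rw [hf]; exact le_top
  have hm : MemLp f.1 2 μ := ⟨aesm f, lt_top_iff_ne_top.2 hf⟩
  have hi := hm.integrable_sq
  obtain ⟨s, hs⟩ := exLp le_rfl _ (memLp_one_iff_integrable.2 hi)
  rw [L2sq, L2sq]
  gcongr ?_ ^ _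
  have h1 := hT.norm_one s
  rw [eLpNorm_one_eq_lintegral_enorm, eLpNorm_one_eq_lintegral_enorm] at h1
  refine le_trans (lintegral_mono_ae ?_) (h1.trans (le_of_eq (lintegral_congr_ae ?_)))
  · filter_upwards [hT.sq_le hs] with x hx
    rw [Real.enorm_eq_ofReal_abs, Real.enorm_eq_ofReal_abs, ENNReal.rpow_two,
      ← ENNReal.ofReal_pow (abs_nonneg _), sq_abs]
    exact ENNReal.ofReal_le_ofReal (hx.trans (le_abs_self _))
  · filter_upwards [hs] with x hx
    rw [Real.enorm_eq_ofReal_abs, Real.enorm_eq_ofReal_abs, ENNReal.rpow_two,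
      ← ENNReal.ofReal_pow (abs_nonneg _), sq_abs, hx, abs_of_nonneg (sq_nonneg _)]

lemma DS.norm_two_pow {T : Module.End ℝ (LL μ)} (hT : DS T) (n : ℕ) (f : LL μ) :
    eLpNorm ((T ^ n) f).1 2 μ ≤ eLpNorm f.1 2 μ := by
  induction n with
  | zero => exact le_rfl
  | succ n ih =>
    rw [pow_succ']
    exact (hT.norm_two _).trans ih

lemma mem_of_Lp2 (h : Lp ℝ 2 μ) : h.1 ∈ LL μ := by
  obtain ⟨f, hf⟩ := exLp (μ := μ) (p := 2) (by norm_num) h.1 (Lp.memLp h)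
  have : f.1 = h.1 := AEEqFun.ext hf
  rw [← this]; exact f.2

lemma exists_clm {T : Module.End ℝ (LL μ)} (hT : DS T) :
    ∃ L : Lp ℝ 2 μ →L[ℝ] Lp ℝ 2 μ, ‖L‖ ≤ 1 ∧ ∀ h, (L h).1 = (T ⟨h.1, mem_of_Lp2 h⟩).1 := by
  let L0 : Lp ℝ 2 μ →ₗ[ℝ] Lp ℝ 2 μ :=
    { toFun := fun h => ⟨(T ⟨h.1, mem_of_Lp2 h⟩).1,
        (hT.norm_two _).trans_lt (Lp.mem_Lp_iff_eLpNorm_lt_top.1 h.2)⟩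
      map_add' := by
        intro a b
        have := congrArg (Subtype.val (p := (· ∈ LL μ)))
          (map_add T ⟨a.1, mem_of_Lp2 a⟩ ⟨b.1, mem_of_Lp2 b⟩)
        exact Subtype.ext this
      map_smul' := by
        intro c a
        have := congrArg (Subtype.val (p := (· ∈ LL μ))) (map_smul T c ⟨a.1, mem_of_Lp2 a⟩)
        exact Subtype.ext this }
  refine ⟨L0.mkContinuous 1 fun h => ?_, LinearMap.mkContinuous_norm_le _ zero_le_one _, fun h => rfl⟩
  rw [one_mul, Lp.norm_def, Lp.norm_def]
  exact ENNReal.toReal_mono (Lp.eLpNorm_ne_top h) (hT.norm_two ⟨h.1, mem_of_Lp2 h⟩)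

lemma hilbert_decomp {H : Type*} [NormedAddCommGroup H] [InnerProductSpace ℝ H] [CompleteSpace H]
    (L : H →L[ℝ] H) (hL : ‖L‖ ≤ 1) (f : H) :
    ∃ h : H, L h = h ∧ ∀ ε : ℝ, 0 < ε → ∃ g : H, ‖f - h - (g - L g)‖ < ε := by
  let K : Submodule ℝ H := (LinearMap.range ((1 - L : H →L[ℝ] H) : H →ₗ[ℝ] H)).topologicalClosure
  have : CompleteSpace K := (Submodule.isClosed_topologicalClosure _).completeSpace_coe
  obtain ⟨a, ha, h, hh, rfl⟩ := Submodule.exists_add_mem_mem_orthogonal (K := K) f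
  refine ⟨h, ?_, ?_⟩
  · have h1 : ∀ y, inner ℝ (L y) h = inner ℝ y h := by
      intro y
      have : inner ℝ (y - L y) h = 0 :=
        (Submodule.mem_orthogonal K h).1 hh _
          (Submodule.le_topologicalClosure _ (LinearMap.mem_range.2 ⟨y, by simp⟩))
      rw [inner_sub_left] at this
      linarith
    refine eq_of_norm_le_re_inner_eq_norm_sq (𝕜 := ℝ) ?_ ?_
    · simpa using L.le_of_opNorm_le hL h
    · simp [h1]
  · intro ε hε
    have : a ∈ closure ((LinearMap.range ((1 - L : H →L[ℝ] H) : H →ₗ[ℝ] H)) : Set H) := ha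
    obtain ⟨b, ⟨g, rfl⟩, hb⟩ := Metric.mem_closure_iff.1 this ε hε
    refine ⟨g, ?_⟩
    rw [dist_eq_norm] at hb
    simpa using hb

lemma decomp {T : Module.End ℝ (LL μ)} (hT : DS T) (f : LL μ) (hf : eLpNorm f.1 2 μ < ∞) :
    ∃ h : LL μ, T h = h ∧ eLpNorm h.1 2 μ < ∞ ∧ ∀ ε : ℝ≥0∞, ε ≠ 0 → ∃ g r : LL μ,
      eLpNorm g.1 2 μ < ∞ ∧ eLpNorm r.1 2 μ ≤ ε ∧ f = h + (g - T g) + r := by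
  obtain ⟨L, hL, hLT⟩ := exists_clm hT
  let f' : Lp ℝ 2 μ := ⟨f.1, Lp.mem_Lp_iff_eLpNorm_lt_top.2 hf⟩
  obtain ⟨h, hh, hd⟩ := hilbert_decomp L hL f'
  refine ⟨⟨h.1, mem_of_Lp2 h⟩, ?_, Lp.eLpNorm_lt_top h, ?_⟩
  · refine Subtype.ext ?_
    rw [← hLT, hh]
  · intro ε hε
    wlog hεt : ε ≠ ∞ generalizing ε
    · obtain ⟨g, r, h1, h2, h3⟩ := this 1 (by simp) (by simp)
      rw [not_not] at hεt
      exact ⟨g, r, h1, by rw [hεt]; exact le_top, h3⟩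
    obtain ⟨g, hg⟩ := hd ε.toReal (ENNReal.toReal_pos hε hεt)
    set r : Lp ℝ 2 μ := f' - h - (g - L g) with hr
    refine ⟨⟨g.1, mem_of_Lp2 g⟩, ⟨r.1, mem_of_Lp2 r⟩, Lp.eLpNorm_lt_top g, ?_, ?_⟩
    · rw [Lp.norm_def] at hg
      exact ((ENNReal.toReal_lt_toReal (Lp.eLpNorm_ne_top r) hεt).1 hg).le
    · refine Subtype.ext ?_
      have e : f' = h + (g - L g) + r := by rw [hr]; abel
      have e2 := congrArg Subtype.val e
      have e3 : ((h + (g - L g) + r : Lp ℝ 2 μ)).1 = h.1 + (g.1 - (L g).1) + r.1 := rfl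
      rw [e3, hLT g] at e2
      exact e2

lemma DS.one : DS (1 : Module.End ℝ (LL μ)) := ⟨fun _ h => h, fun _ => le_rfl, fun _ => le_rfl⟩

lemma tail_bound {T : Module.End ℝ (LL μ)} (hT : DS T) (g : LL μ) (hg : eLpNorm g.1 2 μ < ∞)
    {ε : ℝ≥0∞} (hε : ε ≠ 0) : ∃ N : ℕ, ∃ R : LL μ, eLpNorm R.1 2 μ ≤ ε ∧
      ∀ n ≥ N, ∀ᵐ x ∂μ, (n : ℝ)⁻¹ * |((T ^ n) g).1 x| ≤ R.1 x := by
  let w : ℕ → Ω → ℝ≥0∞ := fun n x => (ENNReal.ofReal ((n : ℝ)⁻¹ * |((T ^ n) g).1 x|)) ^ (2 : ℝ)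
  have hwm : ∀ n, Measurable (w n) := fun n =>
    ((((meas ((T ^ n) g)).abs).const_mul _).ennreal_ofReal).pow_const _
  set I : ℝ≥0∞ := ∫⁻ x, ‖g.1 x‖ₑ ^ (2:ℝ) ∂μ with hI
  have hIt : I < ∞ := by
    have := (eLpNorm_lt_top_iff_lintegral_rpow_enorm_lt_top (p := 2) (by simp) (by simp)).1 hg
    rw [ENNReal.toReal_ofNat] at this
    exact this
  have hTI : ∀ n, ∫⁻ x, ‖((T ^ n) g).1 x‖ₑ ^ (2:ℝ) ∂μ ≤ I := by
    intro n
    have := hT.norm_two_pow n g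
    rw [L2sq, L2sq] at this
    exact (ENNReal.rpow_le_rpow_iff (by norm_num)).1 this
  have hwi : ∀ n, ∫⁻ x, w n x ∂μ ≤ ENNReal.ofReal (1 / (n : ℝ) ^ 2) * I := by
    intro n
    have e : ∀ x, w n x = ENNReal.ofReal (1 / (n : ℝ) ^ 2) * ‖((T ^ n) g).1 x‖ₑ ^ (2:ℝ) := by
      intro x
      simp only [w]
      rw [ENNReal.ofReal_mul (by positivity), ENNReal.mul_rpow_of_nonneg _ _ (by norm_num),
        Real.enorm_eq_ofReal_abs]
      congr 1
      rw [ENNReal.rpow_two, ← ENNReal.ofReal_pow (by positivity)]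
      congr 1; simp
    simp_rw [e]
    rw [lintegral_const_mul' _ _ (by simp)]
    gcongr
    exact hTI n
  have hsum : ∑' n, ∫⁻ x, w n x ∂μ ≠ ∞ := by
    refine ne_top_of_le_ne_top ?_ (ENNReal.tsum_le_tsum hwi)
    rw [ENNReal.tsum_mul_right]
    refine ENNReal.mul_ne_top ?_ hIt.ne
    rw [← ENNReal.ofReal_tsum_of_nonneg (fun n => by positivity)
      (Real.summable_one_div_nat_pow.2 (by norm_num))]
    simp
  have hten := ENNReal.tendsto_sum_nat_add _ hsum
  wlog hεt : ε ≠ ∞ generalizing ε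
  · obtain ⟨N, R, h1, h2⟩ := this (ε := 1) (by simp) (by simp)
    rw [not_not] at hεt
    exact ⟨N, R, by rw [hεt]; exact le_top, h2⟩
  have hε2 : (0 : ℝ≥0∞) < ε ^ (2:ℝ) := ENNReal.rpow_pos (pos_iff_ne_zero.2 hε) hεt
  obtain ⟨N, hN⟩ := (hten.eventually (ge_mem_nhds hε2)).exists
  let G : Ω → ℝ≥0∞ := fun x => (∑' k, w (k + N) x) ^ (1 / (2:ℝ))
  have hG : Measurable G := (Measurable.tsum fun k => hwm _).pow_const _
  have hG2 : ∀ x, G x ^ (2:ℝ) = ∑' k, w (k + N) x := by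
    intro x
    simp only [G]
    rw [← ENNReal.rpow_mul]; norm_num
  have hGi : ∫⁻ x, G x ^ (2:ℝ) ∂μ ≤ ε ^ (2:ℝ) := by
    simp_rw [hG2]
    rw [lintegral_tsum fun k => (hwm _).aemeasurable]
    exact hN
  obtain ⟨R, hR0, hR1, hR2⟩ := ex_of_lintegral (μ := μ) (p := 2) (by norm_num) (by simp) hG (by
    simpa using (hGi.trans_lt (ENNReal.rpow_lt_top_of_nonneg (by norm_num) hεt)).ne)
  refine ⟨N, R, ?_, ?_⟩
  · rw [hR2]
    simp only [ENNReal.toReal_ofNat]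
    refine (ENNReal.rpow_le_rpow hGi (by norm_num)).trans ?_
    rw [← ENNReal.rpow_mul]; norm_num
  · intro n hn
    filter_upwards [hR0, hR1] with x h1 h2
    rw [← ENNReal.ofReal_le_ofReal_iff h1, ← h2]
    rw [← ENNReal.rpow_le_rpow_iff (z := (2:ℝ)) (by norm_num), hG2]
    have := ENNReal.le_tsum (f := fun k => w (k + N) x) (n - N)
    rw [Nat.sub_add_cancel hn] at this
    exact this

lemma ex_abs {p : ℝ≥0∞} (hp : 1 ≤ p) (f : LL μ) (hf : eLpNorm f.1 p μ < ∞) :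
    ∃ a : LL μ, eLpNorm a.1 p μ = eLpNorm f.1 p μ ∧ ∀ᵐ x ∂μ, a.1 x = |f.1 x| := by
  have hm : MemLp (fun x => |f.1 x|) p μ := MemLp.abs ⟨aesm f, hf⟩
  obtain ⟨a, ha⟩ := exLp hp _ hm
  refine ⟨a, ?_, ha⟩
  rw [eLpNorm_congr_ae ha]
  exact eLpNorm_norm (f := f.1)

lemma norm_add_le {p : ℝ≥0∞} (hp : 1 ≤ p) (f g : LL μ) :
    eLpNorm (f + g).1 p μ ≤ eLpNorm f.1 p μ + eLpNorm g.1 p μ := by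
  rw [eLpNorm_congr_ae (coe_add f g)]
  exact eLpNorm_add_le (aesm f) (aesm g) hp

lemma avg_fix {T : Module.End ℝ (LL μ)} {h : LL μ} (hh : T h = h) {n : ℕ} (hn : 1 ≤ n) :
    Avg T n h = h := by
  have h1 : ∀ k, (T ^ k) h = h := by
    intro k
    induction k with
    | zero => rfl
    | succ k ih => rw [pow_succ, Module.End.mul_apply, hh, ih]
  have hn' : (n : ℝ) ≠ 0 := by positivity
  simp only [Avg, LinearMap.smul_apply, LinearMap.sum_apply, h1, Finset.sum_const,
    Finset.card_range]
  rw [← Nat.cast_smul_eq_nsmul ℝ, smul_smul, inv_mul_cancel₀ hn', one_smul]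

lemma avg_cob (T : Module.End ℝ (LL μ)) (g : LL μ) (n : ℕ) :
    Avg T n (g - T g) = (n : ℝ)⁻¹ • (g - (T ^ n) g) := by
  have h1 : Avg T n * (1 - T) = (n : ℝ)⁻¹ • (1 - T ^ n) := by
    rw [Avg, smul_mul_assoc]
    exact congrArg _ (geom_sum_mul_neg T n)
  exact LinearMap.congr_fun h1 g

lemma exists_small {C ε : ℝ≥0∞} (hC : C ≠ ∞) (hε : ε ≠ 0) : ∃ δ : ℝ≥0∞, δ ≠ 0 ∧ δ ≠ ∞ ∧ C * δ ≤ ε := by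
  obtain ⟨n, hn, h⟩ := ENNReal.exists_nnreal_pos_mul_lt hC hε
  exact ⟨n, by exact_mod_cast hn.ne', by simp, by rw [mul_comm]; exact h.le⟩

lemma conv_one [SigmaFinite μ] {T : Module.End ℝ (LL μ)} (hT : DS T) (f : LL μ)
    (hf : eLpNorm f.1 2 μ < ∞) : ∃ F : LL μ, eLpNorm F.1 2 μ < ∞ ∧ ∀ ε : ℝ≥0∞, ε ≠ 0 →
      ∃ N : ℕ, ∃ R : LL μ, eLpNorm R.1 2 μ ≤ ε ∧
        ∀ n ≥ N, ∀ᵐ x ∂μ, |(Avg T n f - F).1 x| ≤ R.1 x := by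
  obtain ⟨h, hh, hht, hd⟩ := decomp hT f hf
  refine ⟨h, hht, fun ε hε => ?_⟩
  obtain ⟨C, hC, hmax⟩ := max_one (μ := μ) (p := 2) (by norm_num) (by simp)
  have hε3 : ε / 3 ≠ 0 := by simp [hε]
  obtain ⟨δ, hδ, hδt, hCδ⟩ := exists_small hC hε3
  obtain ⟨g, r, hg, hr, rfl⟩ := hd δ hδ
  obtain ⟨N1, R1, hR1, hR1'⟩ := tail_bound hT g hg hε3
  obtain ⟨N2, R2, hR2, hR2'⟩ := tail_bound DS.one g hg hε3
  obtain ⟨a, ha, ha'⟩ := ex_abs (by norm_num) r (hr.trans_lt hδt.lt_top)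
  obtain ⟨G, hG, hG'⟩ := hmax T hT a (by
    filter_upwards [ha'] with x hx
    rw [hx]; positivity) (by rw [ha]; exact hr.trans_lt hδt.lt_top)
  refine ⟨max 1 (max N1 N2), R2 + R1 + G, ?_, ?_⟩
  · calc _ ≤ eLpNorm R2.1 2 μ + eLpNorm R1.1 2 μ + eLpNorm G.1 2 μ := by
          refine (norm_add_le (by norm_num) _ _).trans ?_
          gcongr
          exact norm_add_le (by norm_num) _ _
      _ ≤ ε / 3 + ε / 3 + ε / 3 := by
          gcongr
          refine hG.trans ?_
          rw [ha]
          exact le_trans (by gcongr) hCδ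
      _ = ε := ENNReal.add_thirds ε
  · intro n hn
    have hn1 : 1 ≤ n := (le_max_left _ _).trans hn
    have hn2 : N1 ≤ n := (le_max_left _ _).trans ((le_max_right _ _).trans hn)
    have hn3 : N2 ≤ n := (le_max_right _ _).trans ((le_max_right _ _).trans hn)
    have e : Avg T n (h + (g - T g) + r) - h = (n : ℝ)⁻¹ • (g - (T ^ n) g) + Avg T n r := by
      rw [map_add, map_add, avg_fix hh hn1, avg_cob]; abel
    rw [e]
    have hr' := (hT.posAvg n).abs_le (f := r) (g := a) (by
      filter_upwards [ha'] with x hx using hx.ge)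
    filter_upwards [hr', hG' n, hR1' n hn2, hR2' n hn3, coe_add (R2 + R1) G, coe_add R2 R1,
      coe_add ((n : ℝ)⁻¹ • (g - (T ^ n) g)) (Avg T n r), coe_smul (n : ℝ)⁻¹ (g - (T ^ n) g),
      coe_sub g ((T ^ n) g)] with x h1 h2 h3 h4 h5 h6 h7 h8 h9
    rw [h5, h6, h7, h8, h9]
    rw [one_pow, Module.End.one_apply] at h4
    refine (abs_add_le _ _).trans ?_
    rw [abs_mul, abs_of_nonneg (show 0 ≤ (n : ℝ)⁻¹ by positivity)]
    have h10 : (n : ℝ)⁻¹ * |g.1 x - ((T ^ n) g).1 x| ≤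
        (n : ℝ)⁻¹ * |g.1 x| + (n : ℝ)⁻¹ * |((T ^ n) g).1 x| := by
      rw [← mul_add]
      gcongr
      exact abs_sub _ _
    linarith

lemma conv_multi [SigmaFinite μ] {d : ℕ} (T : Fin d → Module.End ℝ (LL μ)) (hT : ∀ i, DS (T i))
    (f : LL μ) (hf : eLpNorm f.1 2 μ < ∞) : ∃ F : LL μ, eLpNorm F.1 2 μ < ∞ ∧
      ∀ ε : ℝ≥0∞, ε ≠ 0 → ∃ N : Fin d → ℕ, ∃ R : LL μ, eLpNorm R.1 2 μ ≤ ε ∧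
        ∀ n ≥ N, ∀ᵐ x ∂μ, |(MAvg T n f - F).1 x| ≤ R.1 x := by
  induction d with
  | zero =>
    refine ⟨f, hf, fun ε hε => ⟨0, 0, ?_, fun n _ => ?_⟩⟩
    · rw [eLpNorm_congr_ae (coe_zero (μ := μ))]; simp
    · have : MAvg T n f - f = 0 := sub_self f
      rw [this]
      filter_upwards [coe_zero (μ := μ)] with x hx
      rw [hx]; simp
  | succ d ih =>
    obtain ⟨F', hF', h'⟩ := ih (Fin.tail T) (fun i => hT _)
    obtain ⟨F, hF, h0⟩ := conv_one (hT 0) F' hF'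
    refine ⟨F, hF, fun ε hε => ?_⟩
    obtain ⟨C, hC, hmax⟩ := max_one (μ := μ) (p := 2) (by norm_num) (by simp)
    have hε2 : ε / 2 ≠ 0 := by simp [hε]
    obtain ⟨δ, hδ, hδt, hCδ⟩ := exists_small hC hε2
    obtain ⟨N', R', hR', hN'⟩ := h' δ hδ
    obtain ⟨N0, R0, hR0, hN0⟩ := h0 (ε / 2) hε2
    obtain ⟨G, hG, hG'⟩ := hmax (T 0) (hT 0) R' (by
      filter_upwards [hN' N' le_rfl] with x hx
      exact (abs_nonneg _).trans hx) (hR'.trans_lt hδt.lt_top)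
    refine ⟨Fin.cons N0 N', G + R0, ?_, ?_⟩
    · refine (norm_add_le (by norm_num) _ _).trans ?_
      rw [← ENNReal.add_halves ε]
      gcongr
      exact hG.trans (le_trans (by gcongr) hCδ)
    · intro n hn
      have hn0 : N0 ≤ n 0 := by simpa using hn 0
      have hn' : N' ≤ Fin.tail n := fun i => by
        have := hn i.succ
        rw [Fin.cons_succ] at this
        exact this
      have e : MAvg T n f - F = Avg (T 0) (n 0) (MAvg (Fin.tail T) (Fin.tail n) f - F')
          + (Avg (T 0) (n 0) F' - F) := by
        rw [map_sub]
        have : MAvg T n f = Avg (T 0) (n 0) (MAvg (Fin.tail T) (Fin.tail n) f) := rfl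
        rw [this]; abel
      rw [e]
      filter_upwards [hN0 (n 0) hn0, ((hT 0).posAvg (n 0)).abs_le (hN' _ hn'), hG' (n 0),
        coe_add G R0, coe_add (Avg (T 0) (n 0) (MAvg (Fin.tail T) (Fin.tail n) f - F'))
          (Avg (T 0) (n 0) F' - F)] with x h1 h2 h3 h4 h5
      rw [h4, h5]
      refine (abs_add_le _ _).trans ?_
      linarith

end MPE

namespace MPE
variable {μ : Measure Ω}

/-- product of powers -/
noncomputable def Pw : ∀ {d : ℕ}, (Fin d → Module.End ℝ (LL μ)) → (Fin d → ℕ) →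
    Module.End ℝ (LL μ)
  | 0, _, _ => 1
  | _ + 1, T, n => T 0 ^ n 0 * Pw (Fin.tail T) (Fin.tail n)

lemma iter_eq {T : (Ω →ₘ[μ] ℝ) → (Ω →ₘ[μ] ℝ)} {S : Module.End ℝ (LL μ)}
    (h : ∀ f : LL μ, (S f).1 = T f.1) (k : ℕ) (f : LL μ) : T^[k] f.1 = ((S ^ k) f).1 := by
  induction k generalizing f with
  | zero => rfl
  | succ k ih =>
    rw [Function.iterate_succ_apply, ← h, ih, pow_succ]; rfl

lemma iterComp_eq {d : ℕ} {T : Fin d → (Ω →ₘ[μ] ℝ) → (Ω →ₘ[μ] ℝ)}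
    {S : Fin d → Module.End ℝ (LL μ)} (h : ∀ i, ∀ f : LL μ, (S i f).1 = T i f.1)
    (k : Fin d → ℕ) (f : LL μ) : iterComp T k f.1 = (Pw S k f).1 := by
  induction d with
  | zero => simp [iterComp, Pw]
  | succ d ih =>
    have e : iterComp T k f.1 = (T 0)^[k 0] (iterComp (Fin.tail T) (Fin.tail k) f.1) := by
      simp only [iterComp, List.ofFn_succ, List.foldr_cons, Function.comp_apply]
      rfl
    rw [e, ih (T := Fin.tail T) (S := Fin.tail S) (fun i f => h i.succ f), iter_eq (h 0)]
    rfl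

lemma MAvg_eq {d : ℕ} (S : Fin d → Module.End ℝ (LL μ)) (n : Fin d → ℕ) :
    MAvg S n = (∏ i, (n i : ℝ))⁻¹ • ∑ k ∈ Fintype.piFinset (fun i => Finset.range (n i)), Pw S k := by
  induction d with
  | zero => simp [MAvg, Pw]
  | succ d ih =>
    have e : ∑ k ∈ Fintype.piFinset (fun i => Finset.range (n i)), Pw S k =
        ∑ q ∈ Finset.range (n 0) ×ˢ Fintype.piFinset (fun i => Finset.range (Fin.tail n i)),
          S 0 ^ q.1 * Pw (Fin.tail S) q.2 := by
      refine Finset.sum_nbij' (i := fun k => (k 0, Fin.tail k))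
        (j := fun q => Fin.cons q.1 q.2) ?_ ?_ ?_ ?_ ?_
      · intro k hk
        simp only [Fintype.mem_piFinset, Finset.mem_range] at hk
        simp only [Finset.mem_product, Fintype.mem_piFinset, Finset.mem_range]
        exact ⟨hk 0, fun i => hk i.succ⟩
      · intro q hq
        simp only [Finset.mem_product, Fintype.mem_piFinset, Finset.mem_range] at hq
        simp only [Fintype.mem_piFinset, Finset.mem_range]
        intro i
        refine Fin.cases ?_ (fun i => ?_) i
        · simpa using hq.1
        · have := hq.2 i
          rw [Fin.cons_succ]; exact this
      · intro k _; exact Fin.cons_self_tail k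
      · intro q _; simp
      · intro k _; rfl
    rw [e, Finset.sum_product, Fin.prod_univ_succ, mul_inv]
    have e2 : MAvg S n = Avg (S 0) (n 0) * MAvg (Fin.tail S) (Fin.tail n) := rfl
    rw [e2, ih, Avg, smul_mul_smul_comm, Finset.sum_mul_sum]
    rfl

lemma multiAvg_eq {d : ℕ} {T : Fin d → (Ω →ₘ[μ] ℝ) → (Ω →ₘ[μ] ℝ)}
    {S : Fin d → Module.End ℝ (LL μ)} (h : ∀ i, ∀ f : LL μ, (S i f).1 = T i f.1)
    (n : Fin d → ℕ) (f : LL μ) : multiAvg μ T n f.1 = (MAvg S n f).1 := by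
  rw [multiAvg, MAvg_eq]
  simp only [LinearMap.smul_apply, LinearMap.sum_apply, Submodule.coe_smul, Submodule.coe_sum,
    iterComp_eq h]

lemma au_of_cauchy {ι : Type*} [SemilatticeSup ι] [Nonempty ι] (F : ι → Ω →ₘ[μ] ℝ)
    (h : ∀ δ : ℝ, 0 < δ → ∃ N : ι, ∃ E : Set Ω, MeasurableSet E ∧ μ Eᶜ ≤ ENNReal.ofReal δ ∧
      ∀ n ≥ N, ∀ m ≥ N, ∀ᵐ x ∂μ, x ∈ E → |F n x - F m x| ≤ δ) :
    ∃ fhat : Ω →ₘ[μ] ℝ, AuTendsto μ atTop F fhat := by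
  have hδ : ∀ k : ℕ, (0:ℝ) < (1/2)^k := fun k => by positivity
  choose N E hE hμE hNE using fun k : ℕ => h ((1/2)^k) (hδ k)
  let M := partialSups N
  have hM : Monotone M := (partialSups N).monotone
  have hNM : ∀ k, N k ≤ M k := le_partialSups N
  have hsum : ∑' k : ℕ, ENNReal.ofReal ((1/2:ℝ)^k) ≠ ∞ := by
    rw [← ENNReal.ofReal_tsum_of_nonneg (fun n => by positivity) summable_geometric_two]
    simp
  have hae : ∀ᵐ x ∂μ, ∀ k l, k ≤ l → x ∈ E k → |F (M l) x - F (M k) x| ≤ (1/2)^k := by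
    refine ae_all_iff.2 fun k => ae_all_iff.2 fun l => ae_all_iff.2 fun hkl => ?_
    exact hNE k _ ((hNM k).trans (hM hkl)) _ (hNM k)
  have hbc : ∀ᵐ x ∂μ, ∀ᶠ k in atTop, x ∉ (E k)ᶜ :=
    ae_eventually_notMem (ne_top_of_le_ne_top hsum (ENNReal.tsum_le_tsum hμE))
  have h2 : Tendsto (fun k : ℕ => (1/2:ℝ)^k) atTop (𝓝 0) :=
    tendsto_pow_atTop_nhds_zero_of_lt_one (by norm_num) (by norm_num)
  have hlim : ∀ᵐ x ∂μ, ∃ l, Tendsto (fun k => F (M k) x) atTop (𝓝 l) := by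
    filter_upwards [hae, hbc] with x h1 hb
    refine cauchySeq_tendsto_of_complete (Metric.cauchySeq_iff'.2 fun ε hε => ?_)
    obtain ⟨k, hk1, hk2⟩ := (hb.and (h2.eventually (gt_mem_nhds hε))).exists
    refine ⟨k, fun l hl => ?_⟩
    rw [Real.dist_eq]
    exact (h1 k l hl (by simpa using hk1)).trans_lt hk2
  obtain ⟨g, hg, hgl⟩ := exists_stronglyMeasurable_limit_of_tendsto_ae
    (fun k => (F (M k)).aestronglyMeasurable) hlim
  refine ⟨AEEqFun.mk g hg.aestronglyMeasurable, fun ε hε => ?_⟩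
  obtain ⟨j, hj⟩ := ((ENNReal.tendsto_sum_nat_add _ hsum).eventually
    (ge_mem_nhds (ENNReal.ofReal_pos.2 hε))).exists
  refine ⟨⋂ k, E (k + j), MeasurableSet.iInter fun k => hE _, ?_, ?_⟩
  · rw [compl_iInter]
    exact (measure_iUnion_le _).trans ((ENNReal.tsum_le_tsum fun k => hμE _).trans hj)
  · rw [ENNReal.tendsto_nhds_zero]
    intro η hη
    have h3 : Tendsto (fun k : ℕ => ENNReal.ofReal ((1/2:ℝ)^k)) atTop (𝓝 0) := by
      simpa using ENNReal.tendsto_ofReal h2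
    obtain ⟨k, hk, hkj⟩ := ((h3.eventually (ge_mem_nhds hη)).and (eventually_ge_atTop j)).exists
    filter_upwards [eventually_ge_atTop (N k)] with n hn
    refine le_trans ?_ hk
    rw [eLpNorm_exponent_top]
    refine eLpNormEssSup_le_of_ae_bound ?_
    have h4 : ∀ᵐ x ∂μ, ∀ l, k ≤ l → x ∈ E k → |F n x - F (M l) x| ≤ (1/2)^k :=
      ae_all_iff.2 fun l => ae_all_iff.2 fun hkl => hNE k _ hn _ ((hNM k).trans (hM hkl))
    filter_upwards [h4, hgl, AEEqFun.coeFn_mk g hg.aestronglyMeasurable,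
      AEEqFun.coeFn_sub (F n) (AEEqFun.mk g hg.aestronglyMeasurable)] with x h4 h5 h6 h7
    by_cases hx : x ∈ ⋂ k, E (k + j)
    · rw [Set.indicator_of_mem hx, h7, Pi.sub_apply, h6, Real.norm_eq_abs]
      have hxk : x ∈ E k := by
        have := mem_iInter.1 hx (k - j)
        rwa [Nat.sub_add_cancel hkj] at this
      refine le_of_tendsto (tendsto_const_nhds.sub h5).abs ?_
      filter_upwards [eventually_ge_atTop k] with l hl using h4 l hl hxk
    · rw [Set.indicator_of_notMem hx]; simp

lemma cheb {p : ℝ≥0∞} (hp1 : 1 ≤ p) (hpt : p ≠ ⊤) {a b : ℝ} (ha : 0 < a) (hb : 0 < b) :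
    ∃ η : ℝ≥0∞, η ≠ 0 ∧ η ≠ ∞ ∧ ∀ R : LL μ, eLpNorm R.1 p μ ≤ η →
      μ {x | a ≤ R.1 x} ≤ ENNReal.ofReal b := by
  have hp0 : 0 < p.toReal := ENNReal.toReal_pos (by positivity) hpt
  have ha' : ENNReal.ofReal a ≠ 0 := by simpa using ha
  have hb' : ENNReal.ofReal b ≠ 0 := by simpa using hb
  refine ⟨ENNReal.ofReal a * ENNReal.ofReal b ^ (1 / p.toReal), ?_, ?_, fun R hR => ?_⟩
  · exact mul_ne_zero ha' (ENNReal.rpow_pos (pos_iff_ne_zero.2 hb') (by simp)).ne'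
  · exact ENNReal.mul_ne_top (by simp) (ENNReal.rpow_ne_top_of_nonneg (by positivity) (by simp))
  · have h1 := mul_meas_ge_le_pow_eLpNorm' μ (p := p) (by positivity) hpt (aesm R) (ENNReal.ofReal a)
    have h2 := h1.trans (ENNReal.rpow_le_rpow hR hp0.le)
    rw [ENNReal.mul_rpow_of_nonneg _ _ hp0.le, ← ENNReal.rpow_mul, one_div,
      inv_mul_cancel₀ hp0.ne', ENNReal.rpow_one,
      ENNReal.mul_le_mul_iff_right (ENNReal.rpow_pos (pos_iff_ne_zero.2 ha') (by simp)).ne'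
        (ENNReal.rpow_ne_top_of_nonneg hp0.le (by simp))] at h2
    refine le_trans (measure_mono fun x hx => ?_) h2
    have hx : a ≤ R.1 x := hx
    show ENNReal.ofReal a ≤ ‖R.1 x‖ₑ
    rw [Real.enorm_eq_ofReal_abs]
    exact ENNReal.ofReal_le_ofReal (hx.trans (le_abs_self _))

lemma main [SigmaFinite μ] {d : ℕ} (S : Fin d → Module.End ℝ (LL μ)) (hS : ∀ i, DS (S i))
    {p : ℝ≥0∞} (hp1 : 1 < p) (hpt : p ≠ ⊤) (f : LL μ) (hf : eLpNorm f.1 p μ < ∞) :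
    ∃ fhat : Ω →ₘ[μ] ℝ, AuTendsto μ atTop (fun n => (MAvg S n f).1) fhat := by
  refine au_of_cauchy _ fun δ hδ => ?_
  obtain ⟨η1, h10, h1t, h1⟩ := cheb (μ := μ) (p := 2) (by norm_num) (by simp)
    (show 0 < δ / 4 by positivity) (show 0 < δ / 2 by positivity)
  obtain ⟨η2, h20, h2t, h2⟩ := cheb (μ := μ) hp1.le hpt
    (show 0 < δ / 4 by positivity) (show 0 < δ / 2 by positivity)
  obtain ⟨C, hC, hmax⟩ := max_multi (μ := μ) hp1 hpt d
  obtain ⟨η, hη0, hηt, hη⟩ := exists_small hC h20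
  obtain ⟨s, hs, hsp⟩ := MemLp.exists_simpleFunc_eLpNorm_sub_lt ⟨aesm f, hf⟩ hpt hη0
  have hs2 : MemLp s 2 μ := by
    rw [SimpleFunc.memLp_iff (by simp) (by simp)]
    exact (SimpleFunc.memLp_iff (by positivity) hpt).1 hsp
  obtain ⟨f', hf'⟩ := exLp (by norm_num) _ hs2
  have hf2 : eLpNorm f'.1 2 μ < ∞ := by rw [eLpNorm_congr_ae hf']; exact hs2.2
  have hff : eLpNorm (f - f').1 p μ < η := by
    refine lt_of_eq_of_lt (eLpNorm_congr_ae ?_) hs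
    filter_upwards [coe_sub f f', hf'] with x h1 h2
    rw [h1, h2]; rfl
  obtain ⟨b, hb, hb'⟩ := ex_abs hp1.le (f - f') (hff.trans hηt.lt_top)
  obtain ⟨G, hG, hG'⟩ := hmax S hS b (by
    filter_upwards [hb'] with x hx
    rw [hx]; positivity) (by rw [hb]; exact hff.trans hηt.lt_top)
  obtain ⟨F, -, hF⟩ := conv_multi S hS f' hf2
  obtain ⟨N, R, hR, hR'⟩ := hF η1 h10
  refine ⟨N, {x | δ / 4 ≤ R.1 x}ᶜ ∩ {x | δ / 4 ≤ G.1 x}ᶜ, ?_, ?_, ?_⟩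
  · exact (measurableSet_le measurable_const (meas R)).compl.inter
      (measurableSet_le measurable_const (meas G)).compl
  · rw [compl_inter, compl_compl, compl_compl]
    refine (measure_union_le _ _).trans ?_
    rw [show δ = δ / 2 + δ / 2 by ring, ENNReal.ofReal_add (by positivity) (by positivity)]
    have e : (δ / 2 + δ / 2) / 4 = δ / 4 := by ring
    rw [e]
    refine add_le_add (h1 R hR) (h2 G (hG.trans ?_))
    rw [hb]
    exact le_trans (by gcongr) hη
  · have key : ∀ n ≥ N, ∀ᵐ x ∂μ, |(MAvg S n f).1 x - F.1 x| ≤ R.1 x + G.1 x := by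
      intro n hn
      have e : MAvg S n f = MAvg S n f' + MAvg S n (f - f') := by rw [map_sub]; abel
      rw [e]
      filter_upwards [hR' n hn, hG' n, (posMAvg S hS n).abs_le (f := f - f') (g := b) (by
        filter_upwards [hb'] with x hx using hx.ge), coe_add (MAvg S n f') (MAvg S n (f - f')),
        coe_sub (MAvg S n f') F] with x h1 h2 h3 h4 h5
      rw [h4]
      rw [h5] at h1
      have := abs_add_le ((MAvg S n f').1 x - F.1 x) ((MAvg S n (f - f')).1 x)
      rw [show (MAvg S n f').1 x + (MAvg S n (f - f')).1 x - F.1 x =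
        (MAvg S n f').1 x - F.1 x + (MAvg S n (f - f')).1 x by ring]
      linarith
    intro n hn m hm
    filter_upwards [key n hn, key m hm] with x h1 h2 hx
    have h3 : R.1 x < δ / 4 := not_le.1 hx.1
    have h4 : G.1 x < δ / 4 := not_le.1 hx.2
    rw [abs_le] at h1 h2 ⊢
    constructor <;> linarith

end MPE

/-- **Commutative case of Theorem 5.1**: for commuting positive Dunford–Schwartz operators
`T₁,…,T_d` on a σ-finite measure space and `1 < p ≤ 2`, the multiparameter averages
`A_n(f)` converge almost uniformly, unrestrictedly as `n = (n₁,…,n_d) → ∞`,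
for every `f ∈ L^p(μ)`. -/
theorem multiparam_au_Lp (μ : Measure Ω) [SigmaFinite μ] {d : ℕ}
    (T : Fin d → (Ω →ₘ[μ] ℝ) → (Ω →ₘ[μ] ℝ)) (hT : ∀ i, IsPosDS μ (T i))
    (hcomm : ∀ i j, ∀ f : Ω →ₘ[μ] ℝ, MemL1pLinf μ f → T i (T j f) = T j (T i f))
    (p : ℝ≥0∞) (hp1 : 1 < p) (hp2 : p ≤ 2)
    (f : Ω →ₘ[μ] ℝ) (hf : eLpNorm f p μ ≠ ∞) :
    ∃ fhat : Ω →ₘ[μ] ℝ,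
      AuTendsto μ (atTop : Filter (Fin d → ℕ)) (fun n => multiAvg μ T n f) fhat := by
  choose S hS hST using fun i => MPE.exists_DS (hT i)
  have hpt : p ≠ ⊤ := ne_top_of_le_ne_top (by simp) hp2
  obtain ⟨g, hg⟩ := MPE.exLp hp1.le f ⟨f.aestronglyMeasurable, lt_top_iff_ne_top.2 hf⟩
  obtain rfl : g.1 = f := AEEqFun.ext hg
  obtain ⟨fhat, h⟩ := MPE.main S hS hp1 hpt g (lt_top_iff_ne_top.2 hf)
  refine ⟨fhat, ?_⟩
  have e : (fun n => multiAvg μ T n g.1) = fun n => (MPE.MAvg S n g).1 := by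
    funext n
    exact MPE.multiAvg_eq hST n g
  rw [e]
  exact h
end
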